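/- arXiv:0805.0349 — 3 statements merged into one kernel-verified Lean document; each statement's English description precedes it below -/
import Mathlib

section
/- Let D ⊆ ℝ^ℓ be a bounded basic open semialgebraic set, i.e. D = {x ∈ ℝ^ℓ | G_1(x) > 0, …, G_q(x) > 0} for polynomials G_1, …, G_q with integer coefficients, and assume D is bounded. Then the Lebesgue volume vol(D) is an elementary real number. -/
/-- The class of elementary functions `ℕ^n → ℕ`: the smallest class containing the
zero function, successor, projections, addition, multiplication and truncated
subtraction, and closed under composition, bounded summation and bounded product. -/
inductive Elem : ∀ {n : ℕ}, ((Fin n → ℕ) → ℕ) → Prop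
  | zero {n : ℕ} : Elem (fun _ : Fin n → ℕ => 0)
  | succ : Elem (fun x : Fin 1 → ℕ => x 0 + 1)
  | proj {n : ℕ} (i : Fin n) : Elem (fun x : Fin n → ℕ => x i)
  | add : Elem (fun x : Fin 2 → ℕ => x 0 + x 1)
  | mul : Elem (fun x : Fin 2 → ℕ => x 0 * x 1)
  | tsub : Elem (fun x : Fin 2 → ℕ => x 0 - x 1)
  | comp {m n : ℕ} {f : (Fin m → ℕ) → ℕ} {g : Fin m → (Fin n → ℕ) → ℕ} :
      Elem f → (∀ i, Elem (g i)) → Elem (fun x => f (fun i => g i x))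
  | bsum {n : ℕ} {f : (Fin (n + 1) → ℕ) → ℕ} : Elem f →
      Elem (fun x : Fin (n + 1) → ℕ =>
        ∑ t ∈ Finset.range (x 0 + 1), f (Fin.cons t (fun i => x i.succ)))
  | bprod {n : ℕ} {f : (Fin (n + 1) → ℕ) → ℕ} : Elem f →
      Elem (fun x : Fin (n + 1) → ℕ =>
        ∏ t ∈ Finset.range (x 0 + 1), f (Fin.cons t (fun i => x i.succ)))

/-- A one-variable function `ℕ → ℕ` is elementary. -/
def Elem1 (f : ℕ → ℕ) : Prop :=
  Elem (fun x : Fin 1 → ℕ => f (x 0))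

/-- A (nonnegative) real number is elementary if it is approximated, with an
elementary modulus, by an elementary rational Cauchy sequence. -/
def ElemReal (α : ℝ) : Prop :=
  ∃ a b c : ℕ → ℕ, Elem1 a ∧ Elem1 b ∧ Elem1 c ∧
    ∀ k : ℕ, 1 ≤ k → ∀ x : ℕ, c k ≤ x →
      |(a x : ℝ) / ((b x : ℝ) + 1) - α| < 1 / (k : ℝ)

namespace ElemVol

open MeasureTheory Set

theorem Elem.comp1 {n : ℕ} {f : (Fin 1 → ℕ) → ℕ} (hf : Elem f) {g : (Fin n → ℕ) → ℕ}
    (hg : Elem g) : Elem (fun x => f (fun _ => g x)) :=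
  Elem.comp (g := fun _ => g) hf (fun _ => hg)

theorem elem_comp2 {n : ℕ} {f : (Fin 2 → ℕ) → ℕ} (hf : Elem f) {g h : (Fin n → ℕ) → ℕ}
    (hg : Elem g) (hh : Elem h) : Elem (fun x => f (fun i => (![g, h] i) x)) := by
  refine Elem.comp (g := ![g, h]) hf (fun i => ?_)
  fin_cases i
  · exact hg
  · exact hh

theorem elem_add {n : ℕ} {g h : (Fin n → ℕ) → ℕ} (hg : Elem g) (hh : Elem h) :
    Elem (fun x => g x + h x) := elem_comp2 Elem.add hg hh

theorem elem_mul {n : ℕ} {g h : (Fin n → ℕ) → ℕ} (hg : Elem g) (hh : Elem h) :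
    Elem (fun x => g x * h x) := elem_comp2 Elem.mul hg hh

theorem elem_tsub {n : ℕ} {g h : (Fin n → ℕ) → ℕ} (hg : Elem g) (hh : Elem h) :
    Elem (fun x => g x - h x) := elem_comp2 Elem.tsub hg hh

theorem elem_const {n : ℕ} (c : ℕ) : Elem (fun _ : Fin n → ℕ => c) := by
  induction c with
  | zero => exact Elem.zero
  | succ c ih => exact Elem.comp1 Elem.succ ih

theorem elem_pow {n : ℕ} {g : (Fin n → ℕ) → ℕ} (hg : Elem g) (d : ℕ) :
    Elem (fun x => g x ^ d) := by
  induction d with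
  | zero => simpa using elem_const 1
  | succ c ih => simpa [pow_succ] using elem_mul ih hg

theorem elem_prod {n : ℕ} {ι : Type*} (s : Finset ι) (g : ι → (Fin n → ℕ) → ℕ)
    (hg : ∀ i, Elem (g i)) : Elem (fun x => ∏ i ∈ s, g i x) := by
  classical
  induction s using Finset.induction_on with
  | empty => simpa using elem_const 1
  | insert a s ha ih => simpa [Finset.prod_insert ha] using elem_mul (hg a) ih

theorem elem_bsum {n : ℕ} {f : (Fin (n + 1) → ℕ) → ℕ} (hf : Elem f) {b : (Fin n → ℕ) → ℕ}
    (hb : Elem b) :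
    Elem (fun x => ∑ t ∈ Finset.range (b x + 1), f (Fin.cons t x)) := by
  have := Elem.comp (g := Fin.cons b (fun i => fun x : Fin n → ℕ => x i)) (Elem.bsum hf)
    (by
      intro i
      refine Fin.cases ?_ (fun i => ?_) i
      · exact hb
      · exact Elem.proj i)
  simpa using this

/-- Elementary function of a tuple and a parameter. -/
def EF {k : ℕ} (f : (Fin k → ℕ) → ℕ → ℕ) : Prop :=
  ∀ (M : ℕ) (g : Fin k → (Fin M → ℕ) → ℕ) (h : (Fin M → ℕ) → ℕ), (∀ i, Elem (g i)) → Elem h →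
    Elem (fun x => f (fun i => g i x) (h x))

theorem EF.add {k : ℕ} {f g : (Fin k → ℕ) → ℕ → ℕ} (hf : EF f) (hg : EF g) :
    EF (fun m N => f m N + g m N) :=
  fun M a b ha hb => elem_add (hf M a b ha hb) (hg M a b ha hb)

theorem EF.mul {k : ℕ} {f g : (Fin k → ℕ) → ℕ → ℕ} (hf : EF f) (hg : EF g) :
    EF (fun m N => f m N * g m N) :=
  fun M a b ha hb => elem_mul (hf M a b ha hb) (hg M a b ha hb)

theorem EF.tsub {k : ℕ} {f g : (Fin k → ℕ) → ℕ → ℕ} (hf : EF f) (hg : EF g) :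
    EF (fun m N => f m N - g m N) :=
  fun M a b ha hb => elem_tsub (hf M a b ha hb) (hg M a b ha hb)

theorem EF.const {k : ℕ} (c : ℕ) : EF (fun (_ : Fin k → ℕ) (_ : ℕ) => c) :=
  fun _ _ _ _ _ => elem_const c

theorem EF.coord {k : ℕ} (i : Fin k) : EF (fun (m : Fin k → ℕ) (_ : ℕ) => m i) :=
  fun _ _ _ ha _ => ha i

theorem EF.par {k : ℕ} : EF (fun (_ : Fin k → ℕ) (N : ℕ) => N) :=
  fun _ _ _ _ hb => hb

theorem EF.prod {k : ℕ} {ι : Type*} (s : Finset ι) (f : ι → (Fin k → ℕ) → ℕ → ℕ)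
    (hf : ∀ i, EF (f i)) : EF (fun m N => ∏ i ∈ s, f i m N) :=
  fun M a b ha hb => elem_prod s _ (fun i => hf i M a b ha hb)

/-- iterated bounded sum -/
theorem EF.multisum (c : ℕ) : ∀ {k : ℕ} (f : (Fin k → ℕ) → ℕ → ℕ), EF f →
    Elem1 (fun N => ∑ m : Fin k → Fin (c * N + 1), f (fun i => (m i : ℕ)) N)
  | 0, f, hf => by
    have := hf 1 (fun i => i.elim0) (fun x => x 0) (fun i => i.elim0) (Elem.proj 0)
    unfold Elem1
    convert this using 2 with x
    simp only [Finset.univ_unique, Finset.sum_singleton]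
    congr 1
    ext i
    exact i.elim0
  | k + 1, f, hf => by
    have h1 : EF (fun (m : Fin k → ℕ) N =>
        ∑ t ∈ Finset.range (c * N + 1), f (Fin.cons t m) N) := by
      intro M g h hg hh
      have h2 : ∀ {w : (Fin M → ℕ) → ℕ}, Elem w →
          Elem (fun y : Fin (M + 1) → ℕ => w (fun i => y i.succ)) := fun hw =>
        Elem.comp (g := fun i => fun y : Fin (M + 1) → ℕ => y i.succ) hw
          (fun i => Elem.proj i.succ)
      have h3 := hf (M + 1)
        (Fin.cons (fun y => y 0) (fun i => fun y => g i (fun i => y i.succ)))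
        (fun y => h (fun i => y i.succ))
        (by
          intro i
          refine Fin.cases ?_ (fun i => ?_) i
          · exact Elem.proj 0
          · exact h2 (hg i)) (h2 hh)
      have h4 := elem_bsum h3 (elem_mul (elem_const c) hh)
      convert h4 using 4 with x t ht
      · refine funext (fun i => ?_)
        refine Fin.cases ?_ (fun i => ?_) i <;> simp
      · simp
    have h5 := EF.multisum c _ h1
    unfold Elem1 at h5 ⊢
    convert h5 using 2 with x
    beta_reduce
    rw [← (Fin.consEquiv (fun _ : Fin (k + 1) => Fin (c * x 0 + 1))).sum_comp,
      Fintype.sum_prod_type, Finset.sum_comm]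
    refine Finset.sum_congr rfl (fun m _ => ?_)
    rw [← Fin.sum_univ_eq_sum_range (fun t => f (Fin.cons t (fun i => (m i : ℕ))) (x 0))]
    refine Finset.sum_congr rfl (fun t _ => ?_)
    congr 1
    refine funext (fun i => ?_)
    refine Fin.cases ?_ (fun i => ?_) i <;> simp [Fin.consEquiv]

/-- integer valued version -/
def ZE {k : ℕ} (f : (Fin k → ℕ) → ℕ → ℤ) : Prop :=
  ∃ p n : (Fin k → ℕ) → ℕ → ℕ, EF p ∧ EF n ∧ ∀ m N, f m N = (p m N : ℤ) - n m N

theorem ZE.ofEF {k : ℕ} {f : (Fin k → ℕ) → ℕ → ℕ} (hf : EF f) : ZE (fun m N => (f m N : ℤ)) :=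
  ⟨f, _, hf, EF.const 0, by simp⟩

theorem ZE.add {k : ℕ} {f g : (Fin k → ℕ) → ℕ → ℤ} (hf : ZE f) (hg : ZE g) :
    ZE (fun m N => f m N + g m N) := by
  obtain ⟨p, n, hp, hn, h⟩ := hf
  obtain ⟨p', n', hp', hn', h'⟩ := hg
  exact ⟨_, _, hp.add hp', hn.add hn', fun m N => by beta_reduce; rw [h, h']; push_cast; ring⟩

theorem ZE.neg {k : ℕ} {f : (Fin k → ℕ) → ℕ → ℤ} (hf : ZE f) :
    ZE (fun m N => - f m N) := by
  obtain ⟨p, n, hp, hn, h⟩ := hf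
  exact ⟨_, _, hn, hp, fun m N => by beta_reduce; rw [h]; ring⟩

theorem ZE.mul {k : ℕ} {f g : (Fin k → ℕ) → ℕ → ℤ} (hf : ZE f) (hg : ZE g) :
    ZE (fun m N => f m N * g m N) := by
  obtain ⟨p, n, hp, hn, h⟩ := hf
  obtain ⟨p', n', hp', hn', h'⟩ := hg
  exact ⟨_, _, (hp.mul hp').add (hn.mul hn'), (hp.mul hn').add (hn.mul hp'),
    fun m N => by beta_reduce; rw [h, h']; push_cast; ring⟩

theorem ZE.const {k : ℕ} (c : ℤ) : ZE (fun (_ : Fin k → ℕ) (_ : ℕ) => c) :=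
  ⟨_, _, EF.const c.toNat, EF.const (-c).toNat, fun _ _ => by
    simpa using (Int.toNat_sub_toNat_neg c).symm⟩

theorem ZE.parpow {k : ℕ} (d : ℕ) : ZE (fun (_ : Fin k → ℕ) (N : ℕ) => ((N : ℤ) ^ d)) := by
  induction d with
  | zero => simpa only [pow_zero] using ZE.const 1
  | succ d ih => simpa [pow_succ] using ih.mul (ZE.ofEF EF.par)

theorem poly_ZE {k : ℕ} (R : ℕ) (G : MvPolynomial (Fin k) ℤ) :
    ∃ (d : ℕ) (h : (Fin k → ℕ) → ℕ → ℤ), ZE h ∧ ∀ m N, 1 ≤ N →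
      (h m N : ℝ) = (N : ℝ) ^ d * MvPolynomial.aeval (fun i => (m i : ℝ) / N - R) G := by
  induction G using MvPolynomial.induction_on with
  | C c => exact ⟨0, _, ZE.const c, fun m N _ => by simp⟩
  | add p q hp hq =>
    obtain ⟨d, h, hh, e⟩ := hp
    obtain ⟨d', h', hh', e'⟩ := hq
    refine ⟨d + d', _, ((ZE.parpow d').mul hh).add ((ZE.parpow d).mul hh'), fun m N hN => ?_⟩
    push_cast
    rw [e m N hN, e' m N hN, map_add]
    ring
  | mul_X p i hp =>
    obtain ⟨d, h, hh, e⟩ := hp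
    refine ⟨d + 1, _, hh.mul ((ZE.ofEF (EF.coord i)).add
      (ZE.ofEF ((EF.const R).mul EF.par)).neg), fun m N hN => ?_⟩
    push_cast
    rw [e m N hN, map_mul, MvPolynomial.aeval_X]
    have : (N : ℝ) ≠ 0 := by positivity
    field_simp
    ring

open Classical in
theorem indicator_EF {k q : ℕ} (R : ℕ) (G : Fin q → MvPolynomial (Fin k) ℤ) :
    ∃ f : (Fin k → ℕ) → ℕ → ℕ, EF f ∧ ∀ m N, 1 ≤ N → f m N =
      if (∀ i, 0 < MvPolynomial.aeval (fun i => (m i : ℝ) / N - R) (G i)) then 1 else 0 := by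
  choose d h hh e using fun i => poly_ZE R (G i)
  choose p n hp hn hpn using hh
  refine ⟨_, EF.prod Finset.univ _ (fun i => (EF.const 1).tsub ((EF.const 1).tsub
    ((hp i).tsub (hn i)))), fun m N hN => ?_⟩
  have key : ∀ i, 0 < MvPolynomial.aeval (fun i => (m i : ℝ) / N - R) (G i) ↔
      n i m N < p i m N := by
    intro i
    have h1 := e i m N hN
    have h2 : (0 : ℝ) < (N : ℝ) ^ d i := by positivity
    rw [← mul_pos_iff_of_pos_left h2, ← h1, hpn]
    rw [Int.cast_pos, sub_pos, Nat.cast_lt]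
  simp only [key]
  split_ifs with hc
  · refine Finset.prod_eq_one (fun i _ => ?_)
    have := hc i
    omega
  · push Not at hc
    obtain ⟨i, hi⟩ := hc
    refine Finset.prod_eq_zero (Finset.mem_univ i) ?_
    omega

/-! ### Analysis -/

/-- rounding down to the grid -/
noncomputable def rd (N : ℕ) (t : ℝ) : ℝ := (⌊(N : ℝ) * t⌋ : ℝ) / N

theorem rd_le {N : ℕ} (hN : 1 ≤ N) (t : ℝ) : rd N t ≤ t := by
  have h : (0 : ℝ) < N := by positivity
  unfold rd
  rw [div_le_iff₀ h, mul_comm t]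
  exact Int.floor_le _

theorem le_rd {N : ℕ} (hN : 1 ≤ N) (t : ℝ) : t ≤ rd N t + 1 / N := by
  have h : (0 : ℝ) < N := by positivity
  unfold rd
  rw [← add_div, le_div_iff₀ h, mul_comm t]
  exact (Int.lt_floor_add_one _).le

theorem measurable_rd (N : ℕ) : Measurable (rd N) := by
  unfold rd
  fun_prop

theorem sign_change {q : ℕ} (p : Fin q → Polynomial ℝ) {a b : ℝ} (hab : a ≤ b)
    (h : ¬ ((∀ i, 0 < (p i).eval b) ↔ (∀ i, 0 < (p i).eval a))) :
    ∃ i, ∃ r ∈ (p i).roots.toFinset, a ≤ r ∧ r ≤ b := by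
  have main : ∀ i, ((p i).eval a ≤ 0 ∧ 0 < (p i).eval b) ∨
      ((p i).eval b ≤ 0 ∧ 0 < (p i).eval a) →
      ∃ i, ∃ r ∈ (p i).roots.toFinset, a ≤ r ∧ r ≤ b := by
    intro i hi
    have hne : p i ≠ 0 := by
      intro h0
      simp [h0] at hi
    have hc : ContinuousOn (fun t => (p i).eval t) (Icc a b) := (p i).continuous.continuousOn
    have : ∃ r ∈ Icc a b, (p i).eval r = 0 := by
      rcases hi with hi | hi
      · exact intermediate_value_Icc hab hc ⟨hi.1, hi.2.le⟩
      · exact intermediate_value_Icc' hab hc ⟨hi.1, hi.2.le⟩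
    obtain ⟨r, hr, h0⟩ := this
    exact ⟨i, r, by simp [hne, h0], hr.1, hr.2⟩
  by_cases hb : ∀ i, 0 < (p i).eval b
  · have : ¬ ∀ i, 0 < (p i).eval a := fun ha => h ⟨fun _ => ha, fun _ => hb⟩
    push Not at this
    obtain ⟨i, hi⟩ := this
    exact main i (Or.inl ⟨hi, hb i⟩)
  · have ha : ∀ i, 0 < (p i).eval a := by
      by_contra ha
      exact h ⟨fun hb' => (hb hb').elim, fun ha' => (ha ha').elim⟩
    push Not at hb
    obtain ⟨i, hi⟩ := hb
    exact main i (Or.inr ⟨hi, ha i⟩)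

theorem volume_sign_change {q : ℕ} (p : Fin q → Polynomial ℝ) (d : ℕ)
    (hd : ∀ i, (p i).natDegree ≤ d) {N : ℕ} (hN : 1 ≤ N) :
    volume {t : ℝ | ¬ ((∀ i, 0 < (p i).eval t) ↔ (∀ i, 0 < (p i).eval (rd N t)))} ≤
      ENNReal.ofReal (q * d / N) := by
  have hsub : {t : ℝ | ¬ ((∀ i, 0 < (p i).eval t) ↔ (∀ i, 0 < (p i).eval (rd N t)))} ⊆
      ⋃ i ∈ (Finset.univ : Finset (Fin q)), ⋃ r ∈ (p i).roots.toFinset, Icc r (r + 1 / N) := by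
    intro t ht
    obtain ⟨i, r, hr, h1, h2⟩ := sign_change p (rd_le hN t) ht
    simp only [mem_iUnion]
    refine ⟨i, Finset.mem_univ i, r, hr, h2, ?_⟩
    have := le_rd hN t
    linarith
  refine (measure_mono hsub).trans ((measure_biUnion_finset_le _ _).trans ?_)
  have h1 : ∀ i ∈ (Finset.univ : Finset (Fin q)),
      volume (⋃ r ∈ (p i).roots.toFinset, Icc r (r + 1 / (N : ℝ))) ≤
        ENNReal.ofReal (d / N) := by
    intro i _
    refine (measure_biUnion_finset_le _ _).trans ?_
    simp only [Real.volume_Icc, add_sub_cancel_left, Finset.sum_const]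
    rw [← ENNReal.ofReal_nsmul]
    apply ENNReal.ofReal_le_ofReal
    rw [nsmul_eq_mul, mul_one_div]
    gcongr
    exact ((Multiset.toFinset_card_le _).trans (Polynomial.card_roots' _)).trans (hd i)
  refine (Finset.sum_le_sum h1).trans ?_
  rw [Finset.sum_const, ← ENNReal.ofReal_nsmul]
  apply ENNReal.ofReal_le_ofReal
  simp [mul_div_assoc]

theorem degree_bound {k : ℕ} (G : MvPolynomial (Fin k) ℤ) :
    ∃ d : ℕ, ∀ f : Fin k → Polynomial ℝ, (∀ i, (f i).natDegree ≤ 1) →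
      (MvPolynomial.aeval f G).natDegree ≤ d := by
  induction G using MvPolynomial.induction_on with
  | C c => exact ⟨0, fun f _ => by simp⟩
  | add p q hp hq =>
    obtain ⟨d, h⟩ := hp
    obtain ⟨d', h'⟩ := hq
    refine ⟨max d d', fun f hf => ?_⟩
    rw [map_add]
    exact (Polynomial.natDegree_add_le _ _).trans (max_le_max (h f hf) (h' f hf))
  | mul_X p i hp =>
    obtain ⟨d, h⟩ := hp
    refine ⟨d + 1, fun f hf => ?_⟩
    rw [map_mul, MvPolynomial.aeval_X]
    exact Polynomial.natDegree_mul_le.trans (add_le_add (h f hf) (hf i))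

theorem eval_aeval {k : ℕ} (G : MvPolynomial (Fin k) ℤ) (f : Fin k → Polynomial ℝ) (t : ℝ) :
    (MvPolynomial.aeval f G).eval t = MvPolynomial.aeval (fun i => (f i).eval t) G := by
  induction G using MvPolynomial.induction_on with
  | C c => simp
  | add p q hp hq => simp [hp, hq]
  | mul_X p i hp => simp [hp]

/-- the set -/
def DS {k q : ℕ} (G : Fin q → MvPolynomial (Fin k) ℤ) : Set (Fin k → ℝ) :=
  {x | ∀ i, 0 < MvPolynomial.aeval x (G i)}

theorem continuous_aeval {k : ℕ} (G : MvPolynomial (Fin k) ℤ) :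
    Continuous (fun x : Fin k → ℝ => MvPolynomial.aeval x G) := by
  induction G using MvPolynomial.induction_on with
  | C c => simpa using continuous_const
  | add p q hp hq => simpa only [map_add] using Continuous.fun_add hp hq
  | mul_X p i hp => simpa only [map_mul, MvPolynomial.aeval_X] using Continuous.fun_mul hp (continuous_apply i)

theorem measurableSet_DS {k q : ℕ} (G : Fin q → MvPolynomial (Fin k) ℤ) :
    MeasurableSet (DS G) := by
  unfold DS
  rw [ofPred_forall]
  exact MeasurableSet.iInter fun i => measurableSet_lt measurable_const
    (continuous_aeval (G i)).measurable

/-- round the first `j` coordinates -/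
noncomputable def rdj {k : ℕ} (N j : ℕ) (x : Fin k → ℝ) : Fin k → ℝ :=
  fun i => if (i : ℕ) < j then rd N (x i) else x i

theorem measurable_rdj {k : ℕ} (N j : ℕ) : Measurable (rdj N j : (Fin k → ℝ) → _) := by
  refine measurable_pi_lambda _ (fun i => ?_)
  unfold rdj
  split_ifs
  · exact (measurable_rd N).comp (measurable_pi_apply i)
  · exact measurable_pi_apply i

theorem abs_le_of_rdj {k : ℕ} {N : ℕ} (hN : 1 ≤ N) (j : ℕ) (x : Fin k → ℝ) (i : Fin k) (R : ℝ)
    (h : |rdj N j x i| < R) : x i ∈ Icc (-(R + 1)) (R + 1) := by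
  have h1 := rd_le hN (x i)
  have h2 := le_rd hN (x i)
  have h3 : (1 : ℝ) / N ≤ 1 := by
    rw [div_le_one (by positivity)]
    exact_mod_cast hN
  rw [abs_lt] at h
  unfold rdj at h
  split_ifs at h
  · exact ⟨by linarith, by linarith⟩
  · exact ⟨by linarith, by linarith⟩

theorem bad_bound {n q : ℕ} (G : Fin q → MvPolynomial (Fin (n + 1)) ℤ) (R : ℕ)
    (hR : ∀ x ∈ DS G, ∀ i, |x i| < R) (d : ℕ)
    (hd : ∀ i, ∀ f : Fin (n + 1) → Polynomial ℝ, (∀ i, (f i).natDegree ≤ 1) →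
      (MvPolynomial.aeval f (G i)).natDegree ≤ d) {N : ℕ} (hN : 1 ≤ N) (j : Fin (n + 1)) :
    volume {x : Fin (n + 1) → ℝ | ¬ (rdj N j x ∈ DS G ↔ rdj N (j + 1) x ∈ DS G)} ≤
      ENNReal.ofReal (q * d / N) * ENNReal.ofReal ((2 * (R + 1)) ^ n) := by
  set B := {x : Fin (n + 1) → ℝ | ¬ (rdj N j x ∈ DS G ↔ rdj N (j + 1) x ∈ DS G)} with hB
  have hBm : MeasurableSet B := by
    have h1 : MeasurableSet (rdj N j ⁻¹' DS G) := measurable_rdj N _ (measurableSet_DS G)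
    have h2 : MeasurableSet (rdj N (j + 1) ⁻¹' DS G) := measurable_rdj N _ (measurableSet_DS G)
    have : B = ((rdj N j ⁻¹' DS G) ∩ (rdj N (j + 1) ⁻¹' DS G)ᶜ) ∪
        ((rdj N (j + 1) ⁻¹' DS G) ∩ (rdj N j ⁻¹' DS G)ᶜ) := by
      ext x
      simp only [hB, mem_ofPred_eq, mem_union, mem_inter_iff, mem_preimage, mem_compl_iff]
      tauto
    rw [this]
    exact (h1.inter h2.compl).union (h2.inter h1.compl)
  have hmp := (volume_preserving_piFinSuccAbove (fun _ : Fin (n + 1) => ℝ) j).symm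
  rw [← hmp.measure_preimage hBm.nullMeasurableSet]
  rw [Measure.volume_eq_prod, Measure.prod_apply_symm (hmp.measurable hBm)]
  have hbox : volume (Icc (fun _ : Fin n => -((R : ℝ) + 1)) (fun _ => (R : ℝ) + 1)) =
      ENNReal.ofReal ((2 * (R + 1)) ^ n) := by
    rw [Real.volume_Icc_pi, Finset.prod_const, ENNReal.ofReal_pow (by positivity)]
    rw [Finset.card_univ, Fintype.card_fin]
    congr 2
    ring
  rw [← hbox, ← setLIntegral_const]
  rw [← lintegral_indicator measurableSet_Icc]
  refine lintegral_mono (fun y => ?_)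
  by_cases hy : y ∈ Icc (fun _ : Fin n => -((R : ℝ) + 1)) (fun _ => (R : ℝ) + 1)
  · rw [indicator_of_mem hy]
    let y' : Fin n → ℝ := fun i => if ((j.succAbove i : Fin (n + 1)) : ℕ) < j then rd N (y i) else y i
    let F : Fin (n + 1) → Polynomial ℝ :=
      j.insertNth (α := fun _ => Polynomial ℝ) Polynomial.X (fun i => Polynomial.C (y' i))
    have hF : ∀ i, (F i).natDegree ≤ 1 := by
      intro i
      refine Fin.succAboveCases j ?_ (fun i => ?_) i
      · simp [F]
      · simp [F]
    refine le_trans (measure_mono ?_) (volume_sign_change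
      (fun i => MvPolynomial.aeval F (G i)) d (fun i => hd i F hF) hN)
    intro t ht
    simp only [eval_aeval, mem_ofPred_eq]
    have e1 : rdj N j (j.insertNth (α := fun _ => ℝ) t y) = fun i => (F i).eval t := by
      funext i
      refine Fin.succAboveCases j ?_ (fun i => ?_) i
      · simp [F, rdj]
      · simp [F, rdj, y']
    have e2 : rdj N (j + 1) (j.insertNth (α := fun _ => ℝ) t y) =
        fun i => (F i).eval (rd N t) := by
      funext i
      refine Fin.succAboveCases j ?_ (fun i => ?_) i
      · simp [F, rdj]
      · have h1 : ((j.succAbove i : Fin (n + 1)) : ℕ) ≠ j := fun h =>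
          Fin.succAbove_ne j i (Fin.ext h)
        have h2 : ((j.succAbove i : Fin (n + 1)) : ℕ) < j + 1 ↔
          ((j.succAbove i : Fin (n + 1)) : ℕ) < j := by omega
        simp [F, rdj, y', h2, -Order.lt_add_one_iff]
    have ht' : j.insertNth (α := fun _ => ℝ) t y ∈ B := ht
    rw [hB, mem_ofPred_eq, e1, e2] at ht'
    exact ht'
  · rw [indicator_of_notMem hy, nonpos_iff_eq_zero]
    convert measure_empty (μ := (volume : Measure ℝ))
    rw [eq_empty_iff_forall_notMem]
    intro t ht
    have ht' : j.insertNth (α := fun _ => ℝ) t y ∈ B := ht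
    apply hy
    have : ∃ j', rdj N j' (j.insertNth (α := fun _ => ℝ) t y) ∈ DS G := by
      by_contra hcon
      push Not at hcon
      exact ht' ⟨fun h => (hcon _ h).elim, fun h => (hcon _ h).elim⟩
    obtain ⟨j', hj'⟩ := this
    have h4 : ∀ i, y i ∈ Icc (-((R : ℝ) + 1)) (R + 1) := fun i => by
      have := abs_le_of_rdj hN j' _ (j.succAbove i) R (hR _ hj' (j.succAbove i))
      simpa using this
    exact ⟨fun i => (h4 i).1, fun i => (h4 i).2⟩

theorem hybrid {k q : ℕ} (G : Fin q → MvPolynomial (Fin k) ℤ) (R : ℕ)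
    (hR : ∀ x ∈ DS G, ∀ i, |x i| < R) :
    ∃ C : ℕ, ∀ N : ℕ, 1 ≤ N →
      |volume.real (rdj N k ⁻¹' DS G) - volume.real (DS G)| ≤ C / N := by
  choose d hd using fun i => degree_bound (G i)
  have hd' : ∀ i, ∀ f : Fin k → Polynomial ℝ, (∀ i, (f i).natDegree ≤ 1) →
      (MvPolynomial.aeval f (G i)).natDegree ≤ ∑ i, d i := fun i f hf =>
    (hd i f hf).trans (Finset.single_le_sum (f := d) (fun _ _ => Nat.zero_le _)
      (Finset.mem_univ i))
  set dd := ∑ i, d i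
  let K : ℕ := q * dd * (2 * (R + 1)) ^ (k - 1)
  have step : ∀ N : ℕ, 1 ≤ N → ∀ j : Fin k,
      volume.real {x : Fin k → ℝ | ¬ (rdj N j x ∈ DS G ↔ rdj N (j + 1) x ∈ DS G)} ≤ K / N := by
    intro N hN j
    rcases k with _ | n
    · exact j.elim0
    · refine ENNReal.toReal_le_of_le_ofReal (by positivity) ?_
      refine (bad_bound G R hR dd hd' hN j).trans ?_
      rw [← ENNReal.ofReal_mul (by positivity)]
      apply le_of_eq
      congr 1
      simp only [K]
      push_cast
      ring
  have hfin : ∀ N : ℕ, 1 ≤ N → ∀ j, volume (rdj N j ⁻¹' DS G) ≠ ⊤ := by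
    intro N hN j
    refine ne_top_of_le_ne_top ?_ (measure_mono (t := Icc (fun _ : Fin k => -((R : ℝ) + 1))
      (fun _ => (R : ℝ) + 1)) ?_)
    · exact isCompact_Icc.measure_lt_top.ne
    · intro x hx
      have h4 : ∀ i, x i ∈ Icc (-((R : ℝ) + 1)) (R + 1) := fun i =>
        abs_le_of_rdj hN j _ i R (hR _ hx i)
      exact ⟨fun i => (h4 i).1, fun i => (h4 i).2⟩
  refine ⟨k * K, fun N hN => ?_⟩
  have hz : volume.real (DS G) = volume.real (rdj N 0 ⁻¹' DS G) := by
    congr 1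
  rw [hz]
  have ind : ∀ j ≤ k, |volume.real (rdj N j ⁻¹' DS G) - volume.real (rdj N 0 ⁻¹' DS G)| ≤
      j * (K / N) := by
    intro j
    induction j with
    | zero => intro _; simp
    | succ j ih =>
      intro hj
      have h1 := ih (by omega)
      have h2 := step N hN ⟨j, hj⟩
      simp only at h2
      set Bd := {x : Fin k → ℝ | ¬ (rdj N j x ∈ DS G ↔ rdj N (j + 1) x ∈ DS G)} with hBd
      have hBf : volume Bd ≠ ⊤ := by
        refine ne_top_of_le_ne_top ?_ (measure_mono
          (t := (rdj N j ⁻¹' DS G) ∪ (rdj N (j + 1) ⁻¹' DS G)) ?_)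
        · exact measure_union_ne_top (hfin N hN _) (hfin N hN _)
        · intro x hx
          simp only [hBd, mem_ofPred_eq, mem_union, mem_preimage] at hx ⊢
          tauto
      have h3 : volume.real (rdj N j ⁻¹' DS G) ≤
          volume.real (rdj N (j + 1) ⁻¹' DS G) + volume.real Bd := by
        refine le_trans (measureReal_mono ?_ (measure_union_ne_top (hfin N hN _) hBf))
          (measureReal_union_le _ _)
        intro x hx
        simp only [hBd, mem_ofPred_eq, mem_union, mem_preimage] at hx ⊢
        tauto
      have h4 : volume.real (rdj N (j + 1) ⁻¹' DS G) ≤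
          volume.real (rdj N j ⁻¹' DS G) + volume.real Bd := by
        refine le_trans (measureReal_mono ?_ (measure_union_ne_top (hfin N hN _) hBf))
          (measureReal_union_le _ _)
        intro x hx
        simp only [hBd, mem_ofPred_eq, mem_union, mem_preimage] at hx ⊢
        tauto
      rw [abs_le] at h1 ⊢
      push_cast
      constructor <;> linarith [h1.1, h1.2]
  have := ind k le_rfl
  push_cast
  rwa [mul_div_assoc]

open Classical in
theorem grid_count {k q : ℕ} (G : Fin q → MvPolynomial (Fin k) ℤ) (R : ℕ)
    (hR : ∀ x ∈ DS G, ∀ i, |x i| < R) {N : ℕ} (hN : 1 ≤ N) :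
    volume.real (rdj N k ⁻¹' DS G) =
      ((∑ m : Fin k → Fin (2 * R * N + 1),
        if (∀ i, 0 < MvPolynomial.aeval (fun i => ((m i : ℕ) : ℝ) / N - R) (G i))
          then 1 else 0 : ℕ) : ℝ) / (N : ℝ) ^ k := by
  have hN0 : (0 : ℝ) < N := by positivity
  let cube : (Fin k → Fin (2 * R * N + 1)) → Set (Fin k → ℝ) := fun m =>
    Set.pi univ (fun i => Ico (((m i : ℕ) : ℝ) / N - R) (((m i : ℕ) : ℝ) / N - R + 1 / N))
  have hcube : ∀ m x, x ∈ cube m ↔ ∀ i, ⌊(N : ℝ) * x i⌋ = ((m i : ℕ) : ℤ) - R * N := by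
    intro m x
    simp only [cube, mem_pi, mem_univ, true_imp_iff, mem_Ico]
    refine forall_congr' (fun i => ?_)
    rw [Int.floor_eq_iff]
    push_cast
    have e1 : ((m i : ℕ) : ℝ) / N - R = (((m i : ℕ) : ℝ) - R * N) / N := by field_simp
    rw [e1, ← add_div, div_le_iff₀ hN0, lt_div_iff₀ hN0, mul_comm (x i)]
  have hrd : ∀ m, ∀ x ∈ cube m, rdj N k x = fun i => ((m i : ℕ) : ℝ) / N - R := by
    intro m x hx
    rw [hcube] at hx
    funext i
    simp only [rdj, i.2, if_true, rd, hx i]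
    push_cast
    field_simp
  let S : Finset (Fin k → Fin (2 * R * N + 1)) := Finset.univ.filter
    (fun m => ∀ i, 0 < MvPolynomial.aeval (fun i => ((m i : ℕ) : ℝ) / N - R) (G i))
  have hU : rdj N k ⁻¹' DS G = ⋃ m ∈ S, cube m := by
    ext x
    simp only [mem_preimage, mem_iUnion]
    constructor
    · intro hx
      have h1 : ∀ i, 0 ≤ ⌊(N : ℝ) * x i⌋ + R * N ∧ ⌊(N : ℝ) * x i⌋ + R * N < 2 * R * N + 1 := by
        intro i
        have h2 := hR _ hx i
        simp only [rdj, i.2, if_true, rd] at h2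
        rw [abs_lt, lt_div_iff₀ hN0, div_lt_iff₀ hN0] at h2
        obtain ⟨h3, h4⟩ := h2
        have h3' : -(R : ℤ) * N < ⌊(N : ℝ) * x i⌋ := by exact_mod_cast h3
        have h4' : ⌊(N : ℝ) * x i⌋ < (R : ℤ) * N := by exact_mod_cast h4
        constructor <;> nlinarith
      let m : Fin k → Fin (2 * R * N + 1) := fun i =>
        ⟨(⌊(N : ℝ) * x i⌋ + R * N).toNat, by
          have := h1 i
          zify
          rw [Int.toNat_of_nonneg this.1]
          exact this.2⟩
      have hm : x ∈ cube m := by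
        rw [hcube]
        intro i
        simp only [m]
        rw [Int.toNat_of_nonneg (h1 i).1]
        ring
      refine ⟨m, ?_, hm⟩
      simp only [S, Finset.mem_filter, Finset.mem_univ, true_and]
      rw [hrd m x hm] at hx
      exact hx
    · rintro ⟨m, hm, hx⟩
      rw [hrd m x hx]
      simp only [S, Finset.mem_filter, Finset.mem_univ, true_and] at hm
      exact hm
  have hvol : ∀ m, volume (cube m) = ENNReal.ofReal ((1 / N) ^ k) := by
    intro m
    simp only [cube]
    rw [Real.volume_pi_Ico]
    simp only [add_sub_cancel_left, Finset.prod_const, Finset.card_univ, Fintype.card_fin]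
    rw [ENNReal.ofReal_pow (by positivity)]
  have hdisj : Set.PairwiseDisjoint (S : Set _) cube := by
    intro m _ m' _ hne
    rw [Function.onFun, Set.disjoint_left]
    intro x hx hx'
    rw [hcube] at hx hx'
    apply hne
    funext i
    have := (hx i).symm.trans (hx' i)
    apply Fin.ext
    omega
  rw [hU, measureReal_def, measure_biUnion_finset hdisj
    (fun m _ => MeasurableSet.univ_pi (fun i => measurableSet_Ico))]
  simp only [hvol, Finset.sum_const, nsmul_eq_mul, Finset.sum_boole]
  rw [ENNReal.toReal_mul, ENNReal.toReal_ofReal (by positivity)]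
  simp [S, div_eq_mul_inv]

end ElemVol

/-- The volume of a bounded basic open semialgebraic set
`D = {x ∈ ℝ^ℓ | G₁(x) > 0, …, G_q(x) > 0}` (with `Gᵢ` integer-coefficient
polynomials) is an elementary real number. -/
theorem volume_basicOpenSemialgebraic_elemReal
    (ℓ q : ℕ) (G : Fin q → MvPolynomial (Fin ℓ) ℤ)
    (D : Set (Fin ℓ → ℝ))
    (hD : D = {x : Fin ℓ → ℝ | ∀ i, 0 < MvPolynomial.aeval x (G i)})
    (hbdd : Bornology.IsBounded D) :
    ElemReal (MeasureTheory.volume D).toReal := by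
  classical
  obtain ⟨r, hr⟩ := hbdd.subset_ball 0
  obtain ⟨R, hRr⟩ := exists_nat_gt r
  have hDS : D = ElemVol.DS G := hD
  have hR : ∀ x ∈ ElemVol.DS G, ∀ i, |x i| < R := by
    intro x hx i
    rw [← hDS] at hx
    have h1 := hr hx
    rw [mem_ball_zero_iff] at h1
    exact lt_of_le_of_lt (norm_le_pi_norm x i) (h1.trans hRr)
  obtain ⟨C, hC⟩ := ElemVol.hybrid G R hR
  obtain ⟨f, hf, hfe⟩ := ElemVol.indicator_EF R G
  refine ⟨_, fun N => N ^ ℓ - 1, fun n => C * n + 1, ElemVol.EF.multisum (2 * R) f hf, ?_, ?_, ?_⟩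
  · exact ElemVol.elem_tsub (ElemVol.elem_pow (Elem.proj 0) ℓ) (ElemVol.elem_const 1)
  · exact ElemVol.elem_add (ElemVol.elem_mul (ElemVol.elem_const C) (Elem.proj 0))
      (ElemVol.elem_const 1)
  · intro n hn N hN
    have hN1 : 1 ≤ N := by
      have : 1 ≤ C * n + 1 := Nat.le_add_left _ _
      exact this.trans hN
    have h1 := hC N hN1
    rw [ElemVol.grid_count G R hR hN1] at h1
    have hb : (((N ^ ℓ - 1 : ℕ) : ℝ) + 1) = (N : ℝ) ^ ℓ := by
      rw [Nat.cast_sub (Nat.one_le_pow _ _ hN1)]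
      push_cast
      ring
    have hlt : (C : ℝ) / N < 1 / n := by
      have h2 : (0 : ℝ) < N := by positivity
      have h3 : (0 : ℝ) < n := by positivity
      rw [div_lt_div_iff₀ h2 h3, one_mul]
      exact_mod_cast hN
    rw [hDS]
    simp only [hfe _ N hN1, hb]
    exact lt_of_le_of_lt h1 hlt
end

section
/- Let D = {x ∈ ℝ^ℓ | G_1(x) > 0, …, G_q(x) > 0} where G_1, …, G_q are polynomials with rational coefficients, let P, Q be polynomials in ℓ variables with rational coefficients such that Q(x) ≠ 0 for all x ∈ D, and suppose the integral ∫_D P(x)/Q(x) dx is absolutely convergent with nonnegative value α. Then α is an elementary real number. -/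
section
open Polynomial
set_option linter.unusedVariables false

namespace PE

/-- Environments: infinitely many real variables. -/
abbrev Env := ℕ → ℝ

/-- Push a new variable in front. -/
def cons (t : ℝ) (x : Env) : Env := fun n => Nat.casesOn n t x

/-- Drop the first variable. -/
def tl (x : Env) : Env := fun n => x (n + 1)

@[simp] theorem cons_zero (t : ℝ) (x : Env) : cons t x 0 = t := rfl
@[simp] theorem cons_succ (t : ℝ) (x : Env) (n : ℕ) : cons t x (n + 1) = x n := rfl
@[simp] theorem tl_cons (t : ℝ) (x : Env) : tl (cons t x) = x := rfl
theorem tl_apply (x : Env) (n : ℕ) : tl x n = x (n + 1) := rfl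
theorem cons_tl (x : Env) : cons (x 0) (tl x) = x := by
  funext n; cases n <;> rfl

open Classical in
/-- Piecewise rational functions with rational coefficients. -/
inductive SA : (Env → ℝ) → Prop
  | const (q : ℚ) : SA (fun _ => (q : ℝ))
  | coord (i : ℕ) : SA (fun x => x i)
  | add {a b : Env → ℝ} : SA a → SA b → SA (fun x => a x + b x)
  | mul {a b : Env → ℝ} : SA a → SA b → SA (fun x => a x * b x)
  | inv {a : Env → ℝ} : SA a → SA (fun x => (a x)⁻¹)
  | ite {a b c : Env → ℝ} : SA a → SA b → SA c → SA (fun x => if 0 < a x then b x else c x)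

/-- Semialgebraic predicates. -/
def Def (p : Env → Prop) : Prop := ∃ a, SA a ∧ ∀ x, p x ↔ 0 < a x

namespace SA

theorem zero : SA (fun _ => 0) := by simpa using SA.const 0
theorem one : SA (fun _ => 1) := by simpa using SA.const 1
theorem nat (n : ℕ) : SA (fun _ => (n : ℝ)) := by simpa using SA.const n
theorem neg {a : Env → ℝ} (h : SA a) : SA (fun x => - a x) := by
  simpa using (SA.const (-1)).mul h
theorem sub {a b : Env → ℝ} (h : SA a) (h' : SA b) : SA (fun x => a x - b x) := by
  simpa [sub_eq_add_neg] using h.add h'.neg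
theorem div {a b : Env → ℝ} (h : SA a) (h' : SA b) : SA (fun x => a x / b x) := by
  simpa [div_eq_mul_inv] using h.mul h'.inv
theorem pow {a : Env → ℝ} (h : SA a) (n : ℕ) : SA (fun x => a x ^ n) := by
  induction n with
  | zero => simpa using one
  | succ n ih => simpa [pow_succ] using ih.mul h
theorem sum {ι : Type*} (s : Finset ι) {a : ι → Env → ℝ} (h : ∀ i ∈ s, SA (a i)) :
    SA (fun x => ∑ i ∈ s, a i x) := by
  classical
  induction s using Finset.induction_on with
  | empty => simpa using zero
  | insert i s hi ih =>
    simp only [Finset.sum_insert hi]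
    exact (h i (by simp)).add (ih (fun j hj => h j (by simp [hj])))

theorem subst {a : Env → ℝ} (h : SA a) {g : ℕ → Env → ℝ} (hg : ∀ i, SA (g i)) :
    SA (fun x => a (fun i => g i x)) := by
  induction h with
  | const q => exact SA.const q
  | coord i => exact hg i
  | add _ _ h1 h2 => exact h1.add h2
  | mul _ _ h1 h2 => exact h1.mul h2
  | inv _ h1 => exact h1.inv
  | ite _ _ _ h1 h2 h3 => exact h1.ite h2 h3

theorem tl {a : Env → ℝ} (h : SA a) : SA (fun x => a (tl x)) :=
  h.subst (g := fun i x => x (i + 1)) (fun i => SA.coord (i + 1))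

theorem measurable {a : Env → ℝ} (h : SA a) : Measurable a := by
  induction h with
  | const q => exact measurable_const
  | coord i => exact measurable_pi_apply i
  | add _ _ h1 h2 => exact h1.add h2
  | mul _ _ h1 h2 => exact h1.mul h2
  | inv _ h1 => exact h1.inv
  | ite _ _ _ h1 h2 h3 => exact Measurable.ite (measurableSet_lt measurable_const h1) h2 h3

end SA

namespace Def

theorem congr {p q : Env → Prop} (h : Def p) (e : ∀ x, q x ↔ p x) : Def q := by
  obtain ⟨a, ha, h⟩ := h
  exact ⟨a, ha, fun x => (e x).trans (h x)⟩

theorem lt {a b : Env → ℝ} (ha : SA a) (hb : SA b) : Def (fun x => a x < b x) :=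
  ⟨_, hb.sub ha, fun x => by simp⟩
theorem const (P : Prop) : Def (fun _ => P) := by
  by_cases h : P
  · exact ⟨_, SA.one, fun x => by simp [h]⟩
  · exact ⟨_, SA.zero, fun x => by simp [h]⟩
theorem not {p : Env → Prop} (h : Def p) : Def (fun x => ¬ p x) := by
  obtain ⟨a, ha, h⟩ := h
  refine ⟨_, ha.ite SA.zero SA.one, fun x => ?_⟩
  by_cases h' : 0 < a x <;> simp [h, h']
theorem and {p q : Env → Prop} (h : Def p) (h' : Def q) : Def (fun x => p x ∧ q x) := by
  obtain ⟨a, ha, h⟩ := h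
  obtain ⟨b, hb, h'⟩ := h'
  refine ⟨_, ha.ite hb SA.zero, fun x => ?_⟩
  by_cases h'' : 0 < a x <;> simp [h, h', h'']
theorem or {p q : Env → Prop} (h : Def p) (h' : Def q) : Def (fun x => p x ∨ q x) :=
  (h.not.and h'.not).not.congr (fun x => by tauto)
theorem imp {p q : Env → Prop} (h : Def p) (h' : Def q) : Def (fun x => p x → q x) :=
  (h.not.or h').congr (fun x => by tauto)
theorem le {a b : Env → ℝ} (ha : SA a) (hb : SA b) : Def (fun x => a x ≤ b x) :=
  (lt hb ha).not.congr (fun x => by simp)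
theorem eq {a b : Env → ℝ} (ha : SA a) (hb : SA b) : Def (fun x => a x = b x) :=
  ((le ha hb).and (le hb ha)).congr (fun x => le_antisymm_iff)

theorem ex_finset {ι : Type*} (s : Finset ι) {p : ι → Env → Prop} (h : ∀ i ∈ s, Def (p i)) :
    Def (fun x => ∃ i ∈ s, p i x) := by
  classical
  induction s using Finset.induction_on with
  | empty => exact (const False).congr (by simp)
  | insert i s hi ih =>
    exact ((h i (by simp)).or (ih (fun j hj => h j (by simp [hj])))).congr (by simp)
theorem all_finset {ι : Type*} (s : Finset ι) {p : ι → Env → Prop} (h : ∀ i ∈ s, Def (p i)) :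
    Def (fun x => ∀ i ∈ s, p i x) :=
  (ex_finset s (fun i hi => (h i hi).not)).not.congr (by simp)
theorem all_fin {ι : Type*} [Fintype ι] {p : ι → Env → Prop} (h : ∀ i, Def (p i)) :
    Def (fun x => ∀ i, p i x) :=
  (all_finset Finset.univ (fun i _ => h i)).congr (by simp)
theorem subst {p : Env → Prop} (h : Def p) {g : ℕ → Env → ℝ} (hg : ∀ i, SA (g i)) :
    Def (fun x => p (fun i => g i x)) := by
  obtain ⟨a, ha, h⟩ := h
  exact ⟨_, ha.subst hg, fun x => h _⟩
theorem tl {p : Env → Prop} (h : Def p) : Def (fun x => p (tl x)) :=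
  h.subst (g := fun i x => x (i + 1)) (fun i => SA.coord (i + 1))

theorem measurableSet {p : Env → Prop} (h : Def p) : MeasurableSet {x | p x} := by
  obtain ⟨a, ha, h⟩ := h
  simp only [h]
  exact measurableSet_lt measurable_const ha.measurable

end Def

theorem SA.ite_def {p : Env → Prop} [DecidablePred p] (h : Def p) {b c : Env → ℝ}
    (hb : SA b) (hc : SA c) : SA (fun x => if p x then b x else c x) := by
  obtain ⟨a, ha, h⟩ := h
  convert ha.ite hb hc using 3
  exact h _

/-- Functions with finitely many values and semialgebraic fibres. -/
def Meas {α : Type*} (φ : Env → α) : Prop :=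
  (Set.range φ).Finite ∧ ∀ v, Def (fun x => φ x = v)

namespace Meas

theorem def_of {α : Type*} {φ : Env → α} (h : Meas φ) (P : α → Prop) : Def (fun x => P (φ x)) := by
  classical
  obtain ⟨hf, h⟩ := h
  refine (Def.ex_finset (hf.toFinset.filter P) (fun v _ => h v)).congr (fun x => ?_)
  simp
  
theorem comp {α β : Type*} {φ : Env → α} (h : Meas φ) (g : α → β) : Meas (fun x => g (φ x)) := by
  refine ⟨?_, fun v => h.def_of (fun w => g w = v)⟩
  have : (Set.range fun x => g (φ x)) = g '' Set.range φ := Set.range_comp g φ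
  rw [this]
  exact h.1.image g

theorem const {α : Type*} (a : α) : Meas (fun _ => a) :=
  ⟨Set.finite_range_const, fun v => Def.const _⟩

theorem pair {α β : Type*} {φ : Env → α} {ψ : Env → β} (h : Meas φ) (h' : Meas ψ) :
    Meas (fun x => (φ x, ψ x)) := by
  refine ⟨(h.1.prod h'.1).subset ?_, fun v => ((h.2 v.1).and (h'.2 v.2)).congr ?_⟩
  · rintro _ ⟨x, rfl⟩; simp
  · intro x; exact Prod.ext_iff

theorem pi {ι α : Type*} [Fintype ι] {φ : Env → ι → α} (h : ∀ i, Meas (fun x => φ x i)) :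
    Meas φ := by
  refine ⟨(Set.Finite.pi' (fun i => (h i).1)).subset ?_, fun v =>
    (Def.all_fin (fun i => (h i).2 (v i))).congr ?_⟩
  · rintro _ ⟨x, rfl⟩ i; simp
  · intro x; exact funext_iff

theorem sign {a : Env → ℝ} (h : SA a) : Meas (fun x => SignType.sign (a x)) := by
  refine ⟨Set.toFinite _, fun v => ?_⟩
  cases v
  · exact (Def.eq h SA.zero).congr (fun x => sign_eq_zero_iff)
  · exact (Def.lt h SA.zero).congr (fun x => sign_eq_neg_one_iff)
  · exact (Def.lt SA.zero h).congr (fun x => sign_eq_one_iff)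

theorem prop {p : Env → Prop} (h : Def p) : Meas p := by
  refine ⟨Set.toFinite _, fun v => ?_⟩
  by_cases hv : v
  · exact h.congr (by simp [hv])
  · exact h.not.congr (by simp [hv])

end Meas

open Classical in
theorem SA.piece {α : Type*} {φ : Env → α} (h : Meas φ) {a : α → Env → ℝ} (ha : ∀ v, SA (a v)) :
    SA (fun x => a (φ x) x) := by
  have e : (fun x => a (φ x) x) =
      fun x => ∑ v ∈ h.1.toFinset, if φ x = v then a v x else 0 := by
    funext x
    rw [Finset.sum_ite_eq]
    simp
  rw [e]
  exact SA.sum _ (fun v _ => SA.ite_def (h.2 v) (ha v) SA.zero)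

/-- Polynomial families with semialgebraic coefficients, of bounded degree. -/
def SAP (d : ℕ) (p : Env → ℝ[X]) : Prop :=
  (∀ x, (p x).natDegree ≤ d) ∧ ∀ i, SA (fun x => (p x).coeff i)

namespace SAP

theorem mono {d e : ℕ} {p : Env → ℝ[X]} (h : SAP d p) (hde : d ≤ e) : SAP e p :=
  ⟨fun x => (h.1 x).trans hde, h.2⟩

theorem C {a : Env → ℝ} (h : SA a) : SAP 0 (fun x => C (a x)) := by
  refine ⟨fun x => by simp, fun i => ?_⟩
  simp only [coeff_C]
  split_ifs
  · exact h
  · exact SA.zero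

theorem X : SAP 1 (fun _ => X) := by
  refine ⟨fun x => by simp, fun i => ?_⟩
  simp only [coeff_X]
  split_ifs
  · exact SA.one
  · exact SA.zero

theorem add {d e : ℕ} {p q : Env → ℝ[X]} (h : SAP d p) (h' : SAP e q) :
    SAP (max d e) (fun x => p x + q x) :=
  ⟨fun x => (natDegree_add_le _ _).trans (max_le_max (h.1 x) (h'.1 x)),
    fun i => by simpa using (h.2 i).add (h'.2 i)⟩

theorem mul {d e : ℕ} {p q : Env → ℝ[X]} (h : SAP d p) (h' : SAP e q) :
    SAP (d + e) (fun x => p x * q x) :=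
  ⟨fun x => natDegree_mul_le.trans (add_le_add (h.1 x) (h'.1 x)),
    fun i => by
      simp only [coeff_mul]
      exact SA.sum _ (fun j _ => (h.2 _).mul (h'.2 _))⟩

theorem derivative {d : ℕ} {p : Env → ℝ[X]} (h : SAP (d + 1) p) :
    SAP d (fun x => derivative (p x)) := by
  refine ⟨fun x => (natDegree_derivative_le _).trans ?_, fun i => ?_⟩
  · have := h.1 x; omega
  · simp only [coeff_derivative]
    exact (h.2 _).mul (by simpa using SA.nat (i + 1))

theorem comp_neg_X_coeff' (p : ℝ[X]) (i : ℕ) :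
    (p.comp (-Polynomial.X)).coeff i = (-1) ^ i * p.coeff i := by
  have : (-Polynomial.X : ℝ[X]) = Polynomial.C (-1) * Polynomial.X := by simp
  rw [this, comp_C_mul_X_coeff, mul_comm]

theorem comp_neg_X {d : ℕ} {p : Env → ℝ[X]} (h : SAP d p) :
    SAP d (fun x => (p x).comp (-Polynomial.X)) := by
  refine ⟨fun x => ?_, fun i => ?_⟩
  · simpa [natDegree_comp] using h.1 x
  · simp only [comp_neg_X_coeff']
    simpa using (SA.const ((-1) ^ i)).mul (h.2 i)

theorem natDegree {d : ℕ} {p : Env → ℝ[X]} (h : SAP d p) : Meas (fun x => (p x).natDegree) := by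
  refine ⟨(Set.finite_Iic d).subset ?_, fun e => ?_⟩
  · rintro _ ⟨x, rfl⟩; exact h.1 x
  · refine ((Def.all_finset (Finset.Ioc e d) (fun i _ => Def.eq (h.2 i) SA.zero)).and
      ((Def.const (e = 0)).or (Def.eq (h.2 e) SA.zero).not)).congr (fun x => ?_)
    constructor
    · intro hx
      dsimp only at hx
      refine ⟨fun i hi => coeff_eq_zero_of_natDegree_lt ?_, ?_⟩
      · simp at hi; omega
      · by_cases h0 : p x = 0
        · left; rw [← hx, h0]; simp
        · right; rw [← hx]; simpa using h0
    · rintro ⟨h1, h2⟩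
      apply le_antisymm
      · rw [natDegree_le_iff_coeff_eq_zero]
        intro N hN
        by_cases hNd : N ≤ d
        · exact h1 N (by simp [hN, hNd])
        · exact coeff_eq_zero_of_natDegree_lt ((h.1 x).trans_lt (by omega))
      · rcases h2 with h2 | h2
        · simp [h2]
        · exact le_natDegree_of_ne_zero h2

theorem leadingCoeff {d : ℕ} {p : Env → ℝ[X]} (h : SAP d p) : SA (fun x => (p x).leadingCoeff) :=
  SA.piece (a := fun e x => (p x).coeff e) h.natDegree (fun e => h.2 e)

theorem def_zero {d : ℕ} {p : Env → ℝ[X]} (h : SAP d p) : Def (fun x => p x = 0) :=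
  (Def.eq h.leadingCoeff SA.zero).congr (fun x => leadingCoeff_eq_zero.symm)

theorem rem_aux {dq : ℕ} {q : Env → ℝ[X]} (hq : SAP (dq + 1) q) (hq0 : ∀ x, q x ≠ 0) (dp : ℕ) :
    ∀ p : Env → ℝ[X], SAP dp p → ∃ r, SAP dq r ∧
      ∀ x t, (q x).eval t = 0 → (r x).eval t = (p x).eval t := by
  induction dp with
  | zero => exact fun p hp => ⟨p, hp.mono (by omega), fun x t _ => rfl⟩
  | succ dp ih =>
    intro p hp
    by_cases hd : dp + 1 ≤ dq
    · exact ⟨p, hp.mono hd, fun x t _ => rfl⟩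
    have h1 : SAP dp (fun x => p x - Polynomial.C ((p x).coeff (dp + 1) * ((q x).leadingCoeff)⁻¹) *
        (Polynomial.X ^ (dp + 1 - (q x).natDegree) * q x)) := by
      constructor
      · intro x
        have hqx := hq.1 x
        rw [natDegree_le_iff_coeff_eq_zero]
        intro N hN
        rw [coeff_sub, coeff_C_mul, coeff_X_pow_mul', if_pos (by omega)]
        rcases Nat.lt_or_ge (dp + 1) N with h | h
        · rw [coeff_eq_zero_of_natDegree_lt ((hp.1 x).trans_lt h),
            coeff_eq_zero_of_natDegree_lt (p := q x) (by omega)]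
          simp
        · have : N = dp + 1 := by omega
          subst this
          have e : dp + 1 - (dp + 1 - (q x).natDegree) = (q x).natDegree := by omega
          rw [e, coeff_natDegree, mul_assoc, inv_mul_cancel₀ (by simpa using hq0 x)]
          simp
      · intro i
        refine SA.piece (φ := fun x => (q x).natDegree) (a := fun e x =>
          (p x - Polynomial.C ((p x).coeff (dp + 1) * ((q x).leadingCoeff)⁻¹) *
            (Polynomial.X ^ (dp + 1 - e) * q x)).coeff i) hq.natDegree (fun e => ?_)
        simp only [coeff_sub, coeff_C_mul, coeff_X_pow_mul']
        refine (hp.2 i).sub (((hp.2 _).mul hq.leadingCoeff.inv).mul ?_)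
        split_ifs
        · exact hq.2 _
        · exact SA.zero
    obtain ⟨r, hr, h⟩ := ih _ h1
    refine ⟨r, hr, fun x t ht => ?_⟩
    rw [h x t ht]
    simp [ht]

open Classical in
theorem rem {dq dp : ℕ} {p q : Env → ℝ[X]} (hq : SAP (dq + 1) q) (hp : SAP dp p) :
    ∃ r, SAP dq r ∧
      ∀ x t, q x ≠ 0 → (q x).eval t = 0 → (r x).eval t = (p x).eval t := by
  have h1 : SAP (dq + 1) (fun x => if q x = 0 then 1 else q x) := by
    constructor
    · intro x
      dsimp only
      split_ifs
      · simp
      · exact hq.1 x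
    · intro i
      have : (fun x => (if q x = 0 then 1 else q x).coeff i) =
        fun x => if q x = 0 then (1 : ℝ[X]).coeff i else (q x).coeff i := by
        funext x; split_ifs <;> rfl
      rw [this]
      refine SA.ite_def hq.def_zero ?_ (hq.2 i)
      simp only [coeff_one]
      split_ifs
      · exact SA.one
      · exact SA.zero
  obtain ⟨r, hr, h⟩ := rem_aux h1 (by intro x; split_ifs with h; exacts [one_ne_zero, h]) dp p hp
  refine ⟨r, hr, fun x t h0 ht => h x t ?_⟩
  simp [h0, ht]

end SAP
end PE

end

section
open Polynomial Topology Filter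
set_option linter.unusedVariables false

namespace PE

local notation "sg" => SignType.sign

theorem sign_const (p : ℝ[X]) {a b : ℝ} (hab : a ≤ b) (h : ∀ t ∈ Set.Icc a b, p.eval t ≠ 0) :
    sg (p.eval a) = sg (p.eval b) := by
  have hc : ContinuousOn (fun t => p.eval t) (Set.Icc a b) := p.continuous.continuousOn
  rcases lt_trichotomy (p.eval a) 0 with h1 | h1 | h1
  · rcases lt_trichotomy (p.eval b) 0 with h2 | h2 | h2
    · rw [sign_neg h1, sign_neg h2]
    · exact absurd h2 (h b (by simp [hab]))
    · obtain ⟨t, ht, h0⟩ := intermediate_value_Icc hab hc (show (0 : ℝ) ∈ _ from ⟨h1.le, h2.le⟩)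
      exact absurd h0 (h t ht)
  · exact absurd h1 (h a (by simp [hab]))
  · rcases lt_trichotomy (p.eval b) 0 with h2 | h2 | h2
    · obtain ⟨t, ht, h0⟩ := intermediate_value_Icc' hab hc (show (0 : ℝ) ∈ _ from ⟨h2.le, h1.le⟩)
      exact absurd h0 (h t ht)
    · exact absurd h2 (h b (by simp [hab]))
    · rw [sign_pos h1, sign_pos h2]

/-- Sign immediately to the right of a point. -/
noncomputable def sgnR (p : ℝ[X]) (a : ℝ) : SignType :=
  Classical.epsilon (fun s => ∀ᶠ t in 𝓝[>] a, sg (p.eval t) = s)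

theorem sgnR_eq {p : ℝ[X]} {a : ℝ} {s : SignType} (h : ∀ᶠ t in 𝓝[>] a, sg (p.eval t) = s) :
    sgnR p a = s := by
  have h' : ∀ᶠ t in 𝓝[>] a, sg (p.eval t) = sgnR p a :=
    Classical.epsilon_spec (p := fun s => ∀ᶠ t in 𝓝[>] a, sg (p.eval t) = s) ⟨s, h⟩
  obtain ⟨t, h1, h2⟩ := (h'.and h).exists
  rw [← h1, h2]

theorem sgnR_gap {p : ℝ[X]} {a b : ℝ} (h : p ≠ 0 → ∀ t, a < t → t < b → p.eval t ≠ 0)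
    {t : ℝ} (h1 : a < t) (h2 : t < b) : sgnR p a = sg (p.eval t) := by
  by_cases hp : p = 0
  · subst hp
    exact sgnR_eq (by simp)
  · apply sgnR_eq
    filter_upwards [Ioo_mem_nhdsGT (h1.trans h2)] with u hu
    rcases le_total u t with hut | hut
    · exact sign_const p hut (fun v hv => h hp v (hu.1.trans_le hv.1) (hv.2.trans_lt h2))
    · exact (sign_const p hut (fun v hv => h hp v (h1.trans_le hv.1) (hv.2.trans_lt hu.2))).symm

theorem sgnR_self {p : ℝ[X]} {a : ℝ} (h : p.eval a ≠ 0) : sgnR p a = sg (p.eval a) := by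
  apply sgnR_eq
  apply nhdsWithin_le_nhds
  rcases lt_or_gt_of_ne h with h | h
  · filter_upwards [p.continuous.continuousAt.eventually_lt_const h] with t ht
    rw [sign_neg h, sign_neg ht]
  · filter_upwards [p.continuous.continuousAt.eventually_const_lt h] with t ht
    rw [sign_pos h, sign_pos ht]

section
variable {ι κ : Type} [Fintype ι] [Fintype κ]

/-- All roots of nonzero members. -/
noncomputable def rts (f : ι → ℝ[X]) : Finset ℝ := Finset.univ.biUnion (fun i => (f i).roots.toFinset)

theorem mem_rts {f : ι → ℝ[X]} {t : ℝ} : t ∈ rts f ↔ ∃ i, f i ≠ 0 ∧ (f i).eval t = 0 := by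
  simp [rts]

/-- Sign vectors. -/
abbrev SV (ι : Type) := ι → SignType

noncomputable def sv (f : ι → ℝ[X]) (t : ℝ) : SV ι := fun i => sg ((f i).eval t)
noncomputable def svR (f : ι → ℝ[X]) (t : ℝ) : SV ι := fun i => sgnR (f i) t

noncomputable def ent (f : ι → ℝ[X]) (t : ℝ) : SV ι × SV ι := (sv f t, svR f t)

noncomputable def word (f : ι → ℝ[X]) : List (SV ι × SV ι) := ((rts f).sort (· ≤ ·)).map (ent f)

theorem sort_unique (s : Finset ℝ) (l : List ℝ) (h : l.Pairwise (· < ·)) (h' : ∀ t, t ∈ l ↔ t ∈ s) :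
    s.sort (· ≤ ·) = l := by
  apply List.Perm.eq_of_pairwise (le := (· ≤ ·))
  · intro a b _ _ h1 h2; exact le_antisymm h1 h2
  · exact Finset.pairwise_sort _ _
  · exact h.imp le_of_lt
  · apply (List.perm_ext_iff_of_nodup (Finset.sort_nodup _ _) (h.imp ne_of_lt)).2
    intro t; simp [h']

theorem word_eq {f : ι → ℝ[X]} (l : List ℝ) (h : l.Pairwise (· < ·)) (h' : ∀ t, t ∈ l ↔ t ∈ rts f) :
    word f = l.map (ent f) := by
  rw [word, sort_unique _ l h h']

open Classical in
/-- Extract the word of a subfamily. -/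
noncomputable def sub (e : κ → ι) (nz : ι → Prop) (w : List (SV ι × SV ι)) : List (SV κ × SV κ) :=
  (w.filter (fun v => ∃ k, nz (e k) ∧ v.1 (e k) = 0)).map (fun v => (v.1 ∘ e, v.2 ∘ e))

theorem sorted_sort (f : ι → ℝ[X]) : ((rts f).sort (· ≤ ·)).Pairwise (· < ·) :=
  (Finset.sortedLT_sort _).pairwise

theorem word_sub (f : ι → ℝ[X]) (e : κ → ι) :
    word (f ∘ e) = sub e (fun i => f i ≠ 0) (word f) := by
  classical
  rw [sub, word.eq_def f, List.filter_map, List.map_map, word_eq (f := f ∘ e)]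
  · rfl
  · exact (sorted_sort f).filter _
  · intro t
    simp only [List.mem_filter, Finset.mem_sort, mem_rts, Function.comp, ent, sv, sign_eq_zero_iff,
      decide_eq_true_eq]
    constructor
    · exact fun h => h.2
    · rintro ⟨k, hk⟩
      exact ⟨⟨e k, hk⟩, k, hk⟩

/-- Add one polynomial to a family. -/
def addp (p : ℝ[X]) (f : κ → ℝ[X]) : Option κ → ℝ[X] := fun o => o.elim p f

def newE (g : SV κ) (τ : SignType) : SV (Option κ) × SV (Option κ) :=
  (fun o => o.elim 0 g, fun o => o.elim τ g)
def oldE (v : SV κ × SV κ) (τ τ' : SignType) : SV (Option κ) × SV (Option κ) :=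
  (fun o => o.elim τ v.1, fun o => o.elim (if τ = 0 then τ' else τ) v.2)
def gapE (s τ : SignType) (g : SV κ) : List (SV (Option κ) × SV (Option κ)) :=
  if s * τ = -1 then [newE g τ] else []
def nexts (s : SignType) : List ((SV κ × SV κ) × SignType) → SignType
  | [] => s
  | v :: _ => v.2
def ins (send : SignType) : SignType → SV κ → List ((SV κ × SV κ) × SignType) →
    List (SV (Option κ) × SV (Option κ))
  | s, g, [] => gapE s send g
  | s, g, v :: l => gapE s v.2 g ++ oldE v.1 v.2 (nexts send l) :: ins send v.2 v.1.2 l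

theorem rolle {p : ℝ[X]} {a b : ℝ} (hab : a < b) (h : p.eval a = p.eval b) :
    ∃ c, a < c ∧ c < b ∧ (derivative p).eval c = 0 := by
  obtain ⟨c, hc, h⟩ := exists_deriv_eq_zero (f := fun t => p.eval t) hab p.continuous.continuousOn h
  exact ⟨c, hc.1, hc.2, by simpa using h⟩

theorem sign_mul_neg {u v : ℝ} : sg u * sg v = -1 ↔ (u < 0 ∧ 0 < v) ∨ (0 < u ∧ v < 0) := by
  rw [← sign_mul, sign_eq_neg_one_iff, mul_neg_iff, or_comm]

variable {f : κ → ℝ[X]} {p : ℝ[X]} {k0 : κ} (hk : f k0 = derivative p)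
include hk

theorem gap_inj (hp : p ≠ 0) {a b : ℝ} (hg : ∀ t, a < t → t < b → t ∉ rts f) {c d : ℝ}
    (hac : a ≤ c) (hcd : c < d) (hdb : d ≤ b) (h0 : p.eval c = 0) (h1 : p.eval c = p.eval d) : False := by
  obtain ⟨e, h1, h2, h3⟩ := rolle hcd h1
  have : ¬ (f k0 ≠ 0) := fun h =>
    hg e (hac.trans_lt h1) (h2.trans_le hdb) (mem_rts.2 ⟨k0, h, by rw [hk, h3]⟩)
  push Not at this
  rw [hk] at this
  obtain ⟨c', hc'⟩ : ∃ c', p = C c' := ⟨_, eq_C_of_derivative_eq_zero this⟩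
  subst hc'
  simp at h0
  simp [h0] at hp

theorem gap_sgnR {a b : ℝ} (hab : a < b) (hg : ∀ t, a < t → t < b → t ∉ rts f) :
    sgnR p a = if sg (p.eval a) = 0 then sg (p.eval b) else sg (p.eval a) := by
  by_cases hp : p = 0
  · subst hp; rw [sgnR_gap (b := b) (by simp) (left_lt_add_div_two.2 hab) (add_div_two_lt_right.2 hab)]; simp
  split_ifs with h
  · rw [sign_eq_zero_iff] at h
    have h1 : ∀ t, a < t → t ≤ b → p.eval t ≠ 0 := fun t h1 h2 h3 =>
      gap_inj hk hp hg le_rfl h1 h2 h (by rw [h, h3])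
    rw [sgnR_gap (b := b) (fun _ t h2 h3 => h1 t h2 h3.le) (left_lt_add_div_two.2 hab) (add_div_two_lt_right.2 hab)]
    exact sign_const p (add_div_two_lt_right.2 hab).le
      (fun t ht => h1 t ((left_lt_add_div_two.2 hab).trans_le ht.1) ht.2)
  · exact sgnR_self (by simpa using h)

theorem gap_spec {a b : ℝ} (hab : a < b) (hg : ∀ t, a < t → t < b → t ∉ rts f) :
    ∃ l : List ℝ, l.Pairwise (· < ·) ∧ (∀ t, t ∈ l ↔ (a < t ∧ t < b) ∧ t ∈ rts (addp p f)) ∧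
      l.map (ent (addp p f)) = gapE (sg (p.eval a)) (sg (p.eval b)) (svR f a) := by
  have hr : ∀ t, a < t → t < b → (t ∈ rts (addp p f) ↔ p ≠ 0 ∧ p.eval t = 0) := by
    intro t h1 h2
    rw [mem_rts]
    constructor
    · rintro ⟨o, ho⟩
      cases o with
      | none => exact ho
      | some k => exact absurd (mem_rts.2 ⟨k, ho⟩) (hg t h1 h2)
    · intro h; exact ⟨none, h⟩
  unfold gapE
  split_ifs with h
  · rw [sign_mul_neg] at h
    have hp : p ≠ 0 := by rintro rfl; simp at h
    have : ∃ c, a < c ∧ c < b ∧ p.eval c = 0 := by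
      have hc : ContinuousOn (fun t => p.eval t) (Set.Icc a b) := p.continuous.continuousOn
      rcases h with h | h
      · obtain ⟨c, hc, h0⟩ := intermediate_value_Ioo hab.le hc (show (0 : ℝ) ∈ _ from h)
        exact ⟨c, hc.1, hc.2, h0⟩
      · obtain ⟨c, hc, h0⟩ := intermediate_value_Ioo' hab.le hc (show (0 : ℝ) ∈ _ from h.symm)
        exact ⟨c, hc.1, hc.2, h0⟩
    obtain ⟨c, h1, h2, h0⟩ := this
    refine ⟨[c], by simp, ?_, ?_⟩
    · intro t
      simp only [List.mem_singleton]
      constructor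
      · rintro rfl; exact ⟨⟨h1, h2⟩, (hr _ h1 h2).2 ⟨hp, h0⟩⟩
      · rintro ⟨⟨h3, h4⟩, h5⟩
        have h5 := ((hr _ h3 h4).1 h5).2
        rcases lt_trichotomy t c with h | h | h
        · exact (gap_inj hk hp hg h3.le h h2.le h5 (by rw [h5, h0])).elim
        · exact h
        · exact (gap_inj hk hp hg h1.le h h4.le h0 (by rw [h5, h0])).elim
    · simp only [List.map_cons, List.map_nil, List.cons.injEq, and_true]
      have hf : ∀ k, f k ≠ 0 → ∀ t, a < t → t < b → (f k).eval t ≠ 0 := fun k hk t h1 h2 h3 =>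
        hg t h1 h2 (mem_rts.2 ⟨k, hk, h3⟩)
      refine Prod.ext (funext fun o => ?_) (funext fun o => ?_)
      · cases o with
        | none => simp [ent, sv, newE, addp, h0]
        | some k => exact (sgnR_gap (hf k) h1 h2).symm
      · cases o with
        | none =>
          simp only [ent, svR, newE, addp, Option.elim]
          rw [gap_sgnR hk h2 (fun t h3 h4 => hg t (h1.trans h3) h4)]
          simp [h0]
        | some k =>
          simp only [ent, svR, newE, addp, Option.elim]
          have hm1 := left_lt_add_div_two.2 h2
          have hm2 := add_div_two_lt_right.2 h2
          rw [sgnR_gap (fun hk t h3 h4 => hf k hk t (h1.trans h3) h4) hm1 hm2,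
            sgnR_gap (hf k) (h1.trans hm1) hm2]
  · refine ⟨[], by simp, ?_, by simp⟩
    intro t
    simp only [List.not_mem_nil, false_iff]
    rintro ⟨⟨h1, h2⟩, h3⟩
    obtain ⟨hp, h0⟩ := (hr t h1 h2).1 h3
    apply h
    have ha : p.eval a ≠ 0 := fun ha => gap_inj hk hp hg le_rfl h1 h2.le ha (by rw [ha, h0])
    have hb : p.eval b ≠ 0 := fun hb => gap_inj hk hp hg h1.le h2 le_rfl h0 (by rw [hb, h0])
    have hinj : Set.InjOn (fun t => p.eval t) (Set.Icc a b) := by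
      have hd : derivative p ≠ 0 := by
        intro hd
        obtain ⟨c', hc'⟩ : ∃ c', p = C c' := ⟨_, eq_C_of_derivative_eq_zero hd⟩
        subst hc'
        simp at h0
        simp [h0] at hp
      have key : ∀ u v, a ≤ u → u < v → v ≤ b → p.eval u ≠ p.eval v := by
        intro u v hu huv hv h
        obtain ⟨e, h1, h2, h3⟩ := rolle huv h
        exact hg e (hu.trans_lt h1) (h2.trans_le hv) (mem_rts.2 ⟨k0, by rw [hk]; exact hd, by rw [hk, h3]⟩)
      intro u hu v hv huv
      rcases lt_trichotomy u v with h | h | h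
      · exact absurd huv (key u v hu.1 h hv.2)
      · exact h
      · exact absurd huv.symm (key v u hv.1 h hu.2)
    have hmem : a ∈ Set.Icc a b := by simp [hab.le]
    have hmemb : b ∈ Set.Icc a b := by simp [hab.le]
    have hmemt : t ∈ Set.Icc a b := ⟨h1.le, h2.le⟩
    rw [sign_mul_neg]
    rcases p.continuous.continuousOn.strictMonoOn_of_injOn_Icc' hab.le hinj with h | h
    · left
      have := h hmem hmemt h1
      have := h hmemt hmemb h2
      simp only [h0] at *
      constructor <;> assumption
    · right
      have := h hmem hmemt h1
      have := h hmemt hmemb h2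
      simp only [h0] at *
      constructor <;> assumption

theorem ins_spec {B : ℝ} (l : List ℝ) : ∀ a, a < B → l.Pairwise (· < ·) → 
    (∀ t, t ∈ l ↔ (a < t ∧ t < B) ∧ t ∈ rts f) →
    ∃ l' : List ℝ, l'.Pairwise (· < ·) ∧ (∀ t, t ∈ l' ↔ (a < t ∧ t < B) ∧ t ∈ rts (addp p f)) ∧
      l'.map (ent (addp p f)) = ins (sg (p.eval B)) (sg (p.eval a)) (svR f a)
        (l.map (fun t => (ent f t, sg (p.eval t)))) := by
  induction l with
  | nil =>
    intro a hab _ hl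
    exact gap_spec hk hab (fun t h1 h2 h3 => by simpa using (hl t).2 ⟨⟨h1, h2⟩, h3⟩)
  | cons c l ih =>
    intro a hab hs hl
    have hc := (hl c).1 (by simp)
    rw [List.pairwise_cons] at hs
    have hl1 : ∀ t, t ∈ l ↔ (c < t ∧ t < B) ∧ t ∈ rts f := by
      intro t
      constructor
      · intro ht
        have := (hl t).1 (by simp [ht])
        exact ⟨⟨hs.1 t ht, this.1.2⟩, this.2⟩
      · rintro ⟨⟨h1, h2⟩, h3⟩
        have := (hl t).2 ⟨⟨hc.1.1.trans h1, h2⟩, h3⟩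
        rcases List.mem_cons.1 this with h | h
        · exact absurd h h1.ne'
        · exact h
    obtain ⟨l0, s0, m0, e0⟩ := gap_spec hk (a := a) (b := c) hc.1.1 (fun t h1 h2 h3 => by
      have := (hl t).2 ⟨⟨h1, h2.trans hc.1.2⟩, h3⟩
      rcases List.mem_cons.1 this with h | h
      · exact absurd h h2.ne
      · exact absurd (hs.1 t h) h2.not_gt)
    obtain ⟨l1, s1, m1, e1⟩ := ih c hc.1.2 hs.2 hl1
    refine ⟨l0 ++ c :: l1, ?_, ?_, ?_⟩
    · rw [List.pairwise_append, List.pairwise_cons]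
      refine ⟨s0, ⟨fun t ht => ((m1 t).1 ht).1.1, s1⟩, ?_⟩
      intro t ht u hu
      have h1 := ((m0 t).1 ht).1.2
      rcases List.mem_cons.1 hu with h | h
      · rwa [h]
      · exact h1.trans ((m1 u).1 h).1.1
    · intro t
      have hcf : c ∈ rts (addp p f) := by
        obtain ⟨k, h⟩ := mem_rts.1 hc.2
        exact mem_rts.2 ⟨some k, h⟩
      rw [List.mem_append, List.mem_cons, m0, m1]
      constructor
      · rintro (h | h | h)
        · exact ⟨⟨h.1.1, h.1.2.trans hc.1.2⟩, h.2⟩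
        · rw [h]; exact ⟨hc.1, hcf⟩
        · exact ⟨⟨hc.1.1.trans h.1.1, h.1.2⟩, h.2⟩
      · rintro ⟨⟨h1, h2⟩, h3⟩
        rcases lt_trichotomy t c with h | h | h
        · exact Or.inl ⟨⟨h1, h⟩, h3⟩
        · exact Or.inr (Or.inl h)
        · exact Or.inr (Or.inr ⟨⟨h, h2⟩, h3⟩)
    · simp only [List.map_append, List.map_cons, e0, e1, ins]
      congr 2
      refine Prod.ext (funext fun o => ?_) (funext fun o => ?_)
      · cases o <;> rfl
      · cases o with
        | some k => rfl
        | none =>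
          simp only [ent, svR, addp, oldE, Option.elim]
          cases l with
          | nil =>
            exact gap_sgnR hk hc.1.2 (fun t h1 h2 h3 => by simpa using (hl1 t).2 ⟨⟨h1, h2⟩, h3⟩)
          | cons d l =>
            have hd := (hl1 d).1 (by simp)
            refine gap_sgnR hk hd.1.1 (fun t h1 h2 h3 => ?_)
            have := (hl1 t).2 ⟨⟨h1, h2.trans hd.1.2⟩, h3⟩
            rcases List.mem_cons.1 this with h | h
            · exact absurd h h2.ne
            · exact absurd ((List.pairwise_cons.1 hs.2).1 t h) h2.not_gt
end

/-- Sign at plus infinity. -/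
noncomputable def pinf (p : ℝ[X]) : SignType := sg p.leadingCoeff
/-- Sign at minus infinity. -/
noncomputable def ninf (p : ℝ[X]) : SignType := pinf (p.comp (-X))

theorem pinf_spec (p : ℝ[X]) : ∀ᶠ t in atTop, sg (p.eval t) = pinf p := by
  by_cases hp : p = 0
  · simp [hp, pinf]
  have h := p.isEquivalent_atTop_lead
  have h2 := h.exists_eq_mul
  obtain ⟨φ, h3, h4⟩ := h2
  filter_upwards [h4, h3.eventually_const_lt (show (0:ℝ) < 1 by norm_num), eventually_gt_atTop 0] with t h5 h6 h7
  rw [h5]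
  simp [sign_mul, pinf, sign_pos h6, sign_pos (pow_pos h7 _)]

theorem ninf_spec (p : ℝ[X]) : ∀ᶠ t in atTop, sg (p.eval (-t)) = ninf p := by
  simpa [ninf] using pinf_spec (p.comp (-X))

theorem exists_B {ι : Type} [Fintype ι] (f : ι → ℝ[X]) : ∃ B : ℝ, 0 < B ∧ (∀ t ∈ rts f, -B < t ∧ t < B) ∧
    (∀ i, sg ((f i).eval B) = pinf (f i)) ∧ (∀ i, sg ((f i).eval (-B)) = ninf (f i)) := by
  have h1 : ∀ᶠ B : ℝ in atTop, ∀ i, sg ((f i).eval B) = pinf (f i) :=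
    eventually_all.2 (fun i => pinf_spec _)
  have h2 : ∀ᶠ B : ℝ in atTop, ∀ i, sg ((f i).eval (-B)) = ninf (f i) :=
    eventually_all.2 (fun i => ninf_spec _)
  have h3 : ∀ᶠ B : ℝ in atTop, ∀ t ∈ rts f, -B < t ∧ t < B := by
    rw [Filter.eventually_all_finset]
    intro t _
    filter_upwards [eventually_gt_atTop |t|] with B hB
    exact abs_lt.1 hB
  obtain ⟨B, h⟩ := (((eventually_gt_atTop (0:ℝ)).and h3).and (h1.and h2)).exists
  exact ⟨B, h.1.1, h.1.2, h.2.1, h.2.2⟩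

theorem svR_negB {ι : Type} [Fintype ι] {f : ι → ℝ[X]} {B : ℝ} (hB : ∀ t ∈ rts f, -B < t) (i : ι) :
    sgnR (f i) (-B) = sg ((f i).eval (-B)) := by
  by_cases h : f i = 0
  · rw [h, sgnR_eq (s := 0)] <;> simp
  · apply sgnR_self
    intro h0
    exact lt_irrefl _ (hB _ (mem_rts.2 ⟨i, h, h0⟩))

theorem word_ins {κ : Type} [Fintype κ] {f : κ → ℝ[X]} {p : ℝ[X]} {k0 : κ} (hk : f k0 = derivative p) :
    word (addp p f) = ins (pinf p) (ninf p) (fun k => ninf (f k))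
      (((rts f).sort (· ≤ ·)).map (fun t => (ent f t, sg (p.eval t)))) := by
  obtain ⟨B, hB, h1, h2, h3⟩ := exists_B (addp p f)
  have h4 : ∀ t ∈ rts f, -B < t ∧ t < B := by
    intro t ht
    obtain ⟨k, h⟩ := mem_rts.1 ht
    exact h1 t (mem_rts.2 ⟨some k, h⟩)
  obtain ⟨l', s, m, e⟩ := ins_spec hk (B := B) ((rts f).sort (· ≤ ·)) (-B) (by linarith) (sorted_sort f)
    (fun t => by
      rw [Finset.mem_sort]
      exact ⟨fun h => ⟨h4 t h, h⟩, fun h => h.2⟩)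
  rw [word_eq l' s (fun t => by rw [m]; exact ⟨fun h => h.2, fun h => ⟨h1 t h, h⟩⟩), e]
  have e1 := h2 none
  have e2 := h3 none
  simp only [addp, Option.elim] at e1 e2
  rw [e1, e2]
  congr 1
  funext k
  have := h3 (some k)
  simp only [addp, Option.elim] at this
  rw [← this]
  exact svR_negB (fun t ht => (h4 t ht).1) k

end PE

end

section
open Polynomial Topology Filter
set_option linter.unusedVariables false

namespace PE

local notation "sg" => SignType.sign

def W {ι : Type} [Fintype ι] (F : ι → Env → ℝ[X]) : Prop := Meas (fun x => word (fun i => F i x))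

theorem meas_nz {ι : Type} [Fintype ι] {F : ι → Env → ℝ[X]} {d : ℕ} (hF : ∀ i, SAP d (F i)) :
    Meas (fun x => fun i => F i x ≠ 0) :=
  Meas.pi (fun i => Meas.prop (hF i).def_zero.not)

theorem W.sub {ι κ : Type} [Fintype ι] [Fintype κ] {F : ι → Env → ℝ[X]} {d : ℕ}
    (h : W F) (hF : ∀ i, SAP d (F i)) (e : κ → ι) {G : κ → Env → ℝ[X]} (hG : ∀ k, G k = F (e k)) : W G := by
  have : (fun x => word (fun k => G k x)) =
      fun x => PE.sub e (fun i => F i x ≠ 0) (word (fun i => F i x)) := by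
    funext x
    rw [← word_sub]
    congr 1
    funext k
    simp [hG]
  rw [W, this]
  exact ((meas_nz hF).pair h).comp (fun v => PE.sub e v.1 v.2)

open Classical in
noncomputable def enrich {κ : Type} (nz : κ → Prop) (w : List (SV (κ ⊕ κ) × SV (κ ⊕ κ))) :
    List ((SV κ × SV κ) × SignType) :=
  (w.filter (fun v => ∃ k, nz k ∧ v.1 (Sum.inl k) = 0)).map
    (fun v => ((v.1 ∘ Sum.inl, v.2 ∘ Sum.inl),
      if h : ∃ k, nz k ∧ v.1 (Sum.inl k) = 0 then v.1 (Sum.inr h.choose) else 0))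

theorem enrich_spec {κ : Type} [Fintype κ] {g r : κ → ℝ[X]} {p : ℝ[X]}
    (hr : ∀ k t, g k ≠ 0 → (g k).eval t = 0 → (r k).eval t = p.eval t) :
    ((rts g).sort (· ≤ ·)).map (fun t => (ent g t, sg (p.eval t))) =
      enrich (fun k => g k ≠ 0) (word (Sum.elim g r)) := by
  classical
  rw [enrich, word, List.filter_map, List.map_map]
  have e : (rts g).sort (· ≤ ·) = ((rts (Sum.elim g r)).sort (· ≤ ·)).filter
      ((fun v => decide (∃ k, g k ≠ 0 ∧ v.1 (Sum.inl k) = 0)) ∘ ent (Sum.elim g r)) := by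
    apply sort_unique
    · exact (sorted_sort _).filter _
    · intro t
      simp only [List.mem_filter, Finset.mem_sort, mem_rts, Function.comp, ent, sv, sign_eq_zero_iff,
        decide_eq_true_eq, Sum.elim_inl]
      constructor
      · exact fun h => h.2
      · rintro ⟨k, hk⟩
        exact ⟨⟨Sum.inl k, hk⟩, k, hk⟩
  have e2 : ∀ (l l' : List ℝ) (φ : ℝ → (SV κ × SV κ) × SignType), l = l' → l.map φ = l'.map φ := by
    intro l l' φ h; rw [h]
  refine Eq.trans ?_ (e2 _ _ _ (e.trans (by congr!)))
  apply List.map_congr_left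
  intro t ht
  rw [Finset.mem_sort, mem_rts] at ht
  have h : ∃ k, g k ≠ 0 ∧ (ent (Sum.elim g r) t).1 (Sum.inl k) = 0 := by
    simpa [ent, sv] using ht
  simp only [Function.comp]
  rw [dif_pos h]
  refine Prod.ext rfl ?_
  have h1 : g h.choose ≠ 0 ∧ sg ((g h.choose).eval t) = 0 := h.choose_spec
  rw [sign_eq_zero_iff] at h1
  show _ = sg ((r h.choose).eval t)
  rw [hr h.choose t h1.1 h1.2]

theorem meas_pinf {d : ℕ} {p : Env → ℝ[X]} (h : SAP d p) : Meas (fun x => pinf (p x)) :=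
  Meas.sign h.leadingCoeff
theorem meas_ninf {d : ℕ} {p : Env → ℝ[X]} (h : SAP d p) : Meas (fun x => ninf (p x)) :=
  meas_pinf h.comp_neg_X

theorem W.step {κ : Type} [Fintype κ] {G R : κ → Env → ℝ[X]} {p : Env → ℝ[X]} {d : ℕ}
    (hG : ∀ k, SAP d (G k)) (hp : SAP d p) {k0 : κ} (hk0 : ∀ x, G k0 x = derivative (p x))
    (hR : ∀ k x t, G k x ≠ 0 → (G k x).eval t = 0 → (R k x).eval t = (p x).eval t)
    (h : W (Sum.elim G R)) : W (fun o : Option κ => o.elim p G) := by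
  have : (fun x => word (fun o : Option κ => (o.elim p G : Env → ℝ[X]) x)) =
      fun x => ins (pinf (p x)) (ninf (p x)) (fun k => ninf (G k x))
        (enrich (fun k => G k x ≠ 0) (word (fun i => (Sum.elim G R i : Env → ℝ[X]) x))) := by
    funext x
    have e1 : (fun o : Option κ => (o.elim p G : Env → ℝ[X]) x) = addp (p x) (fun k => G k x) := by
      funext o; cases o <;> rfl
    have e2 : (fun i => (Sum.elim G R i : Env → ℝ[X]) x) =
        Sum.elim (fun k => G k x) (fun k => R k x) := by
      funext o; cases o <;> rfl
    rw [e1, e2, word_ins (k0 := k0) (hk0 x), enrich_spec (p := p x) (fun k t => hR k x t)]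
  rw [W, this]
  exact ((meas_pinf hp).pair ((meas_ninf hp).pair ((Meas.pi (fun k => meas_ninf (hG k))).pair
    ((meas_nz hG).pair h)))).comp (fun v : _ × _ × SV κ × _ × _ =>
      ins v.1 v.2.1 v.2.2.1 (enrich v.2.2.2.1 v.2.2.2.2))

theorem W_all (d : ℕ) : ∀ (ι : Type) [Fintype ι] (F : ι → Env → ℝ[X]), (∀ i, SAP d (F i)) → W F := by
  induction d with
  | zero =>
    intro ι _ F hF
    have : (fun x => word (fun i => F i x)) = fun _ => [] := by
      funext x
      rw [word_eq [] (by simp)]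
      · simp
      · intro t
        simp only [List.not_mem_nil, mem_rts, false_iff, not_exists, not_and]
        intro i h0 h
        have h2 := eq_C_of_natDegree_le_zero ((hF i).1 x)
        rw [h2] at h h0
        simp at h
        simp [h] at h0
    rw [W, this]
    exact Meas.const _
  | succ d ih =>
    suffices H : ∀ (m : ℕ) (ι : Type) [Fintype ι] (F : ι → Env → ℝ[X]) (H : Fin m → Env → ℝ[X]),
        (∀ i, SAP d (F i)) → (∀ j, SAP (d + 1) (H j)) → W (Sum.elim F H) by
      intro ι _ F hF
      have h1 := H (Fintype.card ι) Empty (fun i => i.elim) (fun j => F ((Fintype.equivFin ι).symm j))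
        (fun i => i.elim) (fun j => hF _)
      refine h1.sub (d := d + 1) ?_ (fun i => Sum.inr (Fintype.equivFin ι i)) ?_
      · rintro (i | i)
        · exact i.elim
        · exact hF _
      · intro k; simp
    intro m
    induction m with
    | zero =>
      intro ι _ F H hF hH
      apply ih
      rintro (i | i)
      · exact hF i
      · exact i.elim0
    | succ m ihm =>
      intro ι _ F H hF hH
      let p := H (Fin.last m)
      have hp : SAP (d + 1) p := hH _
      let G : (ι ⊕ Fin m) ⊕ Unit → Env → ℝ[X] :=
        Sum.elim (Sum.elim F (fun j => H j.castSucc)) (fun _ x => derivative (p x))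
      have hG : ∀ k, SAP (d + 1) (G k) := by
        rintro ((i | j) | u)
        · exact (hF i).mono (by omega)
        · exact hH _
        · exact hp.derivative.mono (by omega)
      choose R hR1 hR2 using fun k => SAP.rem (hG k) hp
      have h1 := ihm ((ι ⊕ Unit) ⊕ ((ι ⊕ Fin m) ⊕ Unit))
        (Sum.elim (Sum.elim F (fun _ x => derivative (p x))) R) (fun j => H j.castSucc) (by
          rintro ((i | u) | k)
          · exact hF i
          · exact hp.derivative
          · exact hR1 k) (fun j => hH _)
      have h2 : W (Sum.elim G R) := by
        refine h1.sub (d := d + 1) ?_ (fun k => match k with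
          | Sum.inl (Sum.inl (Sum.inl i)) => Sum.inl (Sum.inl (Sum.inl i))
          | Sum.inl (Sum.inl (Sum.inr j)) => Sum.inr j
          | Sum.inl (Sum.inr u) => Sum.inl (Sum.inl (Sum.inr u))
          | Sum.inr k => Sum.inl (Sum.inr k)) ?_
        · rintro (((i | u) | k) | j)
          · exact (hF i).mono (by omega)
          · exact hp.derivative.mono (by omega)
          · exact (hR1 k).mono (by omega)
          · exact hH _
        · rintro (((i | j) | u) | k) <;> rfl
      have h3 := W.step (d := d + 1) (k0 := Sum.inr ()) hG hp (fun x => rfl) hR2 h2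
      refine h3.sub (d := d + 1) ?_ (fun k => match k with
          | Sum.inl i => some (Sum.inl (Sum.inl i))
          | Sum.inr j => Fin.lastCases (motive := fun _ => Option ((ι ⊕ Fin m) ⊕ Unit))
              none (fun j => some (Sum.inl (Sum.inr j))) j) ?_
      · rintro (_ | k)
        · exact hp
        · exact hG k
      · rintro (i | j)
        · rfl
        · induction j using Fin.lastCases with
          | last => simp [p]
          | cast j => simp [G]

/-- The sign vectors that occur are the ones in the word. -/
theorem realized {ι : Type} [Fintype ι] (f : ι → ℝ[X]) (P : SV ι → Prop) :
    (∃ t, P (sv f t)) ↔ (P (fun i => ninf (f i)) ∨ ∃ v ∈ word f, P v.1 ∨ P v.2) := by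
  obtain ⟨B, hB, h1, h2, h3⟩ := exists_B f
  have hn : sv f (-B) = fun i => ninf (f i) := funext h3
  have gap : ∀ a t : ℝ, a < t → (∀ s, a < s → s ≤ t → s ∉ rts f) → sv f t = svR f a := by
    intro a t hat h
    funext i
    symm
    by_cases hi : f i = 0
    · simp [svR, sv, hi, sgnR_eq (p := 0) (a := a) (s := 0) (by simp)]
    have h4 : ∀ s, a < s → s ≤ t → (f i).eval s ≠ 0 := fun s h5 h6 h7 => h s h5 h6 (mem_rts.2 ⟨i, hi, h7⟩)
    have hm := left_lt_add_div_two.2 hat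
    have hm2 := add_div_two_lt_right.2 hat
    show sgnR _ _ = _
    rw [sgnR_gap (fun _ s h5 h6 => h4 s h5 h6.le) hm hm2]
    exact sign_const _ hm2.le (fun s hs => h4 s (hm.trans_le hs.1) hs.2)
  constructor
  · rintro ⟨t, ht⟩
    by_cases htr : t ∈ rts f
    · exact Or.inr ⟨ent f t, List.mem_map.2 ⟨t, by simpa using htr, rfl⟩, Or.inl ht⟩
    by_cases hne : ((rts f).filter (· < t)).Nonempty
    · right
      set a := ((rts f).filter (· < t)).max' hne with ha
      have ham : a ∈ (rts f).filter (· < t) := Finset.max'_mem _ _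
      rw [Finset.mem_filter] at ham
      refine ⟨ent f a, List.mem_map.2 ⟨a, by simpa using ham.1, rfl⟩, Or.inr ?_⟩
      show P (svR f a)
      rw [← gap a t ham.2]
      · exact ht
      · intro s h5 h6 h7
        rcases h6.lt_or_eq with h6 | h6
        · exact absurd (Finset.le_max' _ s (Finset.mem_filter.2 ⟨h7, h6⟩)) (not_le.2 h5)
        · exact htr (h6 ▸ h7)
    · left
      rw [Finset.not_nonempty_iff_eq_empty, Finset.filter_eq_empty_iff] at hne
      have h5 : ∀ s, s ≤ t → s ∉ rts f := by
        intro s h5 h6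
        rcases h5.lt_or_eq with h7 | h7
        · exact hne h6 h7
        · exact htr (h7 ▸ h6)
      have : sv f t = fun i => ninf (f i) := by
        rw [← hn]
        funext i
        by_cases hi : f i = 0
        · simp [sv, hi]
        rcases le_total t (-B) with h6 | h6
        · refine sign_const _ h6 (fun s hs h7 => ?_)
          have := (h1 s (mem_rts.2 ⟨i, hi, h7⟩)).1
          linarith [hs.2]
        · refine (sign_const _ h6 (fun s hs h7 => ?_)).symm
          exact h5 s hs.2 (mem_rts.2 ⟨i, hi, h7⟩)
      rwa [← this]
  · rintro (h | ⟨v, hv, h⟩)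
    · exact ⟨-B, by rwa [hn]⟩
    · obtain ⟨a, ha, rfl⟩ := List.mem_map.1 hv
      rw [Finset.mem_sort] at ha
      rcases h with h | h
      · exact ⟨a, h⟩
      · by_cases hne : ((rts f).filter (a < ·)).Nonempty
        · set b := ((rts f).filter (a < ·)).min' hne with hb
          have hbm : b ∈ (rts f).filter (a < ·) := Finset.min'_mem _ _
          rw [Finset.mem_filter] at hbm
          refine ⟨(a + b) / 2, ?_⟩
          rw [gap a _ (left_lt_add_div_two.2 hbm.2)]
          · exact h
          · intro s h5 h6 h7
            have := Finset.min'_le _ s (Finset.mem_filter.2 ⟨h7, h5⟩)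
            have := add_div_two_lt_right.2 hbm.2
            linarith
        · rw [Finset.not_nonempty_iff_eq_empty, Finset.filter_eq_empty_iff] at hne
          refine ⟨a + 1, ?_⟩
          rw [gap a _ (by linarith)]
          · exact h
          · intro s h5 h6 h7
            exact hne h7 h5

/-- Normal form of a piecewise rational function in its first variable. -/
structure NF (a : Env → ℝ) where
  (ι : Type)
  [fin : Fintype ι]
  (F : ι → Env → ℝ[X])
  (d : ℕ)
  (hF : ∀ i, SAP d (F i))
  (N : SV ι → Env → ℝ[X])
  (D : SV ι → Env → ℝ[X])
  (hN : ∀ s, SAP d (N s))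
  (hD : ∀ s, SAP d (D s))
  (h : ∀ x t, (D (sv (fun i => F i x) t) x).eval t ≠ 0 ∧ 
    a (cons t x) = (N (sv (fun i => F i x) t) x).eval t / (D (sv (fun i => F i x) t) x).eval t)

theorem nf_exists {a : Env → ℝ} (ha : SA a) : Nonempty (NF a) := by
  classical
  induction ha with
  | const q =>
    exact ⟨{ ι := Empty, F := fun i => i.elim, d := 0, hF := fun i => i.elim,
             N := fun _ _ => C (q : ℝ), D := fun _ _ => C 1,
             hN := fun s => SAP.C (SA.const q), hD := fun s => SAP.C SA.one,
             h := fun x t => by simp }⟩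
  | coord i =>
    cases i with
    | zero =>
      exact ⟨{ ι := Empty, F := fun i => i.elim, d := 1, hF := fun i => i.elim,
               N := fun _ _ => X, D := fun _ _ => C 1,
               hN := fun s => SAP.X, hD := fun s => (SAP.C SA.one).mono (by omega),
               h := fun x t => by simp }⟩
    | succ i =>
      exact ⟨{ ι := Empty, F := fun i => i.elim, d := 0, hF := fun i => i.elim,
               N := fun _ x => C (x i), D := fun _ _ => C 1,
               hN := fun s => SAP.C (SA.coord i), hD := fun s => SAP.C SA.one,
               h := fun x t => by simp }⟩
  | add _ _ h1 h2 =>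
    obtain ⟨⟨ι, F, d, hF, N, D, hN, hD, h⟩⟩ := h1
    obtain ⟨⟨ι', F', d', hF', N', D', hN', hD', h'⟩⟩ := h2
    refine ⟨{
      ι := ι ⊕ ι', F := Sum.elim F F', d := d + d', hF := ?_,
      N := fun s x => N (s ∘ Sum.inl) x * D' (s ∘ Sum.inr) x + D (s ∘ Sum.inl) x * N' (s ∘ Sum.inr) x,
      D := fun s x => D (s ∘ Sum.inl) x * D' (s ∘ Sum.inr) x, hN := ?_, hD := ?_, h := ?_ }⟩
    · rintro (i | i)
      · exact (hF i).mono (by omega)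
      · exact (hF' i).mono (by omega)
    · intro s
      exact (((hN _).mul (hD' _)).add ((hD _).mul (hN' _))).mono (by simp)
    · intro s; exact (hD _).mul (hD' _)
    · intro x t
      obtain ⟨e1, e2⟩ := h x t
      obtain ⟨e3, e4⟩ := h' x t
      refine ⟨by simpa using ⟨e1, e3⟩, ?_⟩
      rw [e2, e4, div_add_div _ _ e1 e3]
      simp only [eval_add, eval_mul]
      rfl
  | mul _ _ h1 h2 =>
    obtain ⟨⟨ι, F, d, hF, N, D, hN, hD, h⟩⟩ := h1
    obtain ⟨⟨ι', F', d', hF', N', D', hN', hD', h'⟩⟩ := h2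
    refine ⟨{
      ι := ι ⊕ ι', F := Sum.elim F F', d := d + d', hF := ?_,
      N := fun s x => N (s ∘ Sum.inl) x * N' (s ∘ Sum.inr) x,
      D := fun s x => D (s ∘ Sum.inl) x * D' (s ∘ Sum.inr) x, hN := ?_, hD := ?_, h := ?_ }⟩
    · rintro (i | i)
      · exact (hF i).mono (by omega)
      · exact (hF' i).mono (by omega)
    · intro s; exact (hN _).mul (hN' _)
    · intro s; exact (hD _).mul (hD' _)
    · intro x t
      obtain ⟨e1, e2⟩ := h x t
      obtain ⟨e3, e4⟩ := h' x t
      refine ⟨by simpa using ⟨e1, e3⟩, ?_⟩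
      rw [e2, e4, div_mul_div_comm]
      simp only [eval_mul]
      rfl
  | inv _ h1 =>
    obtain ⟨⟨ι, F, d, hF, N, D, hN, hD, h⟩⟩ := h1
    refine ⟨{
      ι := ι ⊕ SV ι, F := Sum.elim F N, d := d, hF := ?_,
      N := fun s x => if s (Sum.inr (s ∘ Sum.inl)) = 0 then C 0 else D (s ∘ Sum.inl) x,
      D := fun s x => if s (Sum.inr (s ∘ Sum.inl)) = 0 then C 1 else N (s ∘ Sum.inl) x,
      hN := ?_, hD := ?_, h := ?_ }⟩
    · rintro (i | i)
      · exact hF i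
      · exact hN i
    · intro s
      split_ifs
      · exact (SAP.C SA.zero).mono (by omega)
      · exact hD _
    · intro s
      split_ifs
      · exact (SAP.C SA.one).mono (by omega)
      · exact hN _
    · intro x t
      obtain ⟨e1, e2⟩ := h x t
      have e : (sv (fun i => (Sum.elim F N i : Env → ℝ[X]) x) t) ∘ Sum.inl = sv (fun i => F i x) t := rfl
      simp only [e]
      have e' : (sv (fun i => (Sum.elim F N i : Env → ℝ[X]) x) t) (Sum.inr (sv (fun i => F i x) t)) =
        sg ((N (sv (fun i => F i x) t) x).eval t) := rfl
      rw [e', e2]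
      split_ifs with h0
      · rw [sign_eq_zero_iff] at h0
        simp [h0]
      · refine ⟨by simpa using h0, by simp⟩
  | @ite a1 _ _ _ _ _ h1 h2 h3 =>
    obtain ⟨⟨ι, F, d, hF, N, D, hN, hD, h⟩⟩ := h1
    obtain ⟨⟨ι', F', d', hF', N', D', hN', hD', h'⟩⟩ := h2
    obtain ⟨⟨ι'', F'', d'', hF'', N'', D'', hN'', hD'', h''⟩⟩ := h3
    refine ⟨{
      ι := (ι ⊕ SV ι) ⊕ (ι' ⊕ ι''),
      F := Sum.elim (Sum.elim F (fun s x => N s x * D s x)) (Sum.elim F' F''), d := d + d + (d' + d''),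
      hF := ?_,
      N := fun s x => if s (Sum.inl (Sum.inr (s ∘ Sum.inl ∘ Sum.inl))) = 1 then N' (s ∘ Sum.inr ∘ Sum.inl) x
        else N'' (s ∘ Sum.inr ∘ Sum.inr) x,
      D := fun s x => if s (Sum.inl (Sum.inr (s ∘ Sum.inl ∘ Sum.inl))) = 1 then D' (s ∘ Sum.inr ∘ Sum.inl) x
        else D'' (s ∘ Sum.inr ∘ Sum.inr) x,
      hN := ?_, hD := ?_, h := ?_ }⟩
    · rintro ((i | s) | (i | i))
      · exact (hF i).mono (by omega)
      · exact ((hN s).mul (hD s)).mono (by omega)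
      · exact (hF' i).mono (by omega)
      · exact (hF'' i).mono (by omega)
    · intro s
      split_ifs
      · exact (hN' _).mono (by omega)
      · exact (hN'' _).mono (by omega)
    · intro s
      split_ifs
      · exact (hD' _).mono (by omega)
      · exact (hD'' _).mono (by omega)
    · intro x t
      obtain ⟨e1, e2⟩ := h x t
      obtain ⟨e3, e4⟩ := h' x t
      obtain ⟨e5, e6⟩ := h'' x t
      set S := (sv (fun i => (Sum.elim (Sum.elim F (fun s x => N s x * D s x)) (Sum.elim F' F'') i : Env → ℝ[X]) x) t) with hS
      have q1 : S ∘ Sum.inl ∘ Sum.inl = sv (fun i => F i x) t := rfl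
      have q2 : S ∘ Sum.inr ∘ Sum.inl = sv (fun i => F' i x) t := rfl
      have q3 : S ∘ Sum.inr ∘ Sum.inr = sv (fun i => F'' i x) t := rfl
      have q4 : S (Sum.inl (Sum.inr (sv (fun i => F i x) t))) =
        sg ((N (sv (fun i => F i x) t) x * D (sv (fun i => F i x) t) x).eval t) := rfl
      simp only [q1, q2, q3]
      have q5 : S (Sum.inl (Sum.inr (sv (fun i => F i x) t))) = 1 ↔ 0 < a1 (cons t x) := by
        rw [q4, sign_eq_one_iff, eval_mul, mul_pos_iff, ← div_pos_iff, ← e2]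
      by_cases hc : S (Sum.inl (Sum.inr (sv (fun i => F i x) t))) = 1
      · rw [if_pos hc, if_pos hc, if_pos (q5.1 hc)]
        exact ⟨e3, e4⟩
      · rw [if_neg hc, if_neg hc, if_neg (fun h => hc (q5.2 h))]
        exact ⟨e5, e6⟩

/-- A semialgebraic predicate as a condition on signs of polynomials in the first variable. -/
theorem Def.normal {p : Env → Prop} (hp : Def p) : ∃ (ι : Type) (_ : Fintype ι) (F : ι → Env → ℝ[X]) (d : ℕ)
    (P : SV ι → Prop), (∀ i, SAP d (F i)) ∧ ∀ x t, p (cons t x) ↔ P (sv (fun i => F i x) t) := by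
  classical
  obtain ⟨a, ha, h⟩ := hp
  obtain ⟨⟨ι, F, d, hF, N, D, hN, hD, h'⟩⟩ := nf_exists ha
  refine ⟨ι ⊕ SV ι, inferInstance, Sum.elim F (fun s x => N s x * D s x), d + d,
    fun s => s (Sum.inr (s ∘ Sum.inl)) = 1, ?_, ?_⟩
  · rintro (i | i)
    · exact (hF i).mono (by omega)
    · exact (hN i).mul (hD i)
  · intro x t
    rw [h, (h' x t).2]
    have q : (sv (fun i => (Sum.elim F (fun s x => N s x * D s x) i : Env → ℝ[X]) x) t) ∘ Sum.inl =
      sv (fun i => F i x) t := rfl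
    show _ ↔ sg ((N (sv (fun i => F i x) t) x * D (sv (fun i => F i x) t) x).eval t) = 1
    rw [sign_eq_one_iff, eval_mul, div_pos_iff, mul_pos_iff]

/-- Tarski-Seidenberg. -/
theorem Def.ex0 {p : Env → Prop} (hp : Def p) : Def (fun x => ∃ t, p (cons t x)) := by
  obtain ⟨ι, _, F, d, P, hF, h⟩ := hp.normal
  simp only [h, realized]
  exact ((Meas.pi (fun i => meas_ninf (hF i))).pair (W_all d ι F hF)).def_of
    (fun v => P v.1 ∨ ∃ w ∈ v.2, P w.1 ∨ P w.2)

theorem Def.ex {q : Env → ℝ → Prop} (h : Def (fun z => q (PE.tl z) (z 0))) : Def (fun x => ∃ t, q x t) := 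
  h.ex0

theorem Def.all {q : Env → ℝ → Prop} (h : Def (fun z => q (PE.tl z) (z 0))) : Def (fun x => ∀ t, q x t) := 
  (Def.ex (q := fun x t => ¬ q x t) h.not).not.congr (by simp)

/-- Uniform finiteness. -/
theorem Def.pieces {p : Env → Prop} (hp : Def p) : ∃ K : ℕ, ∀ x, ∃ S : Finset ℝ, S.card ≤ K ∧
    ∀ a b, a ≤ b → (∀ c ∈ S, ¬ (a ≤ c ∧ c ≤ b)) → (p (cons a x) ↔ p (cons b x)) := by
  obtain ⟨ι, _, F, d, P, hF, h⟩ := hp.normal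
  refine ⟨Fintype.card ι * d, fun x => ⟨rts (fun i => F i x), ?_, ?_⟩⟩
  · refine Finset.card_biUnion_le.trans ?_
    refine (Finset.sum_le_card_nsmul _ _ d (fun i _ => ?_)).trans (by simp)
    exact (Multiset.toFinset_card_le _).trans ((card_roots' _).trans ((hF i).1 x))
  · intro a b hab hc
    have : sv (fun i => F i x) a = sv (fun i => F i x) b := by
      funext i
      by_cases hi : F i x = 0
      · simp [sv, hi]
      · exact sign_const _ hab (fun t ht h0 => hc t (mem_rts.2 ⟨i, hi, h0⟩) ht)
    rw [h, h, this]

end PE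

end

section
open Polynomial Topology Filter MeasureTheory
open scoped ENNReal
set_option linter.unusedVariables false

namespace PE

/-- Prepend a vector. -/
def app : {n : ℕ} → (Fin n → ℝ) → Env → Env
  | 0, _, x => x
  | _ + 1, u, x => cons (u 0) (app (Fin.tail u) x)

theorem app_add {n : ℕ} (u : Fin n → ℝ) (x : Env) (k : ℕ) : app u x (k + n) = x k := by
  induction n with
  | zero => rfl
  | succ n ih => exact ih (Fin.tail u)

theorem app_fin {n : ℕ} (u : Fin n → ℝ) (x : Env) (i : Fin n) : app u x i = u i := by
  induction n with
  | zero => exact i.elim0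
  | succ n ih =>
    refine Fin.cases rfl (fun i => ?_) i
    exact ih (Fin.tail u) i

theorem measurable_cons : Measurable (fun p : ℝ × Env => cons p.1 p.2) := by
  refine measurable_pi_iff.2 (fun n => ?_)
  cases n with
  | zero => exact measurable_fst
  | succ n => exact (measurable_pi_apply n).comp measurable_snd

theorem measurable_app {n : ℕ} (x : Env) : Measurable (fun u : Fin n → ℝ => app u x) := by
  refine measurable_pi_iff.2 (fun k => ?_)
  by_cases h : k < n
  · have : (fun u : Fin n → ℝ => app u x k) = fun u => u ⟨k, h⟩ := by
      funext u; exact app_fin u x ⟨k, h⟩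
    rw [this]; exact measurable_pi_apply _
  · have : (fun u : Fin n → ℝ => app u x k) = fun u => x (k - n) := by
      funext u
      obtain ⟨m, rfl⟩ := Nat.exists_eq_add_of_le (not_lt.1 h)
      rw [add_comm, app_add]; simp
    rw [this]; exact measurable_const

theorem Def.all_app {p : Env → Prop} (n : ℕ) (hp : Def p) : Def (fun x => ∀ u : Fin n → ℝ, p (app u x)) := by
  induction n generalizing p with
  | zero => exact hp.congr (fun x => ⟨fun h => h Fin.elim0, fun h u => h⟩)
  | succ n ih =>
    have h1 : Def (fun x => ∀ t, p (cons t x)) := Def.all (q := fun x t => p (cons t x)) (by simpa [cons_tl] using hp)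
    refine (ih h1).congr (fun x => ⟨fun h u t => ?_, fun h u => h _ _⟩)
    have := h (Fin.cons t u)
    simpa [app] using this

theorem Def.all_vec {n : ℕ} {q : Env → (Fin n → ℝ) → Prop} (h : Def (fun z => q (fun k => z (k + n)) (fun i => z i))) :
    Def (fun x => ∀ u, q x u) :=
  (Def.all_app n h).congr (fun x => by simp [app_add, app_fin])

def SAE (e : Env → Env) : Prop := ∀ i, SA (fun z => e z i)

theorem SAE.id : SAE (fun z => z) := fun i => SA.coord i
theorem SAE.tl {e : Env → Env} (h : SAE e) : SAE (fun z => tl (e z)) := fun i => h (i + 1)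
theorem SAE.cons {e : Env → Env} {a : Env → ℝ} (ha : SA a) (h : SAE e) : SAE (fun z => cons (a z) (e z)) := by
  intro i
  cases i with
  | zero => exact ha
  | succ i => exact h i
theorem Def.sub {p : Env → Prop} (hp : Def p) {e : Env → Env} (he : SAE e) : Def (fun z => p (e z)) :=
  hp.subst he
theorem SA.sub' {p : Env → ℝ} (hp : SA p) {e : Env → Env} (he : SAE e) : SA (fun z => p (e z)) :=
  hp.subst he

/-- Semialgebraic sets of vectors. -/
def DefS {n : ℕ} (D : Set (Fin n → ℝ)) : Prop := Def (fun z => (fun i : Fin n => z i) ∈ D)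

theorem DefS.sub {n : ℕ} {D : Set (Fin n → ℝ)} (h : DefS D) {e : Fin n → Env → ℝ} (he : ∀ i, SA (e i)) :
    Def (fun z => (fun i => e i z) ∈ D) := by
  classical
  have := Def.sub h (e := fun z k => if h : k < n then e ⟨k, h⟩ z else 0) (by
    intro i
    by_cases hi : i < n
    · simpa [hi] using he _
    · simpa [hi] using SA.zero)
  simpa using this

/-- Strict superlevel sets are semialgebraic. -/
def SupL (g : Env → ℝ≥0∞) (z : Env) : Prop := 0 ≤ z 0 ∧ ENNReal.ofReal (z 0) < g (tl z)
def DefF (g : Env → ℝ≥0∞) : Prop := Def (SupL g)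

theorem DefF.measurable {g : Env → ℝ≥0∞} (h : DefF g) : Measurable g := by
  refine measurable_of_Ioi (fun a => ?_)
  by_cases ha : a = ⊤
  · simp [ha]
  have : g ⁻¹' Set.Ioi a = (fun x => cons a.toReal x) ⁻¹' {z | SupL g z} := by
    ext x
    simp [SupL, ENNReal.ofReal_toReal ha]
  rw [this]
  exact (measurable_cons.comp (measurable_const.prodMk measurable_id)) h.measurableSet

noncomputable def ν : Measure ℝ := volume.restrict (Set.Ioo (-1) 1)
instance : IsFiniteMeasure ν := by unfold ν; infer_instance
theorem ν_univ : ν Set.univ = 2 := by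
  rw [ν, Measure.restrict_apply_univ, Real.volume_Ioo]; norm_num

noncomputable def J (g : Env → ℝ≥0∞) (x : Env) : ℝ≥0∞ := ∫⁻ u, g (cons u x) ∂ν

theorem J_measurable {g : Env → ℝ≥0∞} (h : Measurable g) : Measurable (J g) := by
  unfold J
  exact Measurable.lintegral_prod_right' (f := fun p : Env × ℝ => g (cons p.2 p.1))
    (h.comp (measurable_cons.comp measurable_swap))

theorem J_mono {g h : Env → ℝ≥0∞} (e : ∀ x, g x ≤ h x) (x : Env) : J g x ≤ J h x := lintegral_mono (fun u => e _)

theorem J_iter {g : Env → ℝ≥0∞} (h : Measurable g) (n : ℕ) (x : Env) :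
    J^[n] g x = ∫⁻ u : Fin n → ℝ, g (app u x) ∂(Measure.pi (fun _ => ν)) := by
  induction n generalizing g with
  | zero =>
    simp [app]
  | succ n ih =>
    rw [Function.iterate_succ_apply, ih (J_measurable h)]
    have mp := measurePreserving_piFinSuccAbove (fun _ : Fin (n + 1) => ν) 0
    have hm : Measurable (fun p : ℝ × (Fin n → ℝ) => g (cons p.1 (app p.2 x))) :=
      h.comp (measurable_cons.comp (measurable_fst.prodMk ((measurable_app x).comp measurable_snd)))
    have := mp.lintegral_comp hm
    have e : (∫⁻ u : Fin (n + 1) → ℝ, g (app u x) ∂(Measure.pi (fun _ => ν))) = 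
       ∫⁻ p : ℝ × (Fin n → ℝ), g (cons p.1 (app p.2 x)) ∂(ν.prod (Measure.pi (fun _ => ν))) := by
      rw [← this]
      rfl
    rw [e, lintegral_prod_symm' _ hm]
    rfl

/-- Definable lower bound for `J`. -/
def LC (g : Env → ℝ≥0∞) (x : Env) (l a b : ℝ) : Prop :=
  -1 ≤ a ∧ a < b ∧ b ≤ 1 ∧ 0 < l ∧ ∀ u, a < u → u < b → SupL g (cons l (cons u x))
noncomputable def Lm (g : Env → ℝ≥0∞) (x : Env) : ℝ≥0∞ :=
  ⨆ (l : ℝ) (a : ℝ) (b : ℝ) (_ : LC g x l a b), ENNReal.ofReal (l * (b - a))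

theorem Lm_le_J (g : Env → ℝ≥0∞) (x : Env) : Lm g x ≤ J g x := by
  refine iSup_le fun l => iSup_le fun a => iSup_le fun b => iSup_le fun ⟨h1, h2, h3, h4, h5⟩ => ?_
  calc ENNReal.ofReal (l * (b - a)) = ∫⁻ u in Set.Ioo a b, ENNReal.ofReal l := by
        rw [setLIntegral_const, Real.volume_Ioo, ENNReal.ofReal_mul h4.le]
    _ ≤ ∫⁻ u in Set.Ioo a b, g (cons u x) := setLIntegral_mono' measurableSet_Ioo (fun u hu => (h5 u hu.1 hu.2).2.le)
    _ ≤ J g x := lintegral_mono' (Measure.restrict_mono (Set.Ioo_subset_Ioo h1 h3) le_rfl) le_rfl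

theorem J_const_le {g : Env → ℝ≥0∞} {M : ℝ≥0∞} (h : ∀ x, g x ≤ M) (x : Env) : J g x ≤ 2 * M := by
  refine (lintegral_mono (fun u => h _)).trans ?_
  rw [lintegral_const, ν_univ, mul_comm]

theorem Lm_iter_le (g : Env → ℝ≥0∞) (n : ℕ) (x : Env) : Lm^[n] g x ≤ J^[n] g x := by
  induction n generalizing x with
  | zero => exact le_rfl
  | succ n ih =>
    rw [Function.iterate_succ_apply', Function.iterate_succ_apply']
    exact (Lm_le_J _ _).trans (J_mono ih x)

theorem DefF.Lm {g : Env → ℝ≥0∞} (h : DefF g) : DefF (Lm g) := by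
  have key : Def (fun z => 0 ≤ z 0 ∧ ∃ l a b, LC g (PE.tl z) l a b ∧ z 0 < l * (b - a)) := by
    refine (Def.le SA.zero (SA.coord 0)).and ?_
    refine Def.ex ?_
    refine Def.ex ?_
    refine Def.ex ?_
    refine Def.and ?_ (Def.lt (SA.coord 3) ((SA.coord 2).mul ((SA.coord 0).sub (SA.coord 1))))
    refine Def.and (Def.le SA.one.neg (SA.coord 1)) ?_
    refine Def.and (Def.lt (SA.coord 1) (SA.coord 0)) ?_
    refine Def.and (Def.le (SA.coord 0) SA.one) ?_
    refine Def.and (Def.lt SA.zero (SA.coord 2)) ?_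
    refine Def.all ?_
    refine Def.imp (Def.lt (SA.coord 2) (SA.coord 0)) ?_
    refine Def.imp (Def.lt (SA.coord 0) (SA.coord 1)) ?_
    exact Def.sub h (((SAE.id.tl.tl.tl.tl.tl).cons (SA.coord 0)).cons (SA.coord 3))
  refine key.congr (fun z => ?_)
  unfold SupL
  refine and_congr_right (fun h0 => ?_)
  simp only [PE.Lm, lt_iSup_iff, exists_prop]
  simp only [ENNReal.ofReal_lt_ofReal_iff_of_nonneg h0]

/-- Measure of a union of few intervals. -/
theorem few {p : ℝ → Prop} {l : ℝ≥0∞} (S : Finset ℝ) (a b : ℝ)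
    (hl : ∀ c d, a ≤ c → c < d → d ≤ b → (∀ u, c < u → u < d → p u) → ENNReal.ofReal (d - c) ≤ l)
    (hS : ∀ c d, a < c → c ≤ d → d < b → (∀ s ∈ S, ¬ (c ≤ s ∧ s ≤ d)) → (p c ↔ p d)) :
    volume ({u | p u} ∩ Set.Ioo a b) ≤ 2 ^ S.card * l := by
  induction S using Finset.induction_on generalizing a b with
  | empty =>
    simp only [Finset.card_empty, pow_zero, one_mul]
    by_cases h : ∃ u, p u ∧ a < u ∧ u < b
    · obtain ⟨u, h1, h2, h3⟩ := h
      refine (measure_mono Set.inter_subset_right).trans ?_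
      rw [Real.volume_Ioo]
      refine hl a b le_rfl (h2.trans h3) le_rfl (fun v h4 h5 => ?_)
      rcases le_total u v with h6 | h6
      · exact (hS u v h2 h6 h5 (by simp)).1 h1
      · exact (hS v u h4 h6 h3 (by simp)).2 h1
    · have : {u | p u} ∩ Set.Ioo a b = ∅ := by
        ext u; simp only [Set.mem_inter_iff, Set.mem_ofPred_eq, Set.mem_Ioo, Set.mem_empty_iff_false, iff_false]
        exact fun h' => h ⟨u, h'⟩
      simp [this]
  | insert s S hs ih =>
    rw [Finset.card_insert_of_notMem hs, pow_succ]
    by_cases h : a < s ∧ s < b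
    · have e : {u | p u} ∩ Set.Ioo a b ⊆ ({u | p u} ∩ Set.Ioo a s) ∪ ({u | p u} ∩ Set.Ioo s b) ∪ {s} := by
        rintro u ⟨h1, h2, h3⟩
        rcases lt_trichotomy u s with h4 | h4 | h4
        · exact Or.inl (Or.inl ⟨h1, h2, h4⟩)
        · exact Or.inr h4
        · exact Or.inl (Or.inr ⟨h1, h4, h3⟩)
      refine (measure_mono e).trans ((measure_union_le _ _).trans ?_)
      rw [Real.volume_singleton, add_zero]
      refine (measure_union_le _ _).trans ?_
      refine (add_le_add (ih a s ?_ ?_) (ih s b ?_ ?_)).trans (le_of_eq (by ring))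
      · exact fun c d h1 h2 h3 => hl c d h1 h2 (h3.trans h.2.le)
      · intro c d h1 h2 h3 h4
        refine hS c d h1 h2 (h3.trans h.2) ?_
        intro t ht
        rcases Finset.mem_insert.1 ht with rfl | ht
        · rintro ⟨h5, h6⟩; linarith
        · exact h4 t ht
      · exact fun c d h1 h2 h3 => hl c d (h.1.le.trans h1) h2 h3
      · intro c d h1 h2 h3 h4
        refine hS c d (h.1.trans h1) h2 h3 ?_
        intro t ht
        rcases Finset.mem_insert.1 ht with rfl | ht
        · rintro ⟨h5, h6⟩; linarith
        · exact h4 t ht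
    · refine (ih a b hl ?_).trans ?_
      · intro c d h1 h2 h3 h4
        refine hS c d h1 h2 h3 ?_
        intro t ht
        rcases Finset.mem_insert.1 ht with rfl | ht
        · rintro ⟨h5, h6⟩; exact h ⟨by linarith, by linarith⟩
        · exact h4 t ht
      · rw [mul_assoc]
        gcongr
        rw [two_mul]; exact le_self_add

theorem level {g : Env → ℝ≥0∞} (h : DefF g) : ∃ K : ℕ, ∀ x (l : ℝ), 0 < l →
    ENNReal.ofReal l * ν {u | ENNReal.ofReal l < g (cons u x)} ≤ K * Lm g x := by
  have h1 : Def (fun z => SupL g (cons (z 1) (cons (z 0) (tl (tl z))))) :=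
    Def.sub h (((SAE.id.tl.tl).cons (SA.coord 0)).cons (SA.coord 1))
  obtain ⟨K, hK⟩ := h1.pieces
  refine ⟨2 ^ K, fun x l hl => ?_⟩
  obtain ⟨S, hS, h2⟩ := hK (cons l x)
  simp only [cons_zero, tl_cons] at h2
  have e : {u | ENNReal.ofReal l < g (cons u x)} = {u | SupL g (cons l (cons u x))} := by
    ext u; simp [SupL, hl.le]
  have hl0 : ENNReal.ofReal l ≠ 0 := by simpa using hl
  rw [e, ν, Measure.restrict_apply' measurableSet_Ioo]
  have := few (p := fun u => SupL g (cons l (cons u x))) (l := Lm g x / ENNReal.ofReal l) S (-1) 1 ?_ ?_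
  · calc _ ≤ ENNReal.ofReal l * (2 ^ S.card * (Lm g x / ENNReal.ofReal l)) := by gcongr
      _ = 2 ^ S.card * (ENNReal.ofReal l * (Lm g x / ENNReal.ofReal l)) := by ring
      _ = 2 ^ S.card * Lm g x := by rw [ENNReal.mul_div_cancel hl0 ENNReal.ofReal_ne_top]
      _ ≤ _ := by
        push_cast
        gcongr
        norm_num
  · intro c d h3 h4 h5 h6
    rw [ENNReal.le_div_iff_mul_le (Or.inl hl0) (Or.inl ENNReal.ofReal_ne_top), mul_comm, ← ENNReal.ofReal_mul hl.le]
    refine le_iSup_of_le l (le_iSup_of_le c (le_iSup_of_le d (le_iSup_of_le ⟨h3, h4, h5, hl, h6⟩ le_rfl)))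
  · intro c d _ h3 _ h4
    exact h2 c d h3 h4

theorem dyadic (M y : ℝ≥0∞) (hM : M ≠ ⊤) (hy : y ≤ M) (L : ℕ) :
    y ≤ M * 2⁻¹ ^ L + ∑ i ∈ Finset.range L, (if M * 2⁻¹ ^ (i + 1) < y then M * 2⁻¹ ^ i else 0) := by
  induction L with
  | zero => simpa using hy
  | succ L ih =>
    rw [Finset.sum_range_succ]
    by_cases h : M * 2⁻¹ ^ (L + 1) < y
    · rw [if_pos h]
      refine ih.trans ?_
      rw [add_comm (M * 2⁻¹ ^ L), ← add_assoc, add_comm (M * 2⁻¹ ^ (L + 1))]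
      gcongr
      exact le_self_add
    · exact (not_lt.1 h).trans le_self_add

theorem J_le {g : Env → ℝ≥0∞} (h : DefF g) {M : ℝ} (hM : 0 < M) (hg : ∀ x, g x ≤ ENNReal.ofReal M) :
    ∃ K : ℕ, ∀ x (L : ℕ), J g x ≤ K * (2⁻¹ ^ L + L * Lm g x) := by
  obtain ⟨K, hK⟩ := level h
  refine ⟨⌈2 * M⌉₊ + 2 * K, fun x L => ?_⟩
  have hmeas : ∀ l : ℝ≥0∞, MeasurableSet {u | l < g (cons u x)} := fun l =>
    measurableSet_lt measurable_const (h.measurable.comp (measurable_cons.comp (measurable_id.prodMk measurable_const)))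
  calc J g x ≤ ∫⁻ u, (ENNReal.ofReal M * 2⁻¹ ^ L + ∑ i ∈ Finset.range L, 
          (if ENNReal.ofReal M * 2⁻¹ ^ (i + 1) < g (cons u x) then ENNReal.ofReal M * 2⁻¹ ^ i else 0)) ∂ν :=
        lintegral_mono (fun u => dyadic _ _ ENNReal.ofReal_ne_top (hg _) L)
    _ = ENNReal.ofReal M * 2⁻¹ ^ L * 2 + ∑ i ∈ Finset.range L, 
          (ENNReal.ofReal M * 2⁻¹ ^ i) * ν {u | ENNReal.ofReal M * 2⁻¹ ^ (i + 1) < g (cons u x)} := by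
        rw [lintegral_add_left measurable_const, lintegral_const, ν_univ, lintegral_finsetSum]
        · congr 1
          refine Finset.sum_congr rfl (fun i _ => ?_)
          rw [← lintegral_indicator_const (hmeas _)]
          refine lintegral_congr (fun u => ?_)
          simp only [Set.indicator, Set.mem_ofPred_eq]
        · intro i _
          exact Measurable.ite (hmeas _) measurable_const measurable_const
    _ ≤ ENNReal.ofReal M * 2⁻¹ ^ L * 2 + ∑ i ∈ Finset.range L, 2 * (K * Lm g x) := by
        refine add_le_add le_rfl (Finset.sum_le_sum (fun i hi => ?_))
        have e : ENNReal.ofReal M * 2⁻¹ ^ (i + 1) = ENNReal.ofReal (M * 2⁻¹ ^ (i + 1)) := by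
          rw [ENNReal.ofReal_mul hM.le, ENNReal.ofReal_pow (by norm_num), ENNReal.ofReal_inv_of_pos (by norm_num)]
          norm_num
        have e2 : ENNReal.ofReal M * 2⁻¹ ^ i = 2 * ENNReal.ofReal (M * 2⁻¹ ^ (i + 1)) := by
          rw [← e, pow_succ, mul_comm (2 : ℝ≥0∞), mul_assoc, mul_assoc, ENNReal.inv_mul_cancel (by norm_num) (by norm_num), mul_one]
        rw [e2, e, mul_assoc]
        exact mul_le_mul_right (hK x _ (by positivity)) _
    _ ≤ _ := by
        rw [Finset.sum_const, Finset.card_range, nsmul_eq_mul]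
        have e3 : ENNReal.ofReal M * 2 ≤ (⌈2 * M⌉₊ : ℝ≥0∞) := by
          rw [← ENNReal.ofReal_natCast, mul_comm, ← ENNReal.ofReal_ofNat, ← ENNReal.ofReal_mul (by norm_num)]
          exact ENNReal.ofReal_le_ofReal (Nat.le_ceil _)
        push_cast
        rw [add_mul, mul_add, mul_add]
        calc _ = (ENNReal.ofReal M * 2) * 2⁻¹ ^ L + 2 * K * (L * Lm g x) := by ring
          _ ≤ (⌈2 * M⌉₊ : ℝ≥0∞) * 2⁻¹ ^ L + 2 * K * (L * Lm g x) := by gcongr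
          _ ≤ _ := by
            gcongr
            · exact le_self_add
            · exact le_add_self

theorem Lm_iter_def {g : Env → ℝ≥0∞} (h : DefF g) (n : ℕ) : DefF (Lm^[n] g) := by
  induction n with
  | zero => exact h
  | succ n ih => rw [Function.iterate_succ_apply']; exact ih.Lm

theorem Lm_iter_bdd {g : Env → ℝ≥0∞} (h : ∀ x, g x ≤ 1) (n : ℕ) (x : Env) : Lm^[n] g x ≤ 2 ^ n := by
  induction n generalizing x with
  | zero => simpa using h x
  | succ n ih =>
    rw [Function.iterate_succ_apply', pow_succ']
    exact (Lm_le_J _ _).trans (J_const_le ih x)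

theorem J_iter_le {g : Env → ℝ≥0∞} (h : DefF g) (hg : ∀ x, g x ≤ 1) (n : ℕ) :
    ∃ C : ℕ, ∀ x (L : ℕ), J^[n] g x ≤ C * (L + 1) ^ n * (2⁻¹ ^ L + Lm^[n] g x) := by
  induction n with
  | zero =>
    refine ⟨1, fun x L => ?_⟩
    simp
  | succ n ih =>
    obtain ⟨C, hC⟩ := ih
    obtain ⟨K, hK⟩ := J_le (Lm_iter_def h n) (M := 2 ^ n) (by positivity) (fun x => by
      refine (Lm_iter_bdd hg n x).trans (le_of_eq ?_)
      rw [ENNReal.ofReal_pow (by norm_num)]; norm_num)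
    refine ⟨C * (2 + K), fun x L => ?_⟩
    rw [Function.iterate_succ_apply', Function.iterate_succ_apply']
    have hC' : (C * (L + 1) ^ n : ℝ≥0∞) ≠ ⊤ := ENNReal.mul_ne_top (by simp) (ENNReal.pow_ne_top (by simp))
    calc _ ≤ ∫⁻ u, C * (L + 1) ^ n * (2⁻¹ ^ L + Lm^[n] g (cons u x)) ∂ν := lintegral_mono (fun u => hC _ L)
      _ = C * (L + 1) ^ n * (2⁻¹ ^ L * 2 + J (Lm^[n] g) x) := by
        rw [lintegral_const_mul' _ _ hC', lintegral_add_left measurable_const, lintegral_const, ν_univ]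
        rfl
      _ ≤ C * (L + 1) ^ n * (2⁻¹ ^ L * 2 + K * (2⁻¹ ^ L + L * Lm (Lm^[n] g) x)) := by
        gcongr
        exact hK x L
      _ ≤ C * (L + 1) ^ n * ((2 + K) * (L + 1) * (2⁻¹ ^ L + Lm (Lm^[n] g) x)) := by
        gcongr
        set A : ℝ≥0∞ := 2⁻¹ ^ L
        set B := Lm (Lm^[n] g) x
        have : (2 + K) * (L + 1) * (A + B) = (A * 2 + K * (A + L * B)) + ((2 * L + K * L) * A + (2 + K + 2 * L) * B) := by ring
        rw [this]
        exact le_self_add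
      _ = _ := by push_cast; ring

end PE

end

section
open Polynomial Topology Filter MeasureTheory
open scoped ENNReal
set_option linter.unusedVariables false

namespace PE
local notation "sg" => SignType.sign

theorem ratl {a : Env → ℝ} (ha : SA a) : ∃ p q : ℝ[X], q ≠ 0 ∧
    ∀ᶠ s in atTop, a (fun _ => s) = p.eval s / q.eval s := by
  induction ha with
  | const c => exact ⟨C (c : ℝ), 1, one_ne_zero, by simp⟩
  | coord i => exact ⟨X, 1, one_ne_zero, by simp⟩
  | add _ _ h1 h2 =>
    obtain ⟨p, q, hq, h⟩ := h1
    obtain ⟨p', q', hq', h'⟩ := h2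
    refine ⟨p * q' + q * p', q * q', mul_ne_zero hq hq', ?_⟩
    filter_upwards [h, h', eventually_atTop_not_isRoot q hq, eventually_atTop_not_isRoot q' hq'] with s e e' z z'
    rw [e, e', div_add_div _ _ z z']; simp
  | mul _ _ h1 h2 =>
    obtain ⟨p, q, hq, h⟩ := h1
    obtain ⟨p', q', hq', h'⟩ := h2
    refine ⟨p * p', q * q', mul_ne_zero hq hq', ?_⟩
    filter_upwards [h, h'] with s e e'
    rw [e, e', div_mul_div_comm]; simp
  | inv _ h1 =>
    obtain ⟨p, q, hq, h⟩ := h1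
    by_cases hp : p = 0
    · refine ⟨0, 1, one_ne_zero, ?_⟩
      filter_upwards [h] with s e
      rw [e, hp]; simp
    · refine ⟨q, p, hp, ?_⟩
      filter_upwards [h] with s e
      rw [e, inv_div]
  | ite _ _ _ h1 h2 h3 =>
    obtain ⟨p, q, hq, h⟩ := h1
    obtain ⟨p', q', hq', h'⟩ := h2
    obtain ⟨p'', q'', hq'', h''⟩ := h3
    by_cases hc : pinf (p * q) = 1
    · refine ⟨p', q', hq', ?_⟩
      filter_upwards [h, h', pinf_spec (p * q)] with s e e' z
      rw [hc, sign_eq_one_iff, eval_mul, mul_pos_iff, ← div_pos_iff, ← e] at z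
      rw [if_pos z, e']
    · refine ⟨p'', q'', hq'', ?_⟩
      filter_upwards [h, h'', pinf_spec (p * q)] with s e e' z
      rw [← z, sign_eq_one_iff, eval_mul, mul_pos_iff, ← div_pos_iff, ← e] at hc
      rw [if_neg hc, e']

theorem growth {a : Env → ℝ} (ha : SA a) : ∃ N : ℕ, ∀ᶠ s in atTop, |a (fun _ => s)| ≤ s ^ N := by
  obtain ⟨p, q, hq, h⟩ := ratl ha
  have h1 : (fun s => p.eval s) =O[atTop] (fun s => (q * X ^ (p.natDegree)).eval s) := by
    refine isBigO_atTop_of_degree_le _ _ ?_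
    rw [degree_mul, degree_X_pow]
    refine degree_le_natDegree.trans ?_
    exact le_add_of_nonneg_left (zero_le_degree_iff.2 hq)
  obtain ⟨c, hc⟩ := h1.bound
  refine ⟨p.natDegree + 1, ?_⟩
  filter_upwards [h, hc, eventually_atTop_not_isRoot q hq, eventually_ge_atTop c, eventually_ge_atTop 0] with s e e1 z hs hs0
  have hq' : 0 < |q.eval s| := abs_pos.2 z
  rw [e, abs_div, div_le_iff₀ hq']
  rw [eval_mul, eval_pow, eval_X, Real.norm_eq_abs, Real.norm_eq_abs, abs_mul, abs_pow, abs_of_nonneg hs0] at e1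
  calc _ ≤ _ := e1
    _ ≤ s * (|q.eval s| * s ^ p.natDegree) := by gcongr
    _ = _ := by ring

theorem root_bound {p : ℝ[X]} {d : ℕ} (hp : p.natDegree ≤ d) (h0 : p ≠ 0) {t : ℝ} (ht : p.eval t = 0) :
    t < 1 + ∑ i ∈ Finset.range (d + 1), |p.coeff i / p.leadingCoeff| := by
  have h := IsRoot.norm_lt_cauchyBound h0 (a := t) ht
  have h1 : ((cauchyBound p : NNReal) : ℝ) ≤ 1 + ∑ i ∈ Finset.range (d + 1), |p.coeff i / p.leadingCoeff| := by
    rw [cauchyBound]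
    push_cast
    rw [add_comm]
    gcongr
    have : ((Finset.range p.natDegree).sup (fun i => ‖p.coeff i‖₊)) / ‖p.leadingCoeff‖₊ ≤
      ∑ i ∈ Finset.range (d + 1), ‖p.coeff i / p.leadingCoeff‖₊ := by
      rw [div_le_iff₀ (by simpa using h0)]
      refine Finset.sup_le (fun i hi => ?_)
      rw [Finset.mem_range] at hi
      rw [← div_le_iff₀ (by simpa using h0), ← nnnorm_div]
      exact Finset.single_le_sum (f := fun i => ‖p.coeff i / p.leadingCoeff‖₊) (by simp) (Finset.mem_range.2 (by omega))
    have := NNReal.coe_le_coe.2 this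
    push_cast at this
    exact this
  have := le_abs_self t
  replace h := NNReal.coe_lt_coe.2 h
  rw [coe_nnnorm, Real.norm_eq_abs] at h
  linarith

theorem ev_sum {ι : Type*} (S : Finset ι) {a : ι → Env → ℝ} (ha : ∀ i, SA (a i)) :
    ∃ N : ℕ, ∀ᶠ s in atTop, ∑ i ∈ S, |a i (fun _ => s)| ≤ s ^ N := by
  classical
  have : SA (fun x => ∑ i ∈ S, (if 0 < a i x then a i x else - a i x)) := 
    SA.sum _ (fun i _ => (ha i).ite (ha i) (ha i).neg)
  obtain ⟨N, h⟩ := growth this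
  refine ⟨N, h.mono (fun s hs => (le_of_eq ?_).trans ((le_abs_self _).trans hs))⟩
  refine Finset.sum_congr rfl (fun i _ => ?_)
  split_ifs with h
  · exact abs_of_pos h
  · exact abs_of_nonpos (not_lt.1 h)

theorem evgrow {p : Env → Prop} (hp : Def p) (h : ∀ s : ℝ, 0 < s → ∀ᶠ R in atTop, p (cons R (fun _ => s))) :
    ∃ N : ℕ, ∀ᶠ s in atTop, ∀ R, s ^ N ≤ R → p (cons R (fun _ => s)) := by
  obtain ⟨ι, _, F, d, P, hF, hP⟩ := hp.normal
  obtain ⟨N, hN⟩ := ev_sum (Finset.univ ×ˢ Finset.range (d + 1)) 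
    (a := fun (v : ι × ℕ) x => (F v.1 x).coeff v.2 / (F v.1 x).leadingCoeff)
    (fun v => ((hF v.1).2 v.2).div (hF v.1).leadingCoeff)
  refine ⟨N + 1, ?_⟩
  filter_upwards [hN, eventually_ge_atTop 2] with s e hs R hR
  have hb : ∀ i t, F i (fun _ => s) ≠ 0 → (F i (fun _ => s)).eval t = 0 → t < R := by
    intro i t h0 ht
    refine (root_bound ((hF i).1 _) h0 ht).trans_le ?_
    rw [Finset.sum_product] at e
    have := Finset.single_le_sum (f := fun i => ∑ k ∈ Finset.range (d + 1), |(F i (fun _ => s)).coeff k / (F i (fun _ => s)).leadingCoeff|)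
      (fun i _ => Finset.sum_nonneg (fun _ _ => abs_nonneg _)) (Finset.mem_univ i)
    have h3 : 1 ≤ s ^ N := one_le_pow₀ (by linarith)
    rw [pow_succ] at hR
    nlinarith
  obtain ⟨R', h1, h2⟩ := ((h s (by linarith)).and (eventually_ge_atTop R)).exists
  rw [hP] at h1 ⊢
  convert h1 using 1
  funext i
  by_cases hi : F i (fun _ => s) = 0
  · simp [sv, hi]
  · exact sign_const _ h2 (fun t ht h0 => absurd (hb i t hi h0) (not_lt.2 ht.1))

end PE

end

section
open Polynomial Topology Filter MeasureTheory
open scoped ENNReal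
set_option linter.unusedVariables false

namespace PE

variable {n : ℕ}

/-- Points of the box of radius `R` whose `1/R`-neighbourhood lies in `D`. -/
def In (D : Set (Fin n → ℝ)) (R : ℝ) : Set (Fin n → ℝ) :=
  {x | (∀ i, -R < x i ∧ x i < R) ∧ ∀ y : Fin n → ℝ, (∀ i, R * (y i - x i) ≤ 1 ∧ -1 ≤ R * (y i - x i)) → y ∈ D}

theorem In_sub (D : Set (Fin n → ℝ)) (R : ℝ) : In D R ⊆ D := fun x hx => hx.2 x (fun i => by simp)

theorem In_mono (D : Set (Fin n → ℝ)) {R R' : ℝ} (h : 0 < R) (hR : R ≤ R') : In D R ⊆ In D R' := by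
  rintro x ⟨h1, h2⟩
  refine ⟨fun i => ⟨by linarith [h1 i], by linarith [h1 i]⟩, fun y hy => h2 y (fun i => ?_)⟩
  obtain ⟨h3, h4⟩ := hy i
  rcases le_total 0 (y i - x i) with h5 | h5
  · constructor <;> nlinarith
  · constructor <;> nlinarith

theorem In_ex {D : Set (Fin n → ℝ)} (hD : IsOpen D) {x : Fin n → ℝ} (hx : x ∈ D) : ∃ k : ℕ, x ∈ In D (k + 1) := by
  obtain ⟨ε, h0, hε⟩ := Metric.isOpen_iff.1 hD x hx
  obtain ⟨k, hk⟩ := exists_nat_gt (∑ i, |x i| + 1 / ε)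
  have h1 : 0 ≤ ∑ i, |x i| := Finset.sum_nonneg (fun i _ => abs_nonneg _)
  have h2 : 0 < 1 / ε := by positivity
  refine ⟨k, fun i => ?_, fun y hy => hε ?_⟩
  · have := Finset.single_le_sum (f := fun i => |x i|) (fun i _ => abs_nonneg _) (Finset.mem_univ i)
    rw [← abs_lt]
    linarith
  · rw [Metric.mem_ball, dist_pi_lt_iff h0]
    intro i
    have h3 := abs_le.2 (hy i).symm
    rw [Real.dist_eq]
    have hk' : 1 / ε < (k + 1 : ℝ) := by linarith
    rw [abs_mul, abs_of_pos (by linarith)] at h3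
    rw [div_lt_iff₀ h0] at hk'
    by_contra h4
    rw [not_lt] at h4
    nlinarith

theorem In_def {D : Set (Fin n → ℝ)} (hD : DefS D) {r : Env → ℝ} (hr : SA r) {e : Fin n → Env → ℝ} (he : ∀ i, SA (e i)) :
    Def (fun z => (fun i => e i z) ∈ In D (r z)) := by
  have sh : SAE (fun z k => z (k + n)) := fun i => SA.coord _
  refine Def.and (Def.all_fin fun i => (Def.lt hr.neg (he i)).and (Def.lt (he i) hr)) ?_
  refine Def.all_vec ?_
  refine Def.imp (Def.all_fin fun i => ?_) hD
  have h : SA (fun z : Env => r (fun k => z (k + n)) * (z i - e i (fun k => z (k + n)))) :=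
    (hr.sub' sh).mul ((SA.coord _).sub ((he i).sub' sh))
  exact (Def.le h SA.one).and (Def.le SA.one.neg h)

theorem In_meas {D : Set (Fin n → ℝ)} (hD : DefS D) (R : ℝ) : MeasurableSet (In D R) := by
  have h : Def (fun z => (fun i : Fin n => z i) ∈ In D (z (0 + n))) := In_def hD (SA.coord _) (fun i => SA.coord _)
  have := (measurable_app (n := n) (fun _ => R)) h.measurableSet
  convert this using 1
  ext u
  simp only [Set.mem_preimage, Set.mem_ofPred_eq, app_fin, app_add]

def Ed (D : Set (Fin n → ℝ)) (R : ℝ) : Set (Fin n → ℝ) := In D (2 * R) \ In D R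

open Classical in
noncomputable def gE (D : Set (Fin n → ℝ)) (z : Env) : ℝ≥0∞ :=
  if (fun i : Fin n => 2 * z (0 + n) * z i) ∈ Ed D (z (0 + n)) then 1 else 0

theorem gE_def {D : Set (Fin n → ℝ)} (hD : DefS D) : DefF (gE D) := by
  have h1 : ∀ i : Fin n, SA (fun z => 2 * z (0 + n) * z i) := fun i => ((SA.nat 2).mul (SA.coord _)).mul (SA.coord _)
  have h2 : Def (fun z => (fun i : Fin n => 2 * z (0 + n) * z i) ∈ Ed D (z (0 + n))) :=
    (In_def hD ((SA.nat 2).mul (SA.coord _)) h1).and (In_def hD (SA.coord _) h1).not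
  have h3 := ((Def.le SA.zero (SA.coord 0)).and (Def.lt (SA.coord 0) SA.one)).and h2.tl
  refine h3.congr (fun z => ?_)
  unfold SupL gE
  rw [and_assoc]
  refine and_congr_right (fun h0 => ?_)
  split_ifs with h
  · simp only [h, and_true]
    rw [← ENNReal.ofReal_one, ENNReal.ofReal_lt_ofReal_iff one_pos]
  · simp only [h, and_false, not_lt_zero]

theorem gE_le (D : Set (Fin n → ℝ)) (z : Env) : gE D z ≤ 1 := by
  unfold gE; split_ifs <;> simp

theorem vol_Ed {D : Set (Fin n → ℝ)} (hD : DefS D) {R : ℝ} (hR : 0 < R) {x : Env} (hx : x 0 = R) :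
    volume (Ed D R) = ENNReal.ofReal ((2 * R) ^ n) * J^[n] (gE D) x := by
  classical
  have hE : MeasurableSet (Ed D R) := (In_meas hD _).diff (In_meas hD _)
  rw [J_iter (gE_def hD).measurable]
  have e1 : (fun u : Fin n → ℝ => gE D (app u x)) = ((fun u : Fin n → ℝ => (2 * R) • u) ⁻¹' Ed D R).indicator 1 := by
    funext u
    simp only [gE, app_add, app_fin, hx, Set.indicator]
    rfl
  have hm : Measurable (fun u : Fin n → ℝ => (2 * R) • u) := measurable_const_smul _
  rw [e1, lintegral_indicator_one (hm hE)]
  have e2 : (Measure.pi (fun _ : Fin n => ν)) = volume.restrict (Set.univ.pi (fun _ => Set.Ioo (-1) 1)) := by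
    unfold ν
    rw [volume_pi, Measure.restrict_pi_pi]
  rw [e2, Measure.restrict_apply (hm hE)]
  have e3 : (fun u : Fin n → ℝ => (2 * R) • u) ⁻¹' Ed D R ∩ Set.univ.pi (fun _ => Set.Ioo (-1) 1) =
      (fun u : Fin n → ℝ => (2 * R) • u) ⁻¹' Ed D R := by
    refine Set.inter_eq_left.2 (fun u hu i _ => ?_)
    have := hu.1.1 i
    simp only [Pi.smul_apply, smul_eq_mul] at this
    constructor <;> nlinarith
  rw [e3, Measure.addHaar_preimage_smul _ (by positivity), ← mul_assoc, ← ENNReal.ofReal_mul (by positivity)]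
  simp only [Module.finrank_fintype_fun_eq_card, Fintype.card_fin]
  rw [abs_of_pos (by positivity), mul_inv_cancel₀ (by positivity)]
  simp

theorem Ed_small {D : Set (Fin n → ℝ)} (hD : DefS D) (ho : IsOpen D) (hv : volume D ≠ ⊤) {ε : ℝ≥0∞} (hε : 0 < ε) :
    ∀ᶠ R in atTop, volume (Ed D R) ≤ ε := by
  have h1 : Tendsto (fun k : ℕ => volume (D \ In D (k + 1))) atTop (𝓝 (volume (⋂ k : ℕ, D \ In D (k + 1)))) := by
    refine tendsto_measure_iInter_atTop (fun k => (ho.measurableSet.diff (In_meas hD _)).nullMeasurableSet) ?_ ?_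
    · intro k l hkl
      refine Set.sdiff_subset_sdiff_right (In_mono D (by positivity) ?_)
      have : (k : ℝ) ≤ l := by exact_mod_cast hkl
      linarith
    · exact ⟨0, ((measure_mono Set.sdiff_subset).trans_lt hv.lt_top).ne⟩
  have h2 : (⋂ k : ℕ, D \ In D (k + 1)) = ∅ := by
    ext x
    simp only [Set.mem_iInter, Set.mem_empty_iff_false, iff_false, not_forall]
    by_cases hx : x ∈ D
    · obtain ⟨k, hk⟩ := In_ex ho hx
      exact ⟨k, fun h => h.2 hk⟩
    · exact ⟨0, fun h => hx h.1⟩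
  rw [h2, measure_empty] at h1
  obtain ⟨k, hk⟩ := (h1.eventually (gt_mem_nhds hε)).exists
  filter_upwards [eventually_ge_atTop ((k : ℝ) + 1)] with R hR
  refine (measure_mono ?_).trans hk.le
  rintro x ⟨h3, h4⟩
  exact ⟨In_sub _ _ h3, fun h5 => h4 (In_mono D (by positivity) hR h5)⟩

theorem Ed_bound {D : Set (Fin n → ℝ)} (hD : DefS D) (ho : IsOpen D) (hv : volume D ≠ ⊤) :
    ∃ C N : ℕ, ∀ᶠ s : ℝ in atTop, ∀ R, s ^ N ≤ R → ∀ L : ℕ,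
      volume (Ed D R) ≤ ENNReal.ofReal (C * (L + 1) ^ n * ((2 * R) ^ n * (1 / 2) ^ L + 1 / s)) := by
  obtain ⟨C, hC⟩ := J_iter_le (gE_def hD) (gE_le D) n
  have hdef : Def (fun z => ¬ SupL (Lm^[n] (gE D)) (cons (1 / (z 1 * (2 * z 0) ^ n)) z)) := by
    refine Def.not (Def.sub (Lm_iter_def (gE_def hD) n) (SAE.cons ?_ SAE.id))
    exact SA.one.div ((SA.coord 1).mul (((SA.nat 2).mul (SA.coord 0)).pow n))
  have hLm : ∀ s R : ℝ, 0 < s → 0 < R → (¬ SupL (Lm^[n] (gE D)) (cons (1 / (s * (2 * R) ^ n)) (cons R (fun _ => s)))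
      ↔ Lm^[n] (gE D) (cons R (fun _ => s)) ≤ ENNReal.ofReal (1 / (s * (2 * R) ^ n))) := by
    intro s R hs hR
    simp only [SupL, cons_zero, tl_cons, not_and, not_lt]
    exact ⟨fun h => h (by positivity), fun h _ => h⟩
  obtain ⟨N, hN⟩ := evgrow hdef (by
    intro s hs
    filter_upwards [Ed_small hD ho hv (ε := ENNReal.ofReal (1 / s)) (by simpa using hs), eventually_gt_atTop 0] with R hR hR0
    refine (hLm s R hs hR0).2 ?_
    refine (Lm_iter_le _ _ _).trans ?_
    rw [vol_Ed hD hR0 (x := cons R (fun _ => s)) rfl] at hR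
    rw [← one_div_mul_one_div, mul_one_div, ENNReal.ofReal_div_of_pos (by positivity),
      ENNReal.le_div_iff_mul_le (Or.inl (by simp; positivity)) (Or.inl ENNReal.ofReal_ne_top), mul_comm]
    exact hR)
  refine ⟨C, N, ?_⟩
  filter_upwards [hN, eventually_gt_atTop 0] with s h hs R hR L
  have hR0 : 0 < R := lt_of_lt_of_le (by positivity) hR
  have h1 := (hLm s R hs hR0).1 (h R hR)
  rw [vol_Ed hD hR0 (x := cons R (fun _ => s)) rfl]
  have h2 := (hC (cons R (fun _ => s)) L).trans (mul_le_mul_right (add_le_add_right h1 _) _)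
  refine (mul_le_mul_right h2 _).trans (le_of_eq ?_)
  have e : (C * (L + 1) ^ n * (2⁻¹ ^ L + ENNReal.ofReal (1 / (s * (2 * R) ^ n))) : ℝ≥0∞) = 
      ENNReal.ofReal (C * (L + 1) ^ n * ((1 / 2) ^ L + (1 / (s * (2 * R) ^ n)))) := by
    rw [ENNReal.ofReal_mul (by positivity), ENNReal.ofReal_mul (by positivity), ENNReal.ofReal_add (by positivity) (by positivity),
      ENNReal.ofReal_pow (by positivity), ENNReal.ofReal_pow (by positivity), ENNReal.ofReal_add (by positivity) (by positivity)]
    congr 3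
    · simp
    · simp
    · rw [one_div, ENNReal.ofReal_inv_of_pos (by norm_num)]; simp
  rw [e, ← ENNReal.ofReal_mul (by positivity)]
  congr 1
  field_simp

theorem poly_exp (k : ℕ) {θ : ℝ} (h0 : 0 < θ) (h1 : θ < 1) : ∃ B : ℝ, 0 ≤ B ∧ ∀ j : ℕ, ((j : ℝ) + 1) ^ k * θ ^ j ≤ B := by
  have h := tendsto_pow_const_mul_const_pow_of_abs_lt_one k (r := θ) (by rwa [abs_of_pos h0])
  obtain ⟨B, hB⟩ := h.bddAbove_range
  have hB0 : ∀ j : ℕ, (j : ℝ) ^ k * θ ^ j ≤ B := fun j => hB ⟨j, rfl⟩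
  have : 0 ≤ B := le_trans (by positivity) (hB0 0)
  refine ⟨B / θ, by positivity, fun j => ?_⟩
  have := hB0 (j + 1)
  rw [le_div_iff₀ h0]
  push_cast at this
  rw [pow_succ] at this
  linarith

theorem Ed_rate {D : Set (Fin n → ℝ)} (hD : DefS D) (ho : IsOpen D) (hv : volume D ≠ ⊤) :
    ∃ (C : ℝ) (j0 : ℕ), 0 ≤ C ∧ ∀ j ≥ j0, volume (Ed D (2 ^ j)) ≤ ENNReal.ofReal (C / ((j + 1) * (j + 2))) := by
  obtain ⟨C, N, h⟩ := Ed_bound hD ho hv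
  set ρ : ℝ := (2 : ℝ) ^ (1 / ((N : ℝ) + 1)) with hρ
  have hρ1 : 1 < ρ := Real.one_lt_rpow (by norm_num) (by positivity)
  have hρN : ρ ^ (N + 1) = 2 := by
    rw [hρ, ← Real.rpow_natCast, ← Real.rpow_mul (by norm_num)]
    push_cast
    rw [one_div_mul_cancel (by positivity), Real.rpow_one]
  have hρ2 : ρ ≤ 2 := by
    rw [← hρN]; exact le_self_pow₀ hρ1.le (by simp)
  obtain ⟨B, hB0, hB⟩ := poly_exp (n + 2) (θ := 1 / ρ) (by positivity) (by rw [div_lt_one (by positivity)]; exact hρ1)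
  have h' := (tendsto_pow_atTop_atTop_of_one_lt hρ1).eventually h
  obtain ⟨j0, hj0⟩ := eventually_atTop.1 h'
  refine ⟨C * (n + 1) ^ n * (2 ^ n + 1) * 2 * B, j0, by positivity, fun j hj => ?_⟩
  refine (hj0 j hj (2 ^ j) ?_ ((n + 1) * j)).trans ?_
  · rw [← hρN, ← pow_mul, ← pow_mul]
    exact pow_le_pow_right₀ hρ1.le (by nlinarith)
  · refine ENNReal.ofReal_le_ofReal ?_
    rw [le_div_iff₀ (by positivity)]
    have e1 : ((2 : ℝ) * 2 ^ j) ^ n * (1 / 2) ^ ((n + 1) * j) = 2 ^ n * (1 / 2) ^ j := by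
      rw [mul_pow, ← pow_mul, add_mul, pow_add, one_mul, mul_comm j n]
      have : (2 : ℝ) ^ (n * j) * (1 / 2) ^ (n * j) = 1 := by rw [← mul_pow]; norm_num
      linear_combination (2 ^ n * (1 / 2) ^ j) * this
    have e2 : ((1 : ℝ) / 2) ^ j ≤ (1 / ρ) ^ j := by
      gcongr
    have e3 : (2 : ℝ) ^ n * (1 / 2) ^ j + 1 / ρ ^ j ≤ (2 ^ n + 1) * (1 / ρ) ^ j := by
      rw [← one_div_pow]
      nlinarith [pow_pos (two_pos (α := ℝ)) n]
    have e4 : ((((n + 1) * j : ℕ) : ℝ) + 1) ^ n ≤ ((n + 1) * (j + 1)) ^ n := by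
      gcongr
      push_cast
      nlinarith
    rw [e1]
    calc _ ≤ C * ((n + 1) * (j + 1)) ^ n * ((2 ^ n + 1) * (1 / ρ) ^ j) * (((j : ℝ) + 1) * (2 * (j + 1))) := by
          gcongr
          linarith
      _ = C * (n + 1) ^ n * (2 ^ n + 1) * 2 * (((j : ℝ) + 1) ^ (n + 2) * (1 / ρ) ^ j) := by
          rw [mul_pow]; ring
      _ ≤ _ := by
          gcongr
          exact hB j

theorem tail {D : Set (Fin n → ℝ)} (hD : DefS D) (ho : IsOpen D) (hv : volume D ≠ ⊤) :
    ∃ C : ℝ, 0 ≤ C ∧ ∀ j : ℕ, (volume D).toReal ≤ (volume (In D (2 ^ j))).toReal + C / (j + 1) := by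
  obtain ⟨C, j0, hC0, hC⟩ := Ed_rate hD ho hv
  have hfin : ∀ R, volume (In D R) ≠ ⊤ := fun R => ((measure_mono (In_sub D R)).trans_lt hv.lt_top).ne
  set v : ℕ → ℝ := fun j => (volume (In D (2 ^ j))).toReal with hvdef
  have step : ∀ j ≥ j0, v (j + 1) + C / (j + 2) ≤ v j + C / (j + 1) := by
    intro j hj
    have h1 : volume (In D (2 ^ (j + 1))) ≤ volume (In D (2 ^ j)) + ENNReal.ofReal (C / ((j + 1) * (j + 2))) := by
      refine le_trans (measure_mono (t := In D (2 ^ j) ∪ Ed D (2 ^ j)) ?_) ((measure_union_le _ _).trans (add_le_add le_rfl (hC j hj)))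
      intro x hx
      by_cases h : x ∈ In D (2 ^ j)
      · exact Or.inl h
      · refine Or.inr ⟨?_, h⟩
        rwa [← pow_succ']
    have h2 := ENNReal.toReal_mono (ENNReal.add_ne_top.2 ⟨hfin _, ENNReal.ofReal_ne_top⟩) h1
    rw [ENNReal.toReal_add (hfin _) ENNReal.ofReal_ne_top, ENNReal.toReal_ofReal (by positivity)] at h2
    have h3 : C / ((j + 1) * (j + 2)) = C / ((j : ℝ) + 1) - C / (j + 2) := by field_simp; ring
    simp only [hvdef]
    linarith
  have anti : ∀ m j, j0 ≤ j → v (j + m) + C / ((j + m : ℕ) + 1) ≤ v j + C / (j + 1) := by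
    intro m j hj
    induction m with
    | zero => simp
    | succ m ih =>
      refine le_trans ?_ ih
      have := step (j + m) (by omega)
      rw [← add_assoc]
      push_cast at this ⊢
      rw [add_assoc _ (1 : ℝ) 1]
      norm_num
      linarith
  have lim : Tendsto v atTop (𝓝 (volume D).toReal) := by
    refine (ENNReal.tendsto_toReal hv).comp ?_
    have h1 : D = ⋃ j : ℕ, In D (2 ^ j) := by
      ext x
      rw [Set.mem_iUnion]
      constructor
      · intro hx
        obtain ⟨k, hk⟩ := In_ex ho hx
        refine ⟨k + 1, In_mono D (by positivity) ?_ hk⟩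
        have : k + 1 < 2 ^ (k + 1) := Nat.lt_two_pow_self
        exact_mod_cast this.le
      · rintro ⟨j, hj⟩; exact In_sub _ _ hj
    have h2 : Monotone (fun j : ℕ => In D (2 ^ j)) := fun i j hij =>
      In_mono D (by positivity) (pow_le_pow_right₀ (by norm_num) hij)
    have := tendsto_measure_iUnion_atTop (μ := volume) h2
    rwa [← h1] at this
  have big : ∀ j ≥ j0, (volume D).toReal ≤ v j + C / (j + 1) := by
    intro j hj
    refine le_of_tendsto ((tendsto_add_atTop_iff_nat j).2 lim) (Eventually.of_forall fun m => ?_)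
    have := anti m j hj
    have h0 : 0 ≤ C / (((j + m : ℕ) : ℝ) + 1) := by positivity
    rw [add_comm m j]
    linarith
  have hV : 0 ≤ (volume D).toReal := ENNReal.toReal_nonneg
  refine ⟨C + (volume D).toReal * (j0 + 1), by positivity, fun j => ?_⟩
  have hv0 : 0 ≤ v j := ENNReal.toReal_nonneg
  rw [add_div]
  have h0 : 0 ≤ C / ((j : ℝ) + 1) := by positivity
  have h1 : 0 ≤ (volume D).toReal * (j0 + 1) / ((j : ℝ) + 1) := by positivity
  by_cases hj : j0 ≤ j
  · have := big j hj
    simp only [hvdef] at *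
    linarith
  · have : (volume D).toReal ≤ (volume D).toReal * (j0 + 1) / ((j : ℝ) + 1) := by
      rw [le_div_iff₀ (by positivity)]
      have : (j : ℝ) ≤ j0 := by exact_mod_cast (not_le.1 hj).le
      gcongr
    simp only [hvdef] at *
    linarith

end PE

end

section
open Polynomial Topology Filter MeasureTheory
open scoped ENNReal
set_option linter.unusedVariables false

namespace PE

variable {n : ℕ}

/-- The closed grid cube number `k` at scale `1/N` lies in `D`. -/
def Good (D : Set (Fin n → ℝ)) (N : ℝ) (k : Fin n → ℝ) : Prop :=
  ∀ y : Fin n → ℝ, (∀ i, k i ≤ N * y i + N * N ∧ N * y i + N * N ≤ k i + 1) → y ∈ D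

theorem Good_def {D : Set (Fin n → ℝ)} (hD : DefS D) : Def (fun z => Good D (z (0 + n)) (fun i => z i)) := by
  refine Def.all_vec ?_
  refine Def.imp (Def.all_fin fun i => ?_) hD
  have h : SA (fun z : Env => z (0 + n + n) * z i + z (0 + n + n) * z (0 + n + n)) :=
    ((SA.coord _).mul (SA.coord _)).add ((SA.coord _).mul (SA.coord _))
  exact (Def.le (SA.coord _) h).and (Def.le h ((SA.coord _).add SA.one))

def Qb (N : ℕ) (k : Fin n → ℕ) : Set (Fin n → ℝ) :=
  Set.univ.pi (fun i => Set.Ico (((k i : ℝ) - N * N) / N) (((k i : ℝ) + 1 - N * N) / N))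

theorem mem_Qb {N : ℕ} (hN : 0 < N) {k : Fin n → ℕ} {y : Fin n → ℝ} :
    y ∈ Qb N k ↔ ∀ i, (k i : ℝ) ≤ N * y i + N * N ∧ N * y i + N * N < k i + 1 := by
  have : (0 : ℝ) < N := by exact_mod_cast hN
  simp only [Qb, Set.mem_pi, Set.mem_univ, true_imp_iff, Set.mem_Ico]
  refine forall_congr' (fun i => ?_)
  rw [div_le_iff₀ this, lt_div_iff₀ this]
  constructor <;> rintro ⟨h1, h2⟩ <;> constructor <;> linarith

theorem vol_Qb {N : ℕ} (hN : 0 < N) (k : Fin n → ℕ) : volume (Qb N k) = ENNReal.ofReal (1 / (N : ℝ) ^ n) := by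
  have : (0 : ℝ) < N := by exact_mod_cast hN
  rw [Qb, volume_pi_pi]
  have : ∀ i, volume (Set.Ico (((k i : ℝ) - N * N) / N) (((k i : ℝ) + 1 - N * N) / N)) = ENNReal.ofReal (1 / N) := by
    intro i
    rw [Real.volume_Ico]
    congr 1
    field_simp
    ring
  simp only [this, Finset.prod_const, Finset.card_univ, Fintype.card_fin]
  rw [← ENNReal.ofReal_pow (by positivity), one_div_pow]

open Classical in
noncomputable def goods (D : Set (Fin n → ℝ)) (N : ℕ) : Finset (Fin n → ℕ) :=
  (Fintype.piFinset (fun _ : Fin n => Finset.range (2 * N * N + 1))).filter (fun k => Good D N (fun i => k i))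

theorem grid {D : Set (Fin n → ℝ)} (hv : volume D ≠ ⊤) {N : ℕ} (hN : 0 < N) :
    (volume (In D N)).toReal ≤ ((goods D N).card : ℝ) / N ^ n ∧ ((goods D N).card : ℝ) / N ^ n ≤ (volume D).toReal := by
  classical
  have hN' : (0 : ℝ) < N := by exact_mod_cast hN
  have hdisj : Set.PairwiseDisjoint (↑(goods D N)) (Qb (n := n) N) := by
    intro k _ l _ hkl
    refine Set.disjoint_left.2 (fun y h1 h2 => hkl ?_)
    rw [mem_Qb hN] at h1 h2
    funext i
    have a1 : (k i : ℝ) < l i + 1 := (h1 i).1.trans_lt (h2 i).2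
    have a2 : (l i : ℝ) < k i + 1 := (h2 i).1.trans_lt (h1 i).2
    norm_cast at a1 a2
    omega
  have hmeas : ∀ k ∈ goods D N, MeasurableSet (Qb (n := n) N k) := fun k _ =>
    MeasurableSet.univ_pi (fun i => measurableSet_Ico)
  have hvol : volume (⋃ k ∈ goods D N, Qb N k) = ENNReal.ofReal (((goods D N).card : ℝ) / N ^ n) := by
    rw [measure_biUnion_finset hdisj hmeas]
    simp only [vol_Qb hN, Finset.sum_const, nsmul_eq_mul]
    rw [div_eq_mul_one_div ((goods D N).card : ℝ), ENNReal.ofReal_mul (by positivity), ENNReal.ofReal_natCast]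
  have hsub : (⋃ k ∈ goods D N, Qb N k) ⊆ D := by
    refine Set.iUnion₂_subset (fun k hk y hy => ?_)
    simp only [goods, Finset.mem_filter] at hk
    rw [mem_Qb hN] at hy
    exact hk.2 y (fun i => ⟨(hy i).1, (hy i).2.le⟩)
  have hsup : In D N ⊆ (⋃ k ∈ goods D N, Qb N k) := by
    rintro x ⟨h1, h2⟩
    have hx0 : ∀ i, 0 ≤ N * x i + N * N := fun i => by nlinarith [h1 i]
    have hk : ∀ i, ((⌊N * x i + N * N⌋₊ : ℕ) : ℝ) ≤ N * x i + N * N ∧ N * x i + N * N < (⌊N * x i + N * N⌋₊ : ℕ) + 1 :=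
      fun i => ⟨Nat.floor_le (hx0 i), Nat.lt_floor_add_one _⟩
    refine Set.mem_iUnion₂.2 ⟨fun i => ⌊N * x i + N * N⌋₊, ?_, (mem_Qb hN).2 hk⟩
    simp only [goods, Finset.mem_filter, Fintype.mem_piFinset]
    refine ⟨fun i => ?_, fun y hy => h2 y (fun i => ?_)⟩
    · rw [Finset.mem_range]
      have : ((⌊N * x i + N * N⌋₊ : ℕ) : ℝ) < ((2 * N * N + 1 : ℕ) : ℝ) := by
        push_cast
        nlinarith [h1 i, hk i]
      exact_mod_cast this
    · have a1 := hk i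
      have a2 := hy i
      constructor <;> linarith
  constructor
  · have := ENNReal.toReal_mono (by rw [hvol]; exact ENNReal.ofReal_ne_top) (measure_mono (μ := volume) hsup)
    rwa [hvol, ENNReal.toReal_ofReal (by positivity)] at this
  · have := ENNReal.toReal_mono hv (measure_mono (μ := volume) hsub)
    rwa [hvol, ENNReal.toReal_ofReal (by positivity)] at this

end PE

end

section
open Polynomial Topology Filter MeasureTheory
open scoped ENNReal
set_option linter.unusedVariables false

namespace PE

/-- Elementary functions of an environment of natural numbers. -/
def ElemE (f : (ℕ → ℕ) → ℕ) : Prop := ∃ (m : ℕ) (g : (Fin m → ℕ) → ℕ), Elem g ∧ ∀ ρ, f ρ = g (fun i => ρ i)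

def ncons (t : ℕ) (ρ : ℕ → ℕ) : ℕ → ℕ := fun n => Nat.casesOn n t ρ

namespace ElemE

theorem congr {f f' : (ℕ → ℕ) → ℕ} (h : ElemE f) (e : ∀ ρ, f' ρ = f ρ) : ElemE f' := by
  obtain ⟨m, g, hg, h⟩ := h
  exact ⟨m, g, hg, fun ρ => (e ρ).trans (h ρ)⟩

theorem lift {f : (ℕ → ℕ) → ℕ} (h : ElemE f) : ∃ m, ∀ M ≥ m, ∃ g : (Fin M → ℕ) → ℕ, Elem g ∧ ∀ ρ, f ρ = g (fun i => ρ i) := by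
  obtain ⟨m, g, hg, h⟩ := h
  refine ⟨m, fun M hM => ⟨fun x => g (fun i => x (Fin.castLE hM i)), Elem.comp hg (fun i => Elem.proj _), fun ρ => h ρ⟩⟩

theorem subst {f : (ℕ → ℕ) → ℕ} (h : ElemE f) {e : ℕ → (ℕ → ℕ) → ℕ} (he : ∀ i, ElemE (e i)) :
    ElemE (fun ρ => f (fun i => e i ρ)) := by
  obtain ⟨m, g, hg, h⟩ := h
  choose k hk using fun i => (he i).lift
  have hM : ∀ i : Fin m, k i ≤ Finset.univ.sup (fun i : Fin m => k i) := fun i => Finset.le_sup (f := fun i : Fin m => k i) (Finset.mem_univ i)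
  choose g' hg' h' using fun i : Fin m => hk i _ (hM i)
  refine ⟨_, fun x => g (fun i => g' i x), Elem.comp hg hg', fun ρ => ?_⟩
  beta_reduce
  rw [h]
  congr 1
  funext i
  exact h' i ρ

theorem var (i : ℕ) : ElemE (fun ρ => ρ i) := ⟨i + 1, fun x => x (Fin.last i), Elem.proj _, fun ρ => by simp⟩
theorem zero : ElemE (fun _ => 0) := ⟨0, fun _ => 0, Elem.zero, fun _ => rfl⟩

theorem op2 {h : (ℕ → ℕ) → ℕ} (hh : ElemE h) {f g : (ℕ → ℕ) → ℕ} (hf : ElemE f) (hg : ElemE g) :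
    ElemE (fun ρ => h (ncons (f ρ) (fun _ => g ρ))) := by
  have := hh.subst (e := fun i ρ => ncons (f ρ) (fun _ => g ρ) i) (by
    intro i
    cases i with
    | zero => exact hf
    | succ i => exact hg)
  exact this

theorem add {f g : (ℕ → ℕ) → ℕ} (hf : ElemE f) (hg : ElemE g) : ElemE (fun ρ => f ρ + g ρ) :=
  op2 (h := fun ρ => ρ 0 + ρ 1) ⟨2, _, Elem.add, fun ρ => rfl⟩ hf hg
theorem mul {f g : (ℕ → ℕ) → ℕ} (hf : ElemE f) (hg : ElemE g) : ElemE (fun ρ => f ρ * g ρ) :=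
  op2 (h := fun ρ => ρ 0 * ρ 1) ⟨2, _, Elem.mul, fun ρ => rfl⟩ hf hg
theorem tsub {f g : (ℕ → ℕ) → ℕ} (hf : ElemE f) (hg : ElemE g) : ElemE (fun ρ => f ρ - g ρ) :=
  op2 (h := fun ρ => ρ 0 - ρ 1) ⟨2, _, Elem.tsub, fun ρ => rfl⟩ hf hg
theorem succ {f : (ℕ → ℕ) → ℕ} (hf : ElemE f) : ElemE (fun ρ => f ρ + 1) :=
  op2 (h := fun ρ => ρ 0 + 1) ⟨1, _, Elem.succ, fun ρ => rfl⟩ hf hf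
theorem const (c : ℕ) : ElemE (fun _ => c) := by
  induction c with
  | zero => exact zero
  | succ c ih => exact ih.succ
theorem pow {f : (ℕ → ℕ) → ℕ} (hf : ElemE f) (n : ℕ) : ElemE (fun ρ => f ρ ^ n) := by
  induction n with
  | zero => simpa using const 1
  | succ n ih => simpa [pow_succ] using ih.mul hf

theorem bsum {f b : (ℕ → ℕ) → ℕ} (hf : ElemE f) (hb : ElemE b) :
    ElemE (fun ρ => ∑ t ∈ Finset.range (b ρ + 1), f (ncons t ρ)) := by
  obtain ⟨m, hm⟩ := hf.lift
  obtain ⟨g, hg, h⟩ := hm (m + 1) (by omega)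
  have h1 : ElemE (fun ρ => ∑ t ∈ Finset.range (ρ 0 + 1), f (ncons t (fun i => ρ (i + 1)))) := by
    refine ⟨m + 1, _, Elem.bsum hg, fun ρ => ?_⟩
    refine Finset.sum_congr rfl (fun t _ => ?_)
    rw [h]
    congr 1
    funext i
    refine Fin.cases rfl (fun i => rfl) i
  exact h1.subst (e := fun i ρ => ncons (b ρ) ρ i) (by
    intro i
    cases i with
    | zero => exact hb
    | succ i => exact var i)

theorem bprod {f b : (ℕ → ℕ) → ℕ} (hf : ElemE f) (hb : ElemE b) :
    ElemE (fun ρ => ∏ t ∈ Finset.range (b ρ + 1), f (ncons t ρ)) := by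
  obtain ⟨m, hm⟩ := hf.lift
  obtain ⟨g, hg, h⟩ := hm (m + 1) (by omega)
  have h1 : ElemE (fun ρ => ∏ t ∈ Finset.range (ρ 0 + 1), f (ncons t (fun i => ρ (i + 1)))) := by
    refine ⟨m + 1, _, Elem.bprod hg, fun ρ => ?_⟩
    refine Finset.prod_congr rfl (fun t _ => ?_)
    rw [h]
    congr 1
    funext i
    refine Fin.cases rfl (fun i => rfl) i
  exact h1.subst (e := fun i ρ => ncons (b ρ) ρ i) (by
    intro i
    cases i with
    | zero => exact hb
    | succ i => exact var i)

theorem elem1 {f : (ℕ → ℕ) → ℕ} (hf : ElemE f) : Elem1 (fun x => f (fun _ => x)) := by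
  obtain ⟨m, g, hg, h⟩ := hf
  unfold Elem1
  simp only [h]
  exact Elem.comp hg (fun i => Elem.proj 0)

end ElemE

def napp : {n : ℕ} → (Fin n → ℕ) → (ℕ → ℕ) → (ℕ → ℕ)
  | 0, _, x => x
  | _ + 1, u, x => ncons (u 0) (napp (Fin.tail u) x)

theorem napp_add {n : ℕ} (u : Fin n → ℕ) (x : ℕ → ℕ) (k : ℕ) : napp u x (k + n) = x k := by
  induction n with
  | zero => rfl
  | succ n ih => exact ih (Fin.tail u)

theorem napp_fin {n : ℕ} (u : Fin n → ℕ) (x : ℕ → ℕ) (i : Fin n) : napp u x i = u i := by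
  induction n with
  | zero => exact i.elim0
  | succ n ih =>
    refine Fin.cases rfl (fun i => ?_) i
    exact ih (Fin.tail u) i

theorem ElemE.sums (n : ℕ) {f b : (ℕ → ℕ) → ℕ} (hf : ElemE f) (hb : ElemE b) :
    ElemE (fun ρ => ∑ k ∈ Fintype.piFinset (fun _ : Fin n => Finset.range (b ρ + 1)), f (napp k ρ)) := by
  induction n generalizing f with
  | zero => exact hf.congr (fun ρ => by simp [napp])
  | succ n ih =>
    have h1 : ElemE (fun ρ => ∑ t ∈ Finset.range (b (fun i => ρ (i + n)) + 1), f (ncons t ρ)) :=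
      hf.bsum (hb.subst (fun i => ElemE.var (i + n)))
    refine (ih h1).congr (fun ρ => ?_)
    simp only [napp_add]
    rw [← Finset.sum_product']
    refine Finset.sum_bij' (fun k _ => (Fin.tail k, k 0)) (fun v _ => Fin.cons v.2 v.1) ?_ ?_ ?_ ?_ ?_
    · intro k hk
      simp only [Fintype.mem_piFinset, Finset.mem_product] at hk ⊢
      exact ⟨fun i => hk i.succ, hk 0⟩
    · intro v hv
      simp only [Fintype.mem_piFinset, Finset.mem_product] at hv ⊢
      exact fun i => Fin.cases hv.2 (fun i => by simpa using hv.1 i) i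
    · intro k hk; exact Fin.cons_self_tail k
    · intro v hv; simp
    · intro k hk; rfl

theorem ElemE.sgn {f : (ℕ → ℕ) → ℕ} (hf : ElemE f) : ElemE (fun ρ => if 0 < f ρ then 1 else 0) :=
  ((const 1).tsub ((const 1).tsub hf)).congr (fun ρ => by
    split_ifs with h
    · omega
    · omega)

theorem ElemE.cond {c f g : (ℕ → ℕ) → ℕ} (hc : ElemE c) (hf : ElemE f) (hg : ElemE g) :
    ElemE (fun ρ => if 0 < c ρ then f ρ else g ρ) :=
  ((hc.sgn.mul hf).add (((const 1).tsub hc.sgn).mul hg)).congr (fun ρ => by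
    split_ifs with h <;> simp)

theorem SA.eval {a : Env → ℝ} (ha : SA a) : ∃ p q r : (ℕ → ℕ) → ℕ, ElemE p ∧ ElemE q ∧ ElemE r ∧
    ∀ ρ : ℕ → ℕ, a (fun i => (ρ i : ℝ)) = ((p ρ : ℝ) - q ρ) / (r ρ + 1) := by
  induction ha with
  | const c =>
    refine ⟨fun _ => c.num.toNat, fun _ => (-c.num).toNat, fun _ => c.den - 1, .const _, .const _, .const _, fun ρ => ?_⟩
    have h1 : ((c.den - 1 : ℕ) : ℝ) + 1 = c.den := by
      have := c.den_pos
      rw [Nat.cast_sub this]; simp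
    have h2 : ((c.num.toNat : ℝ) - ((-c.num).toNat : ℝ)) = (c.num : ℝ) := by
      have : ((c.num.toNat : ℤ) - ((-c.num).toNat : ℤ)) = c.num := by omega
      exact_mod_cast this
    rw [h1, h2, Rat.cast_def]
  | coord i => exact ⟨fun ρ => ρ i, fun _ => 0, fun _ => 0, .var i, .zero, .zero, fun ρ => by simp⟩
  | add _ _ h1 h2 =>
    obtain ⟨p, q, r, hp, hq, hr, h⟩ := h1
    obtain ⟨p', q', r', hp', hq', hr', h'⟩ := h2
    refine ⟨fun ρ => p ρ * (r' ρ + 1) + p' ρ * (r ρ + 1), fun ρ => q ρ * (r' ρ + 1) + q' ρ * (r ρ + 1),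
      fun ρ => r ρ * r' ρ + (r ρ + r' ρ), (hp.mul hr'.succ).add (hp'.mul hr.succ), (hq.mul hr'.succ).add (hq'.mul hr.succ),
      (hr.mul hr').add (hr.add hr'), fun ρ => ?_⟩
    have : (r ρ : ℝ) * r' ρ + (r ρ + r' ρ) + 1 = (r ρ + 1) * (r' ρ + 1) := by ring
    beta_reduce
    rw [h, h']
    push_cast
    rw [this]
    have a1 : (r ρ : ℝ) + 1 ≠ 0 := by positivity
    have a2 : (r' ρ : ℝ) + 1 ≠ 0 := by positivity
    field_simp
    ring
  | mul _ _ h1 h2 =>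
    obtain ⟨p, q, r, hp, hq, hr, h⟩ := h1
    obtain ⟨p', q', r', hp', hq', hr', h'⟩ := h2
    refine ⟨fun ρ => p ρ * p' ρ + q ρ * q' ρ, fun ρ => p ρ * q' ρ + q ρ * p' ρ,
      fun ρ => r ρ * r' ρ + (r ρ + r' ρ), (hp.mul hp').add (hq.mul hq'), (hp.mul hq').add (hq.mul hp'),
      (hr.mul hr').add (hr.add hr'), fun ρ => ?_⟩
    have : (r ρ : ℝ) * r' ρ + (r ρ + r' ρ) + 1 = (r ρ + 1) * (r' ρ + 1) := by ring
    beta_reduce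
    rw [h, h']
    push_cast
    rw [this, div_mul_div_comm]
    ring
  | inv _ h1 =>
    obtain ⟨p, q, r, hp, hq, hr, h⟩ := h1
    refine ⟨fun ρ => if 0 < p ρ - q ρ then r ρ + 1 else 0, fun ρ => if 0 < q ρ - p ρ then r ρ + 1 else 0,
      fun ρ => ((p ρ - q ρ) + (q ρ - p ρ)) - 1, (hp.tsub hq).cond hr.succ .zero, (hq.tsub hp).cond hr.succ .zero,
      ((hp.tsub hq).add (hq.tsub hp)).tsub (.const 1), fun ρ => ?_⟩
    beta_reduce
    rw [h, inv_div]
    rcases lt_trichotomy (p ρ) (q ρ) with hl | hl | hl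
    · have e1 : ¬ (0 < p ρ - q ρ) := by omega
      have e2 : 0 < q ρ - p ρ := by omega
      have e3 : (((p ρ - q ρ) + (q ρ - p ρ) - 1 : ℕ) : ℝ) + 1 = q ρ - p ρ := by
        rw [← Nat.cast_add_one, ← Nat.cast_sub hl.le]
        congr 1
        omega
      simp only [e1, e2, if_true, if_false, e3]
      push_cast
      rw [zero_sub, neg_div, ← div_neg, neg_sub]
    · simp [hl]
    · have e1 : ¬ (0 < q ρ - p ρ) := by omega
      have e2 : 0 < p ρ - q ρ := by omega
      have e3 : (((p ρ - q ρ) + (q ρ - p ρ) - 1 : ℕ) : ℝ) + 1 = p ρ - q ρ := by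
        rw [← Nat.cast_add_one, ← Nat.cast_sub hl.le]
        congr 1
        omega
      simp only [e1, e2, if_true, if_false, e3]
      push_cast
      rw [sub_zero]
  | ite _ _ _ h1 h2 h3 =>
    obtain ⟨p, q, r, hp, hq, hr, h⟩ := h1
    obtain ⟨p', q', r', hp', hq', hr', h'⟩ := h2
    obtain ⟨p'', q'', r'', hp'', hq'', hr'', h''⟩ := h3
    have hc := hp.tsub hq
    refine ⟨_, _, _, hc.cond hp' hp'', hc.cond hq' hq'', hc.cond hr' hr'', fun ρ => ?_⟩
    have e : 0 < ((p ρ : ℝ) - q ρ) / (r ρ + 1) ↔ 0 < p ρ - q ρ := by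
      rw [div_pos_iff_of_pos_right (by positivity), sub_pos, Nat.cast_lt, Nat.sub_pos_iff_lt]
    beta_reduce
    rw [h, h', h'']
    by_cases hh : 0 < p ρ - q ρ
    · rw [if_pos (e.2 hh), if_pos hh, if_pos hh, if_pos hh]
    · rw [if_neg (fun h => hh (e.1 h)), if_neg hh, if_neg hh, if_neg hh]

open Classical in
theorem Def.eval {p : Env → Prop} (hp : Def p) : ElemE (fun ρ => if p (fun i => (ρ i : ℝ)) then 1 else 0) := by
  obtain ⟨a, ha, h⟩ := hp
  obtain ⟨p, q, r, hp, hq, hr, h'⟩ := ha.eval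
  refine (hp.tsub hq).sgn.congr (fun ρ => ?_)
  have e : 0 < ((p ρ : ℝ) - q ρ) / (r ρ + 1) ↔ 0 < p ρ - q ρ := by
    rw [div_pos_iff_of_pos_right (by positivity), sub_pos, Nat.cast_lt, Nat.sub_pos_iff_lt]
  rw [h, h']
  simp only [e]

theorem elem_two_pow : ElemE (fun ρ => 2 ^ (ρ 0 + 1)) :=
  ((ElemE.const 2).bprod (ElemE.var 0)).congr (fun ρ => by simp)

/-- Approximation of volumes. -/
theorem vol_approx {n : ℕ} {D : Set (Fin n → ℝ)} (hD : DefS D) (ho : IsOpen D) (hv : volume D ≠ ⊤) :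
    ∃ (w : (ℕ → ℕ) → ℕ) (C : ℝ), ElemE w ∧ 0 ≤ C ∧ ∀ x : ℕ,
      |(w (fun _ => x) : ℝ) / (2 ^ (x + 1)) ^ n - (volume D).toReal| ≤ C / (x + 1) := by
  classical
  obtain ⟨C, hC0, hC⟩ := tail hD ho hv
  have h1 : ElemE (fun ρ => (if Good D (ρ (0 + n) : ℝ) (fun i : Fin n => (ρ i : ℝ)) then 1 else 0)) := (Good_def hD).eval
  have h2 : ElemE (fun ρ => (goods D (ρ 0)).card) := by
    refine (h1.sums n (((ElemE.const 2).mul (ElemE.var 0)).mul (ElemE.var 0))).congr (fun ρ => ?_)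
    simp only [napp_add, napp_fin]
    rw [goods, Finset.card_filter]
  have h3 : ElemE (fun ρ => (goods D (2 ^ (ρ 0 + 1))).card) :=
    h2.subst (e := fun _ ρ => 2 ^ (ρ 0 + 1)) (fun _ => elem_two_pow)
  refine ⟨_, C, h3, hC0, fun x => ?_⟩
  obtain ⟨g1, g2⟩ := grid (D := D) hv (N := 2 ^ (x + 1)) (by positivity)
  have g3 := hC (x + 1)
  push_cast at g1 g2 g3
  have g4 : C / ((x : ℝ) + 1 + 1) ≤ C / (x + 1) := by
    gcongr
    linarith
  have g5 : 0 ≤ C / ((x : ℝ) + 1) := by positivity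
  rw [abs_le]
  constructor <;> linarith

end PE

end

section
open Polynomial Topology Filter MeasureTheory
open scoped ENNReal
set_option linter.unusedVariables false

namespace PE

theorem SA.aeval {l : ℕ} (P : MvPolynomial (Fin l) ℚ) {e : Fin l → Env → ℝ} (he : ∀ i, SA (e i)) :
    SA (fun z => MvPolynomial.aeval (fun i => e i z) P) := by
  induction P using MvPolynomial.induction_on with
  | C a => simpa using SA.const a
  | add p q hp hq => simpa using hp.add hq
  | mul_X p i hp => simpa using hp.mul (he i)

theorem cont_aeval {l : ℕ} (P : MvPolynomial (Fin l) ℚ) :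
    Continuous (fun x : Fin l → ℝ => MvPolynomial.aeval x P) := by
  induction P using MvPolynomial.induction_on with
  | C a => simpa using continuous_const
  | add p q hp hq => simp only [map_add]; exact hp.add hq
  | mul_X p i hp => simp only [map_mul, MvPolynomial.aeval_X]; exact hp.mul (continuous_apply i)

/-- The region under the graph of `P/Q` over `D`. -/
def Reg {l q : ℕ} (G : Fin q → MvPolynomial (Fin l) ℚ) (P Q : MvPolynomial (Fin l) ℚ) : Set (Fin (l + 1) → ℝ) :=
  {v | (∀ i, 0 < MvPolynomial.aeval (Fin.tail v) (G i)) ∧ 0 < v 0 ∧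
    v 0 * MvPolynomial.aeval (Fin.tail v) Q ^ 2 < MvPolynomial.aeval (Fin.tail v) P * MvPolynomial.aeval (Fin.tail v) Q}

theorem cont_tail {l : ℕ} : Continuous (fun v : Fin (l + 1) → ℝ => Fin.tail v) :=
  continuous_pi (fun i => continuous_apply i.succ)

theorem Reg_def {l q : ℕ} (G : Fin q → MvPolynomial (Fin l) ℚ) (P Q : MvPolynomial (Fin l) ℚ) : DefS (Reg G P Q) := by
  have h : ∀ P : MvPolynomial (Fin l) ℚ, SA (fun z : Env => MvPolynomial.aeval (fun i : Fin l => z (i.succ : Fin (l + 1))) P) :=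
    fun P => SA.aeval P (fun i => SA.coord _)
  exact (Def.all_fin fun i => Def.lt SA.zero (h (G i))).and
    ((Def.lt SA.zero (SA.coord 0)).and (Def.lt ((SA.coord 0).mul ((h Q).pow 2)) ((h P).mul (h Q))))

theorem Reg_open {l q : ℕ} (G : Fin q → MvPolynomial (Fin l) ℚ) (P Q : MvPolynomial (Fin l) ℚ) : IsOpen (Reg G P Q) := by
  have h : ∀ P : MvPolynomial (Fin l) ℚ, Continuous (fun v : Fin (l + 1) → ℝ => MvPolynomial.aeval (Fin.tail v) P) :=
    fun P => (cont_aeval P).comp cont_tail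
  have h1 : IsOpen {v : Fin (l + 1) → ℝ | ∀ i, 0 < MvPolynomial.aeval (Fin.tail v) (G i)} := by
    rw [Set.setOf_forall]
    exact isOpen_iInter_of_finite (fun i => isOpen_lt continuous_const (h _))
  exact h1.inter ((isOpen_lt continuous_const (continuous_apply 0)).inter
    (isOpen_lt ((continuous_apply 0).mul ((h Q).pow 2)) ((h P).mul (h Q))))

theorem Reg_vol {l q : ℕ} (G : Fin q → MvPolynomial (Fin l) ℚ) (P Q : MvPolynomial (Fin l) ℚ)
    (hQ : ∀ x : Fin l → ℝ, (∀ i, 0 < MvPolynomial.aeval x (G i)) → MvPolynomial.aeval x Q ≠ 0) :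
    volume (Reg G P Q) = ∫⁻ x in {x : Fin l → ℝ | ∀ i, 0 < MvPolynomial.aeval x (G i)},
      ENNReal.ofReal (MvPolynomial.aeval x P / MvPolynomial.aeval x Q) := by
  have hDo : IsOpen {x : Fin l → ℝ | ∀ i, 0 < MvPolynomial.aeval x (G i)} := by
    rw [Set.setOf_forall]
    exact isOpen_iInter_of_finite (fun i => isOpen_lt continuous_const (cont_aeval _))
  have hm : Measurable (fun x : Fin l → ℝ => MvPolynomial.aeval x P / MvPolynomial.aeval x Q) :=
    (cont_aeval P).measurable.div (cont_aeval Q).measurable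
  have key := volume_regionBetween_eq_lintegral' (μ := (volume : Measure (Fin l → ℝ))) (f := fun _ => 0)
    measurable_const hm hDo.measurableSet
  have mp : MeasurePreserving (fun v : Fin (l + 1) → ℝ => (Fin.tail v, v 0)) volume
      ((volume : Measure (Fin l → ℝ)).prod volume) :=
    Measure.measurePreserving_swap.comp (volume_preserving_piFinSuccAbove (fun _ : Fin (l + 1) => ℝ) 0)
  have hmeas := measurableSet_regionBetween (f := fun _ => 0) measurable_const hm hDo.measurableSet
  have e : Reg G P Q = (fun v : Fin (l + 1) → ℝ => (Fin.tail v, v 0)) ⁻¹' regionBetween (fun _ => 0)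
      (fun x : Fin l → ℝ => MvPolynomial.aeval x P / MvPolynomial.aeval x Q)
      {x : Fin l → ℝ | ∀ i, 0 < MvPolynomial.aeval x (G i)} := by
    ext v
    simp only [Reg, regionBetween, Set.mem_setOf_eq, Set.mem_preimage, Set.mem_Ioo]
    refine and_congr_right (fun h => and_congr_right (fun _ => ?_))
    have hq := hQ _ h
    have hq2 : 0 < MvPolynomial.aeval (Fin.tail v) Q ^ 2 := by positivity
    rw [← lt_div_iff₀ hq2, pow_two, mul_div_mul_right _ _ hq]
  rw [e, mp.measure_preimage hmeas.nullMeasurableSet, key]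
  refine lintegral_congr (fun x => ?_)
  simp

theorem main {ℓ q : ℕ} (G : Fin q → MvPolynomial (Fin ℓ) ℚ)
    (P Q : MvPolynomial (Fin ℓ) ℚ)
    (hQ : ∀ x : Fin ℓ → ℝ, (∀ i, 0 < MvPolynomial.aeval x (G i)) → MvPolynomial.aeval x Q ≠ 0)
    (hint : MeasureTheory.IntegrableOn
      (fun x => MvPolynomial.aeval x P / MvPolynomial.aeval x Q) {x : Fin ℓ → ℝ | ∀ i, 0 < MvPolynomial.aeval x (G i)})
    (α : ℝ)
    (hα : α = ∫ x in {x : Fin ℓ → ℝ | ∀ i, 0 < MvPolynomial.aeval x (G i)}, MvPolynomial.aeval x P / MvPolynomial.aeval x Q)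
    (hα0 : 0 ≤ α) :
    ElemReal α := by
  have v1 := Reg_vol G P Q hQ
  have v2 := Reg_vol G (-P) Q hQ
  rw [integral_eq_lintegral_pos_part_sub_lintegral_neg_part hint] at hα
  simp only [map_neg, neg_div] at v2
  rw [← v1, ← v2] at hα
  have f1 : volume (Reg G P Q) ≠ ⊤ := by
    rw [v1]; exact hint.lintegral_lt_top.ne
  have f2 : volume (Reg G (-P) Q) ≠ ⊤ := by
    rw [v2]; exact hint.neg.lintegral_lt_top.ne
  obtain ⟨w1, C1, e1, c1, h1⟩ := vol_approx (Reg_def G P Q) (Reg_open G P Q) f1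
  obtain ⟨w2, C2, e2, c2, h2⟩ := vol_approx (Reg_def G (-P) Q) (Reg_open G (-P) Q) f2
  obtain ⟨M, hM⟩ := exists_nat_gt (C1 + C2)
  refine ⟨_, _, _, (e1.tsub e2).elem1, ((elem_two_pow.pow (ℓ + 1)).tsub (ElemE.const 1)).elem1,
    ((ElemE.const M).mul (ElemE.var 0)).elem1, fun k hk x hx => ?_⟩
  have g1 := h1 x
  have g2 := h2 x
  beta_reduce at hx ⊢
  set N : ℝ := (2 ^ (x + 1)) ^ (ℓ + 1) with hN
  have hN0 : 0 < N := by positivity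
  have eN : (((2 ^ (x + 1)) ^ (ℓ + 1) - 1 : ℕ) : ℝ) + 1 = N := by
    rw [Nat.cast_sub (Nat.one_le_pow _ _ (by positivity))]
    push_cast
    rw [hN]; ring
  rw [eN]
  have hk0 : (0 : ℝ) < k := by exact_mod_cast hk
  have hx' : (M : ℝ) * k ≤ x := by exact_mod_cast hx
  have hx0 : (0 : ℝ) ≤ x := by positivity
  have b1 : C1 / ((x : ℝ) + 1) + C2 / (x + 1) < 1 / k := by
    rw [← add_div, div_lt_div_iff₀ (by positivity) hk0]
    nlinarith
  generalize hA : w1 (fun _ => x) = A at *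
  generalize hB : w2 (fun _ => x) = B at *
  generalize (volume (Reg G P Q)).toReal = V1 at *
  generalize (volume (Reg G (-P) Q)).toReal = V2 at *
  rw [abs_le] at g1 g2
  rw [abs_lt]
  rcases le_total B A with hBA | hBA
  · rw [Nat.cast_sub hBA, sub_div]
    constructor <;> linarith
  · have : A - B = 0 := by omega
    rw [this]
    have : (A : ℝ) / N ≤ B / N := by gcongr
    simp only [Nat.cast_zero, zero_div]
    constructor <;> linarith

end PE

end

/-- If `D = {x ∈ ℝ^ℓ | G₁(x) > 0, …, G_q(x) > 0}` with rational
coefficient polynomials `Gᵢ`, `P, Q` are rational-coefficient polynomials with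
`Q` nonvanishing on `D`, and `∫_D P/Q` is absolutely convergent with
nonnegative value `α`, then `α` is an elementary real number. -/
theorem period_elemReal
    (ℓ q : ℕ) (G : Fin q → MvPolynomial (Fin ℓ) ℚ)
    (P Q : MvPolynomial (Fin ℓ) ℚ)
    (D : Set (Fin ℓ → ℝ))
    (hD : D = {x : Fin ℓ → ℝ | ∀ i, 0 < MvPolynomial.aeval x (G i)})
    (hQ : ∀ x ∈ D, MvPolynomial.aeval x Q ≠ 0)
    (hint : MeasureTheory.IntegrableOn
      (fun x => MvPolynomial.aeval x P / MvPolynomial.aeval x Q) D)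
    (α : ℝ)
    (hα : α = ∫ x in D, MvPolynomial.aeval x P / MvPolynomial.aeval x Q)
    (hα0 : 0 ≤ α) :
    ElemReal α := by
  subst hD
  exact PE.main G P Q hQ hint α hα hα0
end

section
/- There exists a computable real number that is not an elementary real number: there exist computable functions a, b, c : ℕ → ℕ and a nonnegative real number α such that |a(x)/(b(x)+1) − α| < 1/k for all k ≥ 1 and all x ≥ c(k), yet α ∉ R_Elem. -/
open Nat.Partrec (Code)

namespace ElemDiag

/-- codes without unbounded search -/
def isPrim (c : Code) : Bool :=
  Code.recOn (motive := fun _ => Bool) c true true true true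
    (fun _ _ a b => a && b) (fun _ _ a b => a && b) (fun _ _ a b => a && b) (fun _ _ => false)

/-- total evaluation of codes without unbounded search -/
def ev : Code → ℕ → ℕ
  | .zero => fun _ => 0
  | .succ => Nat.succ
  | .left => fun n => n.unpair.1
  | .right => fun n => n.unpair.2
  | .pair cf cg => fun n => Nat.pair (ev cf n) (ev cg n)
  | .comp cf cg => fun n => ev cf (ev cg n)
  | .prec cf cg =>
    Nat.unpaired fun z n => n.rec (ev cf z) fun y IH => ev cg <| Nat.pair z <| Nat.pair y IH
  | .rfind' _ => fun _ => 0

theorem eval_eq (c : Code) (h : isPrim c = true) (n : ℕ) : c.eval n = Part.some (ev c n) := by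
  induction c generalizing n with
  | zero => rfl
  | succ => rfl
  | left => rfl
  | right => rfl
  | pair cf cg hf hg =>
    have h' : isPrim cf = true ∧ isPrim cg = true := by simpa [isPrim] using h
    simp [Code.eval, ev, hf h'.1, hg h'.2, Seq.seq]
  | comp cf cg hf hg =>
    have h' : isPrim cf = true ∧ isPrim cg = true := by simpa [isPrim] using h
    show (cg.eval n).bind cf.eval = _
    rw [hg h'.2]
    exact (Part.bind_some _ _).trans (hf h'.1 _)
  | prec cf cg hf hg =>
    have h' : isPrim cf = true ∧ isPrim cg = true := by simpa [isPrim] using h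
    simp only [Code.eval, ev, Nat.unpaired]
    induction n.unpair.2 with
    | zero => simp [hf h'.1]
    | succ m ih =>
      refine (congrArg (fun z => Part.bind z _) ih).trans ?_
      exact (Part.bind_some _ _).trans (hg h'.2 _)
  | rfind' cf _ => simp [isPrim] at h

theorem exists_code_of_primrec {f : ℕ → ℕ} (hf : Nat.Primrec f) :
    ∃ c : Code, isPrim c = true ∧ ev c = f := by
  induction hf with
  | zero => exact ⟨.zero, rfl, rfl⟩
  | succ => exact ⟨.succ, rfl, rfl⟩
  | left => exact ⟨.left, rfl, rfl⟩
  | right => exact ⟨.right, rfl, rfl⟩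
  | pair _ _ h1 h2 =>
    obtain ⟨c, hc, rfl⟩ := h1
    obtain ⟨d, hd, rfl⟩ := h2
    exact ⟨.pair c d, by simpa [isPrim] using And.intro hc hd, rfl⟩
  | comp _ _ h1 h2 =>
    obtain ⟨c, hc, rfl⟩ := h1
    obtain ⟨d, hd, rfl⟩ := h2
    exact ⟨.comp c d, by simpa [isPrim] using And.intro hc hd, rfl⟩
  | prec _ _ h1 h2 =>
    obtain ⟨c, hc, rfl⟩ := h1
    obtain ⟨d, hd, rfl⟩ := h2
    exact ⟨.prec c d, by simpa [isPrim] using And.intro hc hd, rfl⟩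

theorem primrec_isPrim : Primrec isPrim := by
  have hand : Primrec fun a : Code × Code × Code × Bool × Bool => (a.2.2.2.1 && a.2.2.2.2) :=
    Primrec.and.comp (Primrec.fst.comp <| Primrec.snd.comp <| Primrec.snd.comp Primrec.snd)
      (Primrec.snd.comp <| Primrec.snd.comp <| Primrec.snd.comp Primrec.snd)
  exact Code.primrec_recOn (α := Code) (σ := Bool) Primrec.id
    (Primrec.const true) (Primrec.const true) (Primrec.const true) (Primrec.const true)
    (pr := fun _ _ _ a b => a && b) hand (co := fun _ _ _ a b => a && b) hand
    (pc := fun _ _ _ a b => a && b) hand (rf := fun _ _ _ => false) (Primrec.const false)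

/-- the universal function -/
def U (m n : ℕ) : ℕ :=
  bif isPrim (Denumerable.ofNat Code m) then ev (Denumerable.ofNat Code m) n else 0

theorem computable_U : Computable₂ U := by
  have hc : Computable fun p : ℕ × ℕ => Denumerable.ofNat Code p.1 :=
    (Computable.ofNat _).comp Computable.fst
  have h := Partrec.cond (c := fun p : ℕ × ℕ => isPrim (Denumerable.ofNat Code p.1))
    (primrec_isPrim.to_comp.comp hc) (Code.eval_part.comp hc Computable.snd)
    (g := fun _ => Part.some 0) (Computable.const 0)
  refine Partrec.of_eq h fun p => ?_
  cases hp : isPrim (Denumerable.ofNat Code p.1) with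
  | true => simp [U, hp, eval_eq _ hp]
  | false => simp [U, hp]

theorem exists_U {f : ℕ → ℕ} (hf : Primrec f) : ∃ m, ∀ n, U m n = f n := by
  obtain ⟨c, hc, rfl⟩ := exists_code_of_primrec (Primrec.nat_iff.1 hf)
  exact ⟨Encodable.encode c, fun n => by simp [U, hc]⟩

theorem primrec_of_elem {n : ℕ} {f : (Fin n → ℕ) → ℕ} (hf : Elem f) :
    Primrec fun v : List.Vector ℕ n => f v.get := by
  induction hf with
  | zero => exact Primrec.const 0
  | succ => exact Primrec.succ.comp (Primrec.vector_get.comp Primrec.id (Primrec.const 0))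
  | proj i => exact Primrec.vector_get.comp Primrec.id (Primrec.const i)
  | add =>
    exact Primrec.nat_add.comp (Primrec.vector_get.comp Primrec.id (Primrec.const 0))
      (Primrec.vector_get.comp Primrec.id (Primrec.const 1))
  | mul =>
    exact Primrec.nat_mul.comp (Primrec.vector_get.comp Primrec.id (Primrec.const 0))
      (Primrec.vector_get.comp Primrec.id (Primrec.const 1))
  | tsub =>
    exact Primrec.nat_sub.comp (Primrec.vector_get.comp Primrec.id (Primrec.const 0))
      (Primrec.vector_get.comp Primrec.id (Primrec.const 1))
  | comp _ _ hf hg =>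
    refine (hf.comp (Primrec.vector_ofFn hg)).of_eq fun v => ?_
    congr 1
    funext i
    simp
  | @bsum n f _ hf =>
    have hF : Primrec fun p : List.Vector ℕ (n + 1) × ℕ × ℕ =>
        p.2.2 + f (List.Vector.get (p.2.1 ::ᵥ p.1.tail)) :=
      Primrec.nat_add.comp (Primrec.snd.comp Primrec.snd)
        (hf.comp (Primrec.vector_cons.comp (Primrec.fst.comp Primrec.snd)
          (Primrec.vector_tail.comp Primrec.fst)))
    refine (Primrec.nat_rec' (Primrec.succ.comp Primrec.vector_head) (Primrec.const 0)
      (h := fun (v : List.Vector ℕ (n + 1)) p =>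
        p.2 + f (List.Vector.get (p.1 ::ᵥ v.tail))) (Primrec₂.mk hF)).of_eq fun v => ?_
    have key : ∀ t : ℕ, List.Vector.get (t ::ᵥ v.tail)
        = (Fin.cons t (fun i => v.get i.succ) : Fin (n + 1) → ℕ) := by
      intro t; funext i
      refine Fin.cases ?_ (fun j => ?_) i <;> simp
    simp only [key, List.Vector.get_zero]
    have main : ∀ m : ℕ, Nat.rec (motive := fun _ => ℕ) 0
        (fun t s => s + f (Fin.cons t (fun i => v.get i.succ))) m
        = ∑ t ∈ Finset.range m, f (Fin.cons t (fun i => v.get i.succ)) := by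
      intro m
      induction m with
      | zero => rfl
      | succ m ih => rw [Finset.sum_range_succ, ← ih]
    exact main (v.head + 1)
  | @bprod n f _ hf =>
    have hF : Primrec fun p : List.Vector ℕ (n + 1) × ℕ × ℕ =>
        p.2.2 * f (List.Vector.get (p.2.1 ::ᵥ p.1.tail)) :=
      Primrec.nat_mul.comp (Primrec.snd.comp Primrec.snd)
        (hf.comp (Primrec.vector_cons.comp (Primrec.fst.comp Primrec.snd)
          (Primrec.vector_tail.comp Primrec.fst)))
    refine (Primrec.nat_rec' (Primrec.succ.comp Primrec.vector_head) (Primrec.const 1)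
      (h := fun (v : List.Vector ℕ (n + 1)) p =>
        p.2 * f (List.Vector.get (p.1 ::ᵥ v.tail))) (Primrec₂.mk hF)).of_eq fun v => ?_
    have key : ∀ t : ℕ, List.Vector.get (t ::ᵥ v.tail)
        = (Fin.cons t (fun i => v.get i.succ) : Fin (n + 1) → ℕ) := by
      intro t; funext i
      refine Fin.cases ?_ (fun j => ?_) i <;> simp
    simp only [key, List.Vector.get_zero]
    have main : ∀ m : ℕ, Nat.rec (motive := fun _ => ℕ) 1
        (fun t s => s * f (Fin.cons t (fun i => v.get i.succ))) m
        = ∏ t ∈ Finset.range m, f (Fin.cons t (fun i => v.get i.succ)) := by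
      intro m
      induction m with
      | zero => rfl
      | succ m ih => rw [Finset.prod_range_succ, ← ih]
    exact main (v.head + 1)

theorem primrec_of_elem1 {f : ℕ → ℕ} (hf : Elem1 f) : Primrec f := by
  have h := primrec_of_elem hf
  refine (h.comp (Primrec.vector_ofFn (f := fun _ : Fin 1 => fun n : ℕ => n)
    fun _ => Primrec.id)).of_eq fun n => ?_
  simp

theorem primrec_pow4 : Primrec fun n : ℕ => 4 ^ n := by
  refine (Primrec.nat_rec₁ 1 (f := fun _ x => x * 4)
    (Primrec.nat_mul.comp Primrec.snd (Primrec.const 4))).of_eq fun n => ?_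
  induction n with
  | zero => rfl
  | succ m ih => rw [pow_succ, ← ih]

/-- the point at which the `m`-th candidate is evaluated -/
def X (m : ℕ) : ℕ := (U m (4 ^ (m + 2))).unpair.2.unpair.2
/-- numerator of the `m`-th candidate -/
def A (m : ℕ) : ℕ := (U m (X m)).unpair.1
/-- denominator of the `m`-th candidate (minus one) -/
def B (m : ℕ) : ℕ := (U m (X m)).unpair.2.unpair.1

/-- scaled partial sums of the diagonal real -/
def N (n : ℕ) : ℕ :=
  Nat.rec 0 (fun m s =>
    4 * s + if (4 * s + 1) * (B m + 1) ≤ A m * 4 ^ (m + 1) then 0 else 2) n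

theorem N_succ (m : ℕ) : N (m + 1) =
    4 * N m + if (4 * N m + 1) * (B m + 1) ≤ A m * 4 ^ (m + 1) then 0 else 2 := rfl

theorem computable_X : Computable X := by
  have h4 : Computable fun m : ℕ => 4 ^ (m + 2) :=
    primrec_pow4.to_comp.comp (Primrec.succ.to_comp.comp Primrec.succ.to_comp)
  exact Computable.snd.comp <| Primrec.unpair.to_comp.comp <| Computable.snd.comp <|
    Primrec.unpair.to_comp.comp (computable_U.comp Computable.id h4)

theorem computable_A : Computable A :=
  Computable.fst.comp <| Primrec.unpair.to_comp.comp (computable_U.comp Computable.id computable_X)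

theorem computable_B : Computable B :=
  Computable.fst.comp <| Primrec.unpair.to_comp.comp <| Computable.snd.comp <|
    Primrec.unpair.to_comp.comp (computable_U.comp Computable.id computable_X)

theorem computable_N : Computable N := by
  have hm : Computable fun p : ℕ × ℕ × ℕ => p.2.1 := Computable.fst.comp Computable.snd
  have hs : Computable fun p : ℕ × ℕ × ℕ => 4 * p.2.2 :=
    Primrec.nat_mul.to_comp.comp (Computable.const 4) (Computable.snd.comp Computable.snd)
  have hl : Computable fun p : ℕ × ℕ × ℕ => (4 * p.2.2 + 1) * (B p.2.1 + 1) :=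
    Primrec.nat_mul.to_comp.comp (Primrec.succ.to_comp.comp hs)
      (Primrec.succ.to_comp.comp (computable_B.comp hm))
  have hr : Computable fun p : ℕ × ℕ × ℕ => A p.2.1 * 4 ^ (p.2.1 + 1) :=
    Primrec.nat_mul.to_comp.comp (computable_A.comp hm)
      (primrec_pow4.to_comp.comp (Primrec.succ.to_comp.comp hm))
  have hle : Computable fun p : ℕ × ℕ × ℕ =>
      decide ((4 * p.2.2 + 1) * (B p.2.1 + 1) ≤ A p.2.1 * 4 ^ (p.2.1 + 1)) :=
    (Primrec.nat_le.decide (α := ℕ) (β := ℕ)).to_comp.comp hl hr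
  have hh : Computable fun p : ℕ × ℕ × ℕ => 4 * p.2.2 +
      bif decide ((4 * p.2.2 + 1) * (B p.2.1 + 1) ≤ A p.2.1 * 4 ^ (p.2.1 + 1)) then 0 else 2 :=
    Primrec.nat_add.to_comp.comp hs (Computable.cond hle (Computable.const 0) (Computable.const 2))
  refine (Computable.nat_rec (f := fun n : ℕ => n) (g := fun _ => 0)
    (h := fun _ q => 4 * q.2 +
      bif decide ((4 * q.2 + 1) * (B q.1 + 1) ≤ A q.1 * 4 ^ (q.1 + 1)) then 0 else 2)
    Computable.id (Computable.const 0) hh).of_eq fun n => ?_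
  simp only [Bool.cond_decide]
  rfl

/-- lower bounds -/
noncomputable def lo (n : ℕ) : ℝ := (N n : ℝ) / 4 ^ n
/-- upper bounds -/
noncomputable def hi (n : ℕ) : ℝ := ((N n : ℝ) + 2 / 3) / 4 ^ n
/-- the diagonal real -/
noncomputable def al : ℝ := ⨆ n, lo n

theorem lo_mono : Monotone lo := by
  refine monotone_nat_of_le_succ fun n => ?_
  have h : (4 * N n : ℝ) ≤ N (n + 1) := by
    rw [N_succ]; split_ifs <;> push_cast <;> linarith
  unfold lo
  rw [div_le_div_iff₀ (by positivity) (by positivity), pow_succ]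
  nlinarith [show (0 : ℝ) < 4 ^ n by positivity]

theorem hi_anti : Antitone hi := by
  refine antitone_nat_of_succ_le fun n => ?_
  have h : (N (n + 1) : ℝ) ≤ 4 * N n + 2 := by
    rw [N_succ]; split_ifs <;> push_cast <;> linarith
  unfold hi
  rw [div_le_div_iff₀ (by positivity) (by positivity), pow_succ]
  nlinarith [show (0 : ℝ) < 4 ^ n by positivity]

theorem lo_le_hi (n m : ℕ) : lo n ≤ hi m := by
  have h : lo (max n m) ≤ hi (max n m) := by
    unfold lo hi; gcongr; linarith
  exact (lo_mono (le_max_left n m)).trans (h.trans (hi_anti (le_max_right n m)))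

theorem lo_le_al (n : ℕ) : lo n ≤ al :=
  le_ciSup (f := lo) ⟨hi 0, by rintro _ ⟨m, rfl⟩; exact lo_le_hi m 0⟩ n

theorem al_le_hi (n : ℕ) : al ≤ hi n := ciSup_le fun m => lo_le_hi m n

theorem not_elem : ¬ ElemReal al := by
  rintro ⟨a, b, c, ha, hb, hc, H⟩
  obtain ⟨m, hm⟩ := exists_U (f := fun n => Nat.pair (a n) (Nat.pair (b n) (c n)))
    (Primrec₂.natPair.comp (primrec_of_elem1 ha)
      (Primrec₂.natPair.comp (primrec_of_elem1 hb) (primrec_of_elem1 hc)))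
  have hX : X m = c (4 ^ (m + 2)) := by simp [X, hm]
  have hA : A m = a (X m) := by simp [A, hm]
  have hB : B m = b (X m) := by simp [B, hm]
  have h := H (4 ^ (m + 2)) (Nat.one_le_pow _ _ (by norm_num)) (X m) hX.ge
  rw [← hA, ← hB, abs_lt] at h
  obtain ⟨h1, h2⟩ := h
  have hl := lo_le_al (m + 1)
  have hu := al_le_hi (m + 1)
  unfold lo at hl
  unfold hi at hu
  have hNs := N_succ m
  have hb0 : (0 : ℝ) < (B m : ℝ) + 1 := by positivity
  have hp : (0 : ℝ) < 4 ^ (m + 1) := by positivity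
  have e : (1 : ℝ) / ((4 ^ (m + 2) : ℕ) : ℝ) = (1 / 4) / 4 ^ (m + 1) := by
    push_cast; rw [pow_succ 4 (m + 1)]; field_simp
  rw [e] at h1 h2
  split_ifs at hNs with hcase
  · have hc' : ((4 * N m + 1 : ℝ)) * (B m + 1) ≤ A m * 4 ^ (m + 1) := by exact_mod_cast hcase
    have hq : (4 * N m + 1 : ℝ) / 4 ^ (m + 1) ≤ (A m : ℝ) / (B m + 1) := by
      rwa [div_le_div_iff₀ hp hb0]
    rw [hNs] at hu
    push_cast at hu
    have : (4 * N m + 1 : ℝ) / 4 ^ (m + 1) <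
        (4 * N m + 0 + 2 / 3) / 4 ^ (m + 1) + (1 / 4) / 4 ^ (m + 1) := by linarith
    rw [← add_div, div_lt_div_iff_of_pos_right hp] at this
    linarith
  · have hc' : (A m * 4 ^ (m + 1) : ℝ) < ((4 * N m + 1 : ℝ)) * (B m + 1) := by
      exact_mod_cast not_le.1 hcase
    have hq : (A m : ℝ) / (B m + 1) < (4 * N m + 1 : ℝ) / 4 ^ (m + 1) := by
      rwa [div_lt_div_iff₀ hb0 hp]
    rw [hNs] at hl
    push_cast at hl
    have : (4 * N m + 2 : ℝ) / 4 ^ (m + 1) <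
        (4 * N m + 1) / 4 ^ (m + 1) + (1 / 4) / 4 ^ (m + 1) := by linarith
    rw [← add_div, div_lt_div_iff_of_pos_right hp] at this
    linarith

end ElemDiag

/-- There is a computable real number which is not an elementary
real number: computable functions `a, b, c` approximating a nonnegative real
`α` in the required sense, with `α ∉ ℝ_Elem`. -/
theorem exists_computable_real_not_elemReal :
    ∃ (a b c : ℕ → ℕ) (α : ℝ),
      Computable a ∧ Computable b ∧ Computable c ∧ 0 ≤ α ∧
      (∀ k : ℕ, 1 ≤ k → ∀ x : ℕ, c k ≤ x →
        |(a x : ℝ) / ((b x : ℝ) + 1) - α| < 1 / (k : ℝ)) ∧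
      ¬ ElemReal α := by
  refine ⟨ElemDiag.N, fun x => 4 ^ x - 1, fun k => k, ElemDiag.al, ElemDiag.computable_N,
    Primrec.to_comp (Primrec.pred.comp ElemDiag.primrec_pow4), Computable.id, ?_, ?_,
    ElemDiag.not_elem⟩
  · exact le_trans (by unfold ElemDiag.lo; positivity) (ElemDiag.lo_le_al 0)
  · intro k hk x hx
    have h1 := ElemDiag.lo_le_al x
    have h2 := ElemDiag.al_le_hi x
    unfold ElemDiag.lo at h1
    unfold ElemDiag.hi at h2
    have e : (((4 ^ x - 1 : ℕ) : ℝ)) + 1 = 4 ^ x := by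
      rw [Nat.cast_sub (Nat.one_le_pow _ _ (by norm_num))]; push_cast; ring
    have hkx : (k : ℝ) < 4 ^ x := by
      exact_mod_cast lt_of_le_of_lt hx (Nat.lt_pow_self (by norm_num))
    have hk0 : (0 : ℝ) < k := by exact_mod_cast hk
    have hlt : (1 : ℝ) / 4 ^ x < 1 / k := one_div_lt_one_div_of_lt hk0 hkx
    have h0 : (0 : ℝ) < 1 / 4 ^ x := by positivity
    rw [add_div] at h2
    have h3 : (2 / 3 : ℝ) / 4 ^ x = 2 / 3 * (1 / 4 ^ x) := by ring
    rw [h3] at h2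
    rw [e, abs_lt]
    constructor <;> linarith
end
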